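/- arXiv:1911.05416 — 4 statements merged into one kernel-verified Lean document; each statement's English description precedes it below -/
import Mathlib

section
/- Let n be a positive integer and for each i ∈ {1,…,n} let 0 ≤ a_i < b_i ≤ 1, and define agent i's valuation by v_i(S) = λ(S ∩ [a_i, b_i]) / (b_i − a_i), where λ is Lebesgue measure (a uniform valuation over a single interval). Then there exists a contiguous 1/4-envy-free allocation of [0,1] among the n agents. -/
/-- The valuation of an agent with a uniform valuation over the interval `[ai, bi]`:
`v(S) = λ(S ∩ [ai, bi]) / (bi - ai)` evaluated on the interval `S = [s, t]`. -/
noncomputable def uniformVal (ai bi s t : ℝ) : ℝ :=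
  (MeasureTheory.volume (Set.Icc s t ∩ Set.Icc ai bi)).toReal / (bi - ai)

namespace CakeCutting

section Sperner

open Finset
open scoped Fin.CommRing

variable {m : ℕ}

/-- Moving the cut to the left of piece `k` one unit to the right (indices are cyclic). -/
def cutStep (k : Fin (m + 2)) : Fin (m + 2) → ℤ := Pi.single (k - 1) 1 - Pi.single k 1

/-- The agent to whom a grid point of the simplex belongs. -/
def owner (x : Fin (m + 2) → ℤ) : Fin (m + 2) := -∑ k, x k • k

theorem owner_add (x y : Fin (m + 2) → ℤ) : owner (x + y) = owner x + owner y := by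
  simp only [owner, Pi.add_apply, add_zsmul, Finset.sum_add_distrib, neg_add]

theorem owner_sub (x y : Fin (m + 2) → ℤ) : owner (x - y) = owner x - owner y := by
  rw [eq_sub_iff_add_eq, ← owner_add, sub_add_cancel]

theorem owner_single (k : Fin (m + 2)) : owner (Pi.single k 1) = -k := by
  rw [owner, Finset.sum_eq_single k]
  · simp
  · intro j _ hj
    simp [hj]
  · simp

theorem sub_one_ne_self (k : Fin (m + 2)) : k - 1 ≠ k := by
  simp [sub_eq_self]

theorem add_one_ne_self (k : Fin (m + 2)) : k + 1 ≠ k := by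
  simp

theorem cutStep_apply_self (k : Fin (m + 2)) : cutStep k k = -1 := by
  simp [cutStep, (sub_one_ne_self k).symm]

theorem cutStep_succ_apply (k : Fin (m + 2)) : cutStep (k + 1) k = 1 := by
  simp [cutStep, (add_one_ne_self k).symm]

theorem cutStep_apply_le (l k : Fin (m + 2)) : cutStep l k ≤ if l = k + 1 then 1 else 0 := by
  by_cases h : l = k + 1
  · subst h
    simp [cutStep_succ_apply]
  · have h' : k ≠ l - 1 := fun e => h (by rw [e, sub_add_cancel])
    simp only [cutStep, Pi.sub_apply, Pi.single_apply, h', h, if_false]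
    split_ifs <;> simp

theorem neg_cutStep_apply_le (l k : Fin (m + 2)) : -(if l = k then 1 else 0) ≤ cutStep l k := by
  by_cases h : l = k
  · subst h
    simp [cutStep_apply_self]
  · simp only [cutStep, Pi.sub_apply, Pi.single_apply, h, Ne.symm h, if_false]
    split_ifs <;> simp

theorem cutStep_injective : Function.Injective (cutStep (m := m)) := by
  intro k l h
  by_contra hkl
  have h1 := neg_cutStep_apply_le l k
  rw [← h, cutStep_apply_self, if_neg (Ne.symm hkl)] at h1
  norm_num at h1

/-- A cell of the Kuhn triangulation of the simplex `{x ≥ 0 | ∑ x = N}`, its vertices listed in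
cyclic order and indexed by their owners. -/
structure IsCell (N : ℕ) (v : Fin (m + 2) → Fin (m + 2) → ℤ) : Prop where
  nonneg : ∀ j k, 0 ≤ v j k
  sum_eq : ∀ j, ∑ k, v j k = N
  owner_eq : ∀ j, owner (v j) = j
  exists_steps : ∃ σ : Equiv.Perm (Fin (m + 2)), ∀ j, v (j + 1) = v j + cutStep (σ j)

theorem apply_add_le {v : Fin (m + 2) → Fin (m + 2) → ℤ} {σ : Equiv.Perm (Fin (m + 2))}
    (hσ : ∀ j, v (j + 1) = v j + cutStep (σ j)) (j k : Fin (m + 2)) (t : ℕ) :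
    v (j + t) k ≤ v j k + #((range t).filter fun s : ℕ => σ (j + (s : Fin (m + 2))) = k + 1) := by
  induction t with
  | zero => simp
  | succ t ih =>
    have h := congrFun (hσ (j + t)) k
    have h' := cutStep_apply_le (σ (j + t)) k
    rw [Nat.cast_succ, ← add_assoc, h, Pi.add_apply, Finset.range_add_one, Finset.filter_insert]
    split_ifs with hs
    · rw [if_pos hs] at h'
      rw [Finset.card_insert_of_notMem (by simp)]
      push_cast
      linarith
    · rw [if_neg hs] at h'
      linarith

theorem natCast_injOn : Set.InjOn (fun s : ℕ => (s : Fin (m + 2))) (Set.Iio (m + 2)) := by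
  intro s hs t ht h
  have := congrArg Fin.val h
  simpa [Fin.val_natCast, Nat.mod_eq_of_lt hs, Nat.mod_eq_of_lt ht] using this

theorem IsCell.apply_le_apply_add_one {N : ℕ} {v : Fin (m + 2) → Fin (m + 2) → ℤ}
    (hv : IsCell N v) (i j k : Fin (m + 2)) : v i k ≤ v j k + 1 := by
  obtain ⟨σ, hσ⟩ := hv.exists_steps
  have h := apply_add_le hσ j k ((i - j : Fin (m + 2)) : ℕ)
  rw [Fin.cast_val_eq_self, add_sub_cancel] at h
  refine h.trans ?_
  have : #((range (i - j).val).filter fun s : ℕ => σ (j + (s : Fin (m + 2))) = k + 1) ≤ 1 := by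
    rw [Finset.card_le_one]
    intro s hs t ht
    simp only [Finset.mem_filter, Finset.mem_range] at hs ht
    have := (i - j).isLt
    exact natCast_injOn (by simp; lia) (by simp; lia)
      (add_left_cancel (σ.injective (hs.2.trans ht.2.symm)))
  gcongr
  exact_mod_cast this

/-- The vertices of a cell after reflecting the `i`-th one in the opposite facet. -/
def pivot (v : Fin (m + 2) → Fin (m + 2) → ℤ) (i : Fin (m + 2)) : Fin (m + 2) → Fin (m + 2) → ℤ :=
  Function.update v i (v (i - 1) + v (i + 1) - v i)

theorem pivot_self (v : Fin (m + 2) → Fin (m + 2) → ℤ) (i : Fin (m + 2)) :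
    pivot v i i = v (i - 1) + v (i + 1) - v i := by
  simp [pivot]

theorem pivot_of_ne (v : Fin (m + 2) → Fin (m + 2) → ℤ) {i j : Fin (m + 2)} (h : j ≠ i) :
    pivot v i j = v j := by
  simp [pivot, h]

theorem pivot_pivot (v : Fin (m + 2) → Fin (m + 2) → ℤ) (i : Fin (m + 2)) :
    pivot (pivot v i) i = v := by
  funext j
  by_cases h : j = i
  · subst h
    rw [pivot_self, pivot_self, pivot_of_ne _ (sub_one_ne_self j),
      pivot_of_ne _ (add_one_ne_self j)]
    abel
  · rw [pivot_of_ne _ h, pivot_of_ne _ h]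

theorem IsCell.pivot_ne {N : ℕ} {v : Fin (m + 2) → Fin (m + 2) → ℤ} (hv : IsCell N v)
    (i : Fin (m + 2)) : pivot v i ≠ v := by
  intro h
  obtain ⟨σ, hσ⟩ := hv.exists_steps
  have h1 := congrFun h i
  have h2 := hσ (i - 1)
  rw [sub_add_cancel] at h2
  rw [pivot_self, hσ i, h2] at h1
  have h3 : cutStep (σ i) = cutStep (σ (i - 1)) := by
    rw [← sub_eq_zero] at h1 ⊢
    rw [← h1]
    abel
  exact sub_one_ne_self i (σ.injective (cutStep_injective h3)).symm

theorem IsCell.isCell_pivot {N : ℕ} {v : Fin (m + 2) → Fin (m + 2) → ℤ} (hv : IsCell N v)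
    {i : Fin (m + 2)} (hi : ∀ k, 0 ≤ pivot v i i k) : IsCell N (pivot v i) := by
  obtain ⟨σ, hσ⟩ := hv.exists_steps
  have hpred := hσ (i - 1)
  rw [sub_add_cancel] at hpred
  refine ⟨fun j k => ?_, fun j => ?_, fun j => ?_, Equiv.swap (i - 1) i |>.trans σ, fun j => ?_⟩
  · by_cases h : j = i
    · exact h ▸ hi k
    · rw [pivot_of_ne _ h]
      exact hv.nonneg j k
  · by_cases h : j = i
    · subst h
      simp [pivot_self, Finset.sum_sub_distrib, Finset.sum_add_distrib, hv.sum_eq]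
    · rw [pivot_of_ne _ h]
      exact hv.sum_eq j
  · by_cases h : j = i
    · subst h
      rw [pivot_self, owner_sub, owner_add, hv.owner_eq, hv.owner_eq, hv.owner_eq]
      abel
    · rw [pivot_of_ne _ h]
      exact hv.owner_eq j
  · rw [Equiv.trans_apply]
    by_cases h : j = i
    · subst h
      rw [pivot_self, pivot_of_ne _ (add_one_ne_self j), Equiv.swap_apply_right, hpred]
      abel
    by_cases h' : j = i - 1
    · subst h'
      rw [sub_add_cancel, pivot_self, pivot_of_ne _ (sub_one_ne_self i), Equiv.swap_apply_left,
        hσ i]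
      abel
    · have h'' : j + 1 ≠ i := fun e => h' (by rw [← e, add_sub_cancel_right])
      rw [pivot_of_ne _ h, pivot_of_ne _ h'', Equiv.swap_apply_of_ne_of_ne h' h, hσ]

/-- If reflecting the `i`-th vertex leaves the simplex, the opposite facet of the cell lies in a
facet of the simplex. -/
theorem IsCell.exists_eq_zero {N : ℕ} {v : Fin (m + 2) → Fin (m + 2) → ℤ} (hv : IsCell N v)
    {i : Fin (m + 2)} (hi : ¬ IsCell N (pivot v i)) :
    ∃ k, (∀ j ≠ i, v j k = 0) ∧ v i = v (i - 1) + cutStep (k + 1) := by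
  obtain ⟨σ, hσ⟩ := hv.exists_steps
  have hpred := hσ (i - 1)
  rw [sub_add_cancel] at hpred
  have hneg : ∃ k, pivot v i i k < 0 := by
    by_contra! h
    exact hi (hv.isCell_pivot h)
  obtain ⟨k, hk⟩ := hneg
  have e2 : v (i + 1) = pivot v i i + cutStep (σ (i - 1)) := by
    rw [pivot_self, hpred]
    abel
  have h2 := hv.nonneg (i + 1) k
  have e2k := congrFun e2 k
  rw [Pi.add_apply] at e2k
  have h4 := cutStep_apply_le (σ (i - 1)) k
  have hs : σ (i - 1) = k + 1 := by
    by_contra hne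
    rw [if_neg hne] at h4
    lia
  rw [if_pos hs] at h4
  refine ⟨k, fun j hj => le_antisymm ?_ (hv.nonneg j k), by rw [← hs]; exact hpred⟩
  have h := apply_add_le hσ (i + 1) k ((j - (i + 1) : Fin (m + 2)) : ℕ)
  rw [Fin.cast_val_eq_self, add_sub_cancel, Finset.card_eq_zero.mpr] at h
  · have : v (i + 1) k ≤ 0 := by lia
    simpa using h.trans (by simpa using this)
  · rw [Finset.filter_eq_empty_iff]
    intro s hs' hsk
    rw [Finset.mem_range] at hs'
    have hsi : i + 1 + (s : Fin (m + 2)) = i - 1 := σ.injective (hsk.trans hs.symm)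
    have hlt := (j - (i + 1)).isLt
    have hs1 : ((s + 1 : ℕ) : Fin (m + 2)) + 1 = 0 := by
      push_cast
      have : (s : Fin (m + 2)) = i - 1 - (i + 1) := by rw [← hsi]; abel
      rw [this]; abel
    have hs2 : m + 2 ∣ s + 2 := by
      have : ((s + 2 : ℕ) : Fin (m + 2)) = 0 := by
        rw [← hs1]; push_cast; rw [add_assoc]; rfl
      exact Fin.natCast_eq_zero.mp this
    have hs3 : s = m := by
      have h0 : s + 2 = m + 2 := by
        refine Nat.eq_of_dvd_of_lt_two_mul (by lia) hs2 (by lia)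
      lia
    have hj' : (j - (i + 1)) = ((m + 1 : ℕ) : Fin (m + 2)) := by
      rw [← Fin.cast_val_eq_self (j - (i + 1))]
      congr 1
      lia
    refine hj ?_
    subst hs3
    have : j - (i + 1) + 1 = 0 := by rw [hj']; exact_mod_cast Fin.natCast_self _
    calc j = j - (i + 1) + 1 + i := by abel
      _ = i := by rw [this, zero_add]

theorem even_card_filter_of_not_surjective {α : Type*} [Fintype α] [DecidableEq α] {f : α → α}
    (hf : ¬ Function.Surjective f) (z : α)
    [dec : DecidablePred fun i => ∀ k ≠ z, ∃ j ≠ i, f j = k] :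
    Even #{i | ∀ k ≠ z, ∃ j ≠ i, f j = k} := by
  by_cases hne : ∃ i, ∀ k ≠ z, ∃ j ≠ i, f j = k
  swap
  · rw [Finset.filter_eq_empty_iff.mpr fun i _ hi => hne ⟨i, hi⟩]
    simp
  obtain ⟨i₀, hi₀⟩ := hne
  have hz : ∀ i, f i ≠ z := by
    intro i hi
    refine hf fun k => ?_
    by_cases hk : k = z
    · exact ⟨i, hi.trans hk.symm⟩
    · obtain ⟨j, -, hj⟩ := hi₀ k hk
      exact ⟨j, hj⟩
  have hinj : Set.InjOn f (univ.erase i₀ : Finset α) := by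
    refine Finset.injOn_of_surjOn_of_card_le (t := univ.erase z) f (fun i _ => by simp [hz])
      (fun k hk => ?_) (by simp)
    obtain ⟨j, hj, hjk⟩ := hi₀ k (by simpa using hk)
    exact ⟨j, by simpa using hj, hjk⟩
  obtain ⟨j₀, hj₀, hfj₀⟩ := hi₀ (f i₀) (hz i₀)
  have hset : ({i | ∀ k ≠ z, ∃ j ≠ i, f j = k} : Finset α) = {i₀, j₀} := by
    ext i
    simp only [Finset.mem_filter, Finset.mem_univ, true_and, Finset.mem_insert,
      Finset.mem_singleton]
    constructor
    · intro hi
      by_contra! hij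
      obtain ⟨j, hj, hfj⟩ := hi (f i) (hz i)
      by_cases hji : j = i₀
      · exact hij.2 (hinj (by simpa using hij.1) (by simpa using hj₀)
          (hfj.symm.trans (by rw [hji, hfj₀])))
      · exact hj (hinj (by simpa using hji) (by simpa using hij.1) hfj)
    · rintro (rfl | rfl)
      · exact hi₀
      · intro k hk
        obtain ⟨j, hj, hfj⟩ := hi₀ k hk
        by_cases hjj : j = i
        · exact ⟨i₀, hj₀.symm, by rw [← hfj, hjj, hfj₀]⟩
        · exact ⟨j, hjj, hfj⟩
  rw [hset, Finset.card_pair hj₀.symm]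
  exact even_two

/-- The grid point `(1, …, 1, N - (m + 1), 0)`. -/
def cornerPoint (m N : ℕ) (k : Fin (m + 2)) : ℤ :=
  if (k : ℕ) = m + 1 then 0 else if (k : ℕ) = m then N - (m + 1) else 1

/-- The cell at the corner of the simplex, made of the neighbours of `cornerPoint`. -/
def cornerCell (m N : ℕ) (j : Fin (m + 2)) : Fin (m + 2) → ℤ :=
  cornerPoint m N + Pi.single (owner (cornerPoint m N) - j) 1

theorem sum_cornerPoint (m N : ℕ) : ∑ k, cornerPoint m N k = N - 1 := by
  rw [Fin.sum_univ_castSucc, Fin.sum_univ_castSucc]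
  have : ∀ k : Fin m, (k : ℕ) ≠ m + 1 ∧ (k : ℕ) ≠ m := fun k => by lia
  simp [cornerPoint, this]
  ring

theorem sum_cornerPoint_add_single (N : ℕ) (k : Fin (m + 2)) :
    ∑ l, (cornerPoint m N + Pi.single k 1 : Fin (m + 2) → ℤ) l = N := by
  simp [Finset.sum_add_distrib, sum_cornerPoint]

theorem cornerPoint_nonneg {N : ℕ} (hN : m + 2 ≤ N) (k : Fin (m + 2)) :
    0 ≤ cornerPoint m N k := by
  unfold cornerPoint
  split_ifs <;> lia

theorem last_eq_neg_one : Fin.last (m + 1) = -1 := by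
  rw [eq_neg_iff_add_eq_zero, Fin.last_add_one]

theorem isCell_cornerCell {N : ℕ} (hN : m + 2 ≤ N) : IsCell N (cornerCell m N) := by
  refine ⟨fun j k => ?_, fun j => sum_cornerPoint_add_single N _, fun j => ?_,
    Equiv.subLeft (owner (cornerPoint m N)), fun j => ?_⟩
  · refine add_nonneg (cornerPoint_nonneg hN k) ?_
    rw [Pi.single_apply]
    split_ifs <;> simp
  · rw [cornerCell, owner_add, owner_single]
    abel
  · simp only [cornerCell, cutStep, Equiv.subLeft_apply, sub_sub]
    abel

theorem not_isCell_pivot_cornerCell (N : ℕ) :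
    ¬ IsCell N (pivot (cornerCell m N) (owner (cornerPoint m N) + 1)) := by
  intro h
  have h' := h.nonneg (owner (cornerPoint m N) + 1) (Fin.last (m + 1))
  have e1 : owner (cornerPoint m N) - (owner (cornerPoint m N) + 1 - 1) = 0 := by abel
  have e2 : owner (cornerPoint m N) - (owner (cornerPoint m N) + 1 + 1) = -1 - 1 := by abel
  have e3 : owner (cornerPoint m N) - (owner (cornerPoint m N) + 1) = -1 := by abel
  have h0 : (-1 : Fin (m + 2)) ≠ 0 := by simp
  rw [pivot_self] at h'
  simp only [cornerCell, e1, e2, e3, Pi.add_apply, Pi.sub_apply, last_eq_neg_one,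
    Pi.single_eq_same, Pi.single_eq_of_ne h0, Pi.single_eq_of_ne (sub_one_ne_self (-1)).symm] at h'
  rw [← last_eq_neg_one] at h'
  simp [cornerPoint] at h'

/-- The facet of `v` opposite to the `i`-th vertex carries all labels but the last one. -/
def IsDoor (ℓ : (Fin (m + 2) → ℤ) → Fin (m + 2)) (v : Fin (m + 2) → Fin (m + 2) → ℤ)
    (i : Fin (m + 2)) : Prop :=
  ∀ k ≠ Fin.last (m + 1), ∃ j ≠ i, ℓ (v j) = k

theorem IsDoor.isDoor_pivot {ℓ : (Fin (m + 2) → ℤ) → Fin (m + 2)}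
    {v : Fin (m + 2) → Fin (m + 2) → ℤ}
    {i : Fin (m + 2)} (h : IsDoor ℓ v i) : IsDoor ℓ (pivot v i) i := by
  intro k hk
  obtain ⟨j, hj, hjk⟩ := h k hk
  exact ⟨j, hj, by rwa [pivot_of_ne _ hj]⟩

/-- Sperner labellings of the simplex `{x ≥ 0 | ∑ x = N}` that are given on the last facet by the
first coordinate exceeding `1`. -/
structure IsLabelling (N : ℕ) (ℓ : (Fin (m + 2) → ℤ) → Fin (m + 2)) : Prop where
  pos : ∀ x : Fin (m + 2) → ℤ, (∀ k, 0 ≤ x k) → ∑ k, x k = N → 0 < x (ℓ x)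
  two_le : ∀ x : Fin (m + 2) → ℤ, (∀ k, 0 ≤ x k) → ∑ k, x k = N → x (Fin.last _) = 0 → 2 ≤ x (ℓ x)
  le_one : ∀ x : Fin (m + 2) → ℤ, (∀ k, 0 ≤ x k) → ∑ k, x k = N → x (Fin.last _) = 0 →
    ∀ l < ℓ x, x l ≤ 1

theorem isDoor_cornerCell {N : ℕ} (hN : m + 2 ≤ N) {ℓ : (Fin (m + 2) → ℤ) → Fin (m + 2)}
    (hℓ : IsLabelling N ℓ) : IsDoor ℓ (cornerCell m N) (owner (cornerPoint m N) + 1) := by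
  intro (k : Fin (m + 2)) hk
  have hk' : (k : ℕ) ≠ m + 1 := fun e => hk (Fin.ext e)
  refine ⟨owner (cornerPoint m N) - k, fun e => hk ?_, ?_⟩
  · rw [last_eq_neg_one]
    rw [sub_eq_iff_eq_add, add_assoc, left_eq_add] at e
    exact eq_neg_of_add_eq_zero_right e
  have hcell := isCell_cornerCell hN (m := m)
  have hx : cornerCell m N (owner (cornerPoint m N) - k) = cornerPoint m N + Pi.single k 1 := by
    rw [cornerCell, sub_sub_cancel]
  have hnn := hcell.nonneg (owner (cornerPoint m N) - k)
  have hsum := hcell.sum_eq (owner (cornerPoint m N) - k)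
  rw [hx] at hnn hsum ⊢
  set x := cornerPoint m N + Pi.single k 1 with hxdef
  have hxk : 2 ≤ x k := by
    simp only [hxdef, Pi.add_apply, Pi.single_eq_same, cornerPoint, hk', if_false]
    split_ifs <;> lia
  have hlast : x (Fin.last _) = 0 := by
    simp [hxdef, cornerPoint, hk]
  have h2 := hℓ.two_le x hnn hsum hlast
  have h1 := hℓ.le_one x hnn hsum hlast
  rcases lt_trichotomy (ℓ x) k with h | h | h
  · have hlt : (ℓ x : ℕ) < m := by
      have : (ℓ x : ℕ) < k := h
      lia
    have : x (ℓ x) = 1 := by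
      rw [congrFun hxdef (ℓ x), Pi.add_apply, Pi.single_eq_of_ne h.ne, cornerPoint,
        if_neg (by lia), if_neg (by lia), add_zero]
    lia
  · exact h
  · have := h1 k h
    lia

/-- The corner cell is the only one that can be left through a door. -/
theorem IsDoor.eq_cornerCell {N : ℕ} {ℓ : (Fin (m + 2) → ℤ) → Fin (m + 2)} (hℓ : IsLabelling N ℓ)
    {v : Fin (m + 2) → Fin (m + 2) → ℤ} (hv : IsCell N v) {i : Fin (m + 2)} (hi : IsDoor ℓ v i)
    (hpivot : ¬ IsCell N (pivot v i)) :
    v = cornerCell m N ∧ i = owner (cornerPoint m N) + 1 := by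
  obtain ⟨k₀, hzero, hstep⟩ := hv.exists_eq_zero hpivot
  obtain rfl : k₀ = Fin.last (m + 1) := by
    by_contra hk
    obtain ⟨j, hj, hjk⟩ := hi k₀ hk
    have := hℓ.pos (v j) (hv.nonneg j) (hv.sum_eq j)
    rw [hjk, hzero j hj] at this
    exact lt_irrefl _ this
  choose! f hf hfℓ using hi
  have h2 : ∀ k ≠ Fin.last (m + 1), 2 ≤ v (f k) k := by
    intro k hk
    have := hℓ.two_le (v (f k)) (hv.nonneg _) (hv.sum_eq _) (hzero _ (hf k hk))
    rwa [hfℓ k hk] at this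
  have h1 : ∀ k ≠ Fin.last (m + 1), ∀ l < k, v (f k) l ≤ 1 := by
    intro k hk
    have := hℓ.le_one (v (f k)) (hv.nonneg _) (hv.sum_eq _) (hzero _ (hf k hk))
    rwa [hfℓ k hk] at this
  have hge : ∀ k ≠ Fin.last (m + 1), ∀ j, 1 ≤ v j k := by
    intro k hk j
    have := hv.apply_le_apply_add_one (f k) j k
    have := h2 k hk
    lia
  let pen : Fin (m + 2) := (Fin.last m).castSucc
  have hpen : pen ≠ Fin.last (m + 1) := (Fin.castSucc_lt_last _).ne
  have hpenval : (pen : ℕ) = m := rfl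
  have hpenge : (N : ℤ) - m ≤ v (f pen) pen := by
    by_contra! hlt
    refine absurd ?_ (lt_irrefl (N : ℤ))
    calc (N : ℤ) = ∑ l, v (f pen) l := (hv.sum_eq _).symm
      _ < ∑ l, (cornerPoint m N + Pi.single pen 1 : Fin (m + 2) → ℤ) l := by
        refine Finset.sum_lt_sum (fun l _ => ?_) ⟨pen, Finset.mem_univ _, ?_⟩
        · by_cases hl : l = Fin.last (m + 1)
          · subst hl
            rw [hzero _ (hf pen hpen)]
            simp [cornerPoint, hpen]
          have hl' : (l : ℕ) ≠ m + 1 := fun e => hl (Fin.ext e)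
          by_cases hlp : l = pen
          · subst hlp
            simp [cornerPoint, hpenval]
            lia
          · have hl'' : (l : ℕ) ≠ m := fun e => hlp (Fin.ext e)
            simp only [Pi.add_apply, cornerPoint, hl', hl'', if_false, Pi.single_eq_of_ne hlp]
            exact h1 pen hpen l (Fin.lt_def.mpr (by lia))
        · simp [cornerPoint, hpenval]
          lia
      _ = N := sum_cornerPoint_add_single N pen
  have hvert : ∀ k ≠ Fin.last (m + 1), v (f k) = cornerPoint m N + Pi.single k 1 := by
    intro k hk
    have hle : ∀ l ∈ Finset.univ,
        (cornerPoint m N + Pi.single k 1 : Fin (m + 2) → ℤ) l ≤ v (f k) l := by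
      intro l _
      by_cases hl : l = Fin.last (m + 1)
      · subst hl
        rw [hzero _ (hf k hk)]
        simp [cornerPoint, hk]
      have hl' : (l : ℕ) ≠ m + 1 := fun e => hl (Fin.ext e)
      by_cases hlp : l = pen
      · subst hlp
        by_cases hkp : k = pen
        · subst hkp
          simp [cornerPoint, hpenval]
          lia
        · have := hv.apply_le_apply_add_one (f pen) (f k) pen
          simp [cornerPoint, hpenval, Ne.symm hkp]
          lia
      · have hl'' : (l : ℕ) ≠ m := fun e => hlp (Fin.ext e)
        simp only [Pi.add_apply, cornerPoint, hl', hl'', if_false]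
        by_cases hlk : l = k
        · subst hlk
          simpa using h2 l hl
        · simpa [hlk] using hge l hl (f k)
    funext l
    refine ((Finset.sum_eq_sum_iff_of_le hle).mp ?_ l (Finset.mem_univ l)).symm
    rw [hv.sum_eq, sum_cornerPoint_add_single]
  have hf_eq : ∀ k ≠ Fin.last (m + 1), f k = owner (cornerPoint m N) - k := by
    intro k hk
    rw [← hv.owner_eq (f k), hvert k hk, owner_add, owner_single, sub_eq_add_neg]
  have hi_eq : i = owner (cornerPoint m N) + 1 := by
    have : owner (cornerPoint m N) - i = Fin.last (m + 1) := by
      by_contra hne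
      exact hf _ hne (by rw [hf_eq _ hne, sub_sub_cancel])
    rw [last_eq_neg_one, sub_eq_iff_eq_add] at this
    rw [this]
    abel
  have hvj : ∀ j ≠ i, v j = cornerCell m N j := by
    intro j hj
    have hne : owner (cornerPoint m N) - j ≠ Fin.last (m + 1) := by
      rw [last_eq_neg_one]
      intro e
      rw [sub_eq_iff_eq_add] at e
      refine hj ?_
      rw [hi_eq, e]
      abel
    rw [cornerCell, ← hvert _ hne, hf_eq _ hne, sub_sub_cancel]
  refine ⟨funext fun j => ?_, hi_eq⟩
  by_cases hj : j = i
  · subst hj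
    rw [hstep, hvj _ (sub_one_ne_self j), Fin.last_add_one, cornerCell, cornerCell, cutStep, hi_eq]
    have e1 : owner (cornerPoint m N) - (owner (cornerPoint m N) + 1 - 1) = 0 := by abel
    have e2 : owner (cornerPoint m N) - (owner (cornerPoint m N) + 1) = 0 - 1 := by abel
    rw [e1, e2]
    abel
  · exact hvj j hj

/-- **Sperner's lemma** for the Kuhn triangulation. -/
theorem exists_isCell_surjective {N : ℕ} (hN : m + 2 ≤ N) {ℓ : (Fin (m + 2) → ℤ) → Fin (m + 2)}
    (hℓ : IsLabelling N ℓ) : ∃ v, IsCell N v ∧ Function.Surjective fun j => ℓ (v j) := by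
  classical
  by_contra! hfull
  have hfin : {v : Fin (m + 2) → Fin (m + 2) → ℤ | IsCell N v}.Finite := by
    refine (Set.finite_Icc (0 : Fin (m + 2) → Fin (m + 2) → ℤ) fun _ _ => (N : ℤ)).subset ?_
    refine fun v hv => ⟨fun j k => hv.nonneg j k, fun j k => ?_⟩
    simp only [← hv.sum_eq j]
    exact Finset.single_le_sum (fun l _ => hv.nonneg j l) (Finset.mem_univ k)
  let doors := {p ∈ hfin.toFinset ×ˢ (univ : Finset (Fin (m + 2))) | IsDoor ℓ p.1 p.2}
  have mem_doors : ∀ p, p ∈ doors ↔ IsCell N p.1 ∧ IsDoor ℓ p.1 p.2 := by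
    simp [doors]
  have heven : Even #doors := by
    have : #doors = ∑ v ∈ hfin.toFinset, #{i | IsDoor ℓ v i} := by
      simp only [doors, Finset.card_filter, Finset.sum_product]
    rw [this]
    refine Finset.even_sum _ fun v hv => ?_
    exact even_card_filter_of_not_surjective (hfull v (by simpa using hv)) (Fin.last (m + 1))
      (dec := fun i => Classical.propDecidable (IsDoor ℓ v i))
  let corner := (cornerCell m N, owner (cornerPoint m N) + 1)
  have hcorner : corner ∈ doors :=
    (mem_doors _).mpr ⟨isCell_cornerCell hN, isDoor_cornerCell hN hℓ⟩
  have heven' : Even #(doors.erase corner) := by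
    rw [← ZMod.natCast_eq_zero_iff_even, Finset.card_eq_sum_ones, Nat.cast_sum]
    refine Finset.sum_involution (fun p _ => (pivot p.1 p.2, p.2)) ?_ ?_ ?_ ?_
    · intro p _
      decide
    · intro p hp _ h
      have hp' := (mem_doors p).mp (Finset.mem_of_mem_erase hp)
      exact hp'.1.pivot_ne p.2 (congrArg Prod.fst h)
    · intro p hp
      obtain ⟨hne, hp⟩ := Finset.mem_erase.mp hp
      obtain ⟨hcell, hdoor⟩ := (mem_doors p).mp hp
      refine Finset.mem_erase.mpr ⟨fun h => ?_, (mem_doors _).mpr ⟨?_, hdoor.isDoor_pivot⟩⟩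
      · refine not_isCell_pivot_cornerCell (m := m) N ?_
        have h1 : pivot p.1 p.2 = cornerCell m N := congrArg Prod.fst h
        have h2 : p.2 = owner (cornerPoint m N) + 1 := congrArg Prod.snd h
        rwa [← h1, ← h2, pivot_pivot]
      · by_contra hpivot
        exact hne (Prod.ext_iff.mpr (hdoor.eq_cornerCell hℓ hcell hpivot))
    · intro p _
      simp [pivot_pivot]
  rw [← Finset.card_erase_add_one hcorner, Nat.even_add_one] at heven
  exact heven heven'

end Sperner

theorem uniformVal_eq {a b s t : ℝ} (hab : a ≤ b) (hst : s ≤ t) :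
    uniformVal a b s t = (max a (min b t) - max a (min b s)) / (b - a) := by
  rw [uniformVal, Set.Icc_inter_Icc, Real.volume_Icc, ENNReal.toReal_ofReal']
  congr 1
  grind

theorem abs_clamp_sub_clamp_le (a b s t : ℝ) :
    |max a (min b t) - max a (min b s)| ≤ |t - s| := by
  refine (abs_max_sub_max_le_max a _ a _).trans ?_
  simpa using abs_min_sub_min_le_max b t b s

variable {n : ℕ}

/-- The position of the `k`-th cut when the pieces have lengths `x i / N`. -/
noncomputable def cut (N : ℕ) (x : Fin n → ℤ) (k : ℕ) : ℝ :=
  (∑ l : Fin n with l.val < k, (x l : ℝ)) / N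

/-- The value of the `k`-th piece for an agent with interval `[a, b]`. -/
noncomputable def pieceVal (a b : ℝ) (N : ℕ) (x : Fin n → ℤ) (k : Fin n) : ℝ :=
  uniformVal a b (cut N x k) (cut N x (k + 1))

theorem cut_zero (N : ℕ) (x : Fin n → ℤ) : cut N x 0 = 0 := by
  simp [cut]

theorem cut_eq_one {N : ℕ} (hN : 0 < N) {x : Fin n → ℤ} (hx : ∑ k, x k = N) :
    cut N x n = 1 := by
  have hx' : ∑ k, (x k : ℝ) = N := by exact_mod_cast hx
  have : (N : ℝ) ≠ 0 := by positivity
  simp [cut, hx', this]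

theorem cut_mono (N : ℕ) {x : Fin n → ℤ} (hx : ∀ k, 0 ≤ x k) : Monotone (cut N x) := by
  intro k l hkl
  unfold cut
  gcongr
  exact fun i _ _ => by exact_mod_cast hx i

theorem cut_succ_sub_cut (N : ℕ) (x : Fin n → ℤ) (k : Fin n) :
    cut N x (k + 1) - cut N x k = x k / N := by
  have : (Finset.univ.filter fun l : Fin n => l.val < k.val + 1)
      = insert k (Finset.univ.filter fun l : Fin n => l.val < k.val) := by
    ext l
    simp only [Finset.mem_filter, Finset.mem_univ, true_and, Finset.mem_insert, Fin.ext_iff]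
    lia
  rw [cut, cut, this, Finset.sum_insert (by simp)]
  ring

theorem abs_cut_sub_cut_le (N : ℕ) {x x' : Fin n → ℤ} (hx : ∀ k, |x k - x' k| ≤ 1) (k : ℕ) :
    |cut N x k - cut N x' k| ≤ n / N := by
  rw [cut, cut, ← sub_div, ← Finset.sum_sub_distrib, abs_div, Nat.abs_cast]
  gcongr
  calc |∑ l : Fin n with l.val < k, ((x l : ℝ) - x' l)|
      ≤ ∑ l : Fin n with l.val < k, |(x l : ℝ) - x' l| := Finset.abs_sum_le_sum_abs _ _
    _ ≤ ∑ l : Fin n with l.val < k, (1 : ℝ) :=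
        Finset.sum_le_sum fun l _ => by exact_mod_cast hx l
    _ ≤ n := by
      rw [Finset.sum_const, nsmul_one]
      exact_mod_cast (Finset.card_le_univ _).trans_eq (Fintype.card_fin n)

theorem pieceVal_eq {a b : ℝ} (hab : a ≤ b) (N : ℕ) {x : Fin n → ℤ} (hx : ∀ k, 0 ≤ x k)
    (k : Fin n) :
    pieceVal a b N x k =
      (max a (min b (cut N x (k + 1))) - max a (min b (cut N x k))) / (b - a) :=
  uniformVal_eq hab (cut_mono N hx (Nat.le_succ _))

theorem sum_pieceVal {a b : ℝ} (ha : 0 ≤ a) (hab : a < b) (hb : b ≤ 1) {N : ℕ} (hN : 0 < N)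
    {x : Fin n → ℤ} (hx : ∀ k, 0 ≤ x k) (hsum : ∑ k, x k = N) :
    ∑ k, pieceVal a b N x k = 1 := by
  simp only [pieceVal_eq hab.le N hx]
  rw [← Finset.sum_div, div_eq_one_iff_eq (by linarith),
    Fin.sum_univ_eq_sum_range
      (fun k => max a (min b (cut N x (k + 1))) - max a (min b (cut N x k))) n,
    Finset.sum_range_sub fun k => max a (min b (cut N x k)), cut_zero, cut_eq_one hN hsum,
    min_eq_left hb, max_eq_right hab.le, min_eq_right (ha.trans hab.le), max_eq_left ha]

theorem pieceVal_le {a b : ℝ} (hab : a < b) (N : ℕ) {x : Fin n → ℤ} (hx : ∀ k, 0 ≤ x k)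
    (k : Fin n) : pieceVal a b N x k ≤ x k / N / (b - a) := by
  have hlen : 0 < b - a := sub_pos.mpr hab
  have hxk : (0 : ℝ) ≤ x k := by exact_mod_cast hx k
  rw [pieceVal_eq hab.le N hx]
  gcongr
  refine (le_abs_self _).trans ((abs_clamp_sub_clamp_le _ _ _ _).trans_eq ?_)
  rw [cut_succ_sub_cut, abs_of_nonneg (by positivity)]

theorem abs_pieceVal_sub_pieceVal_le {a b : ℝ} (hab : a < b) {N : ℕ} (hN : 0 < N)
    (hlen : 16 * n ≤ N * (b - a)) {x x' : Fin n → ℤ} (hx : ∀ k, 0 ≤ x k) (hx' : ∀ k, 0 ≤ x' k)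
    (hxx' : ∀ k, |x k - x' k| ≤ 1) (k : Fin n) :
    |pieceVal a b N x k - pieceVal a b N x' k| ≤ 1 / 8 := by
  have hpos : 0 < b - a := sub_pos.mpr hab
  have hN' : (0 : ℝ) < N := by exact_mod_cast hN
  have h1 := (abs_clamp_sub_clamp_le a b _ _).trans (abs_cut_sub_cut_le N hxx' k)
  have h2 := (abs_clamp_sub_clamp_le a b _ _).trans (abs_cut_sub_cut_le N hxx' (k + 1))
  have h3 : (n : ℝ) / N ≤ (b - a) / 16 := by
    rw [div_le_div_iff₀ hN' (by norm_num)]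
    linarith
  rw [pieceVal_eq hab.le N hx, pieceVal_eq hab.le N hx', ← sub_div, abs_div, abs_of_pos hpos,
    div_le_iff₀ hpos]
  rw [abs_le] at *
  constructor <;> linarith

theorem two_le_of_pieceVal_max {a b : ℝ} (ha : 0 ≤ a) (hab : a < b) (hb : b ≤ 1) {N : ℕ}
    (hN : 0 < N) (hn : 0 < n) (hlen : 16 * n ≤ N * (b - a)) {x : Fin n → ℤ} (hx : ∀ k, 0 ≤ x k)
    (hsum : ∑ k, x k = N) {k : Fin n} (hk : ∀ l, pieceVal a b N x l ≤ pieceVal a b N x k) :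
    2 ≤ x k := by
  have hpos : 0 < b - a := sub_pos.mpr hab
  have hN' : (0 : ℝ) < N := by exact_mod_cast hN
  have hn' : (0 : ℝ) < n := by exact_mod_cast hn
  have h1 : 1 ≤ n * pieceVal a b N x k := by
    rw [← sum_pieceVal ha hab hb hN hx hsum]
    simpa using Finset.sum_le_card_nsmul Finset.univ _ _ fun l _ => hk l
  have h2 := pieceVal_le hab N hx k
  rw [div_div, le_div_iff₀ (by positivity)] at h2
  by_contra! hlt
  have h3 : (x k : ℝ) ≤ 1 := by exact_mod_cast Int.lt_add_one_iff.mp hlt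
  nlinarith

theorem exists_first_two_le {m N : ℕ} (hN : m + 2 < N) {x : Fin (m + 2) → ℤ}
    (hsum : ∑ k, x k = N) : ∃ k, 2 ≤ x k ∧ ∀ l < k, x l ≤ 1 := by
  have hex : ∃ k, 2 ≤ x k := by
    by_contra! h
    have := Finset.sum_le_card_nsmul Finset.univ x 1 fun k _ => Int.lt_add_one_iff.mp (h k)
    simp [hsum] at this
    lia
  obtain ⟨k, hk, hmin⟩ := WellFounded.has_min (wellFounded_lt (α := Fin (m + 2))) {k | 2 ≤ x k} hex
  exact ⟨k, hk, fun l hl => Int.lt_add_one_iff.mp (not_le.mp fun h => hmin l h hl)⟩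

theorem exists_isCell_pieceVal_max {m N : ℕ} (hN : m + 2 < N) (a b : Fin (m + 2) → ℝ)
    (ha : ∀ i, 0 ≤ a i) (hab : ∀ i, a i < b i) (hb : ∀ i, b i ≤ 1)
    (hlen : ∀ i, 16 * (m + 2 : ℕ) ≤ N * (b i - a i)) :
    ∃ (v : Fin (m + 2) → Fin (m + 2) → ℤ) (π : Equiv.Perm (Fin (m + 2))), IsCell N v ∧
      ∀ i k, pieceVal (a i) (b i) N (v i) k ≤ pieceVal (a i) (b i) N (v i) (π i) := by
  have hlabel : ∀ x : Fin (m + 2) → ℤ, ∃ k, (∀ k, 0 ≤ x k) → ∑ k, x k = N → 2 ≤ x k ∧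
      (x (Fin.last _) = 0 → ∀ l < k, x l ≤ 1) ∧
      (x (Fin.last _) ≠ 0 → ∀ l, pieceVal (a (owner x)) (b (owner x)) N x l ≤
        pieceVal (a (owner x)) (b (owner x)) N x k) := by
    intro x
    by_cases hx : (∀ k, 0 ≤ x k) ∧ ∑ k, x k = N
    swap
    · exact ⟨0, fun h h' => absurd ⟨h, h'⟩ hx⟩
    by_cases hlast : x (Fin.last _) = 0
    · obtain ⟨k, hk, hk'⟩ := exists_first_two_le hN hx.2
      exact ⟨k, fun _ _ => ⟨hk, fun _ => hk', fun h => absurd hlast h⟩⟩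
    · obtain ⟨k, hk⟩ := Finite.exists_max fun l =>
        pieceVal (a (owner x)) (b (owner x)) N x l
      exact ⟨k, fun _ _ => ⟨two_le_of_pieceVal_max (ha _) (hab _) (hb _) (by lia) (by lia)
        (hlen _) hx.1 hx.2 hk, fun h => absurd h hlast, fun _ => hk⟩⟩
  choose ℓ hℓ using hlabel
  have hlabelling : IsLabelling N ℓ :=
    ⟨fun x h h' => by have := (hℓ x h h').1; lia, fun x h h' _ => (hℓ x h h').1,
      fun x h h' h'' => (hℓ x h h').2.1 h''⟩
  obtain ⟨v, hv, hsurj⟩ := exists_isCell_surjective hN.le hlabelling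
  refine ⟨v, Equiv.ofBijective _ (Finite.surjective_iff_bijective.mp hsurj), hv, fun i => ?_⟩
  have hi : v i (Fin.last _) ≠ 0 := by
    obtain ⟨j, hj⟩ := hsurj (Fin.last _)
    have h2 := (hℓ (v j) (hv.nonneg j) (hv.sum_eq j)).1
    have h1 := hv.apply_le_apply_add_one j i (Fin.last _)
    simp only at hj
    rw [hj] at h2
    lia
  have h := (hℓ (v i) (hv.nonneg i) (hv.sum_eq i)).2.2 hi
  rw [hv.owner_eq i] at h
  exact h

end CakeCutting

/-- For `n` agents each of whom has a uniform valuation over a single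
subinterval `[a i, b i] ⊆ [0,1]`, there exists a contiguous `1/4`-envy-free allocation. -/
theorem contiguous_one_fourth_envy_free_exists_uniform_single_interval
    (n : ℕ) (hn : 0 < n) (a b : Fin n → ℝ)
    (ha : ∀ i, 0 ≤ a i) (hab : ∀ i, a i < b i) (hb : ∀ i, b i ≤ 1) :
    ∃ (y : Fin (n + 1) → ℝ) (π : Equiv.Perm (Fin n)),
      Monotone y ∧ y 0 = 0 ∧ y (Fin.last n) = 1 ∧
      ∀ i j : Fin n,
        uniformVal (a i) (b i) (y (π i).castSucc) (y (π i).succ) ≥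
          uniformVal (a i) (b i) (y (π j).castSucc) (y (π j).succ) - 1 / 4 := by
  obtain _ | _ | m := n
  · exact absurd hn (lt_irrefl 0)
  · refine ⟨fun k => k, 1, fun k l h => ?_, by simp, by simp, fun i j => ?_⟩
    · exact Nat.cast_le.mpr h
    · rw [Fin.fin_one_eq_zero i, Fin.fin_one_eq_zero j]
      linarith
  choose f hf using fun i => exists_nat_ge (16 * (m + 2 : ℕ) / (b i - a i))
  obtain ⟨N, hfN⟩ : ∃ N, ∀ i, f i ≤ N := ⟨∑ i, f i, fun i =>
    Finset.single_le_sum (fun _ _ => Nat.zero_le _) (Finset.mem_univ i)⟩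
  have hlen : ∀ i, 16 * (m + 2 : ℕ) ≤ N * (b i - a i) := by
    intro i
    have h : (f i : ℝ) ≤ N := by exact_mod_cast hfN i
    exact (div_le_iff₀ (sub_pos.mpr (hab i))).mp ((hf i).trans h)
  have hN : m + 2 < N := by
    have h1 := hlen 0
    have h2 : (N : ℝ) * (b 0 - a 0) ≤ N :=
      mul_le_of_le_one_right (Nat.cast_nonneg N) (by linarith [ha 0, hb 0])
    have h3 : 16 * (m + 2) ≤ N := by exact_mod_cast h1.trans h2
    lia
  obtain ⟨v, π, hv, hmax⟩ := CakeCutting.exists_isCell_pieceVal_max hN a b ha hab hb hlen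
  refine ⟨fun k => CakeCutting.cut N (v 0) k, π,
    fun k l h => CakeCutting.cut_mono N (hv.nonneg 0) h,
    CakeCutting.cut_zero N _, CakeCutting.cut_eq_one (by lia) (hv.sum_eq 0), fun i j => ?_⟩
  have hdiff : ∀ k, |v 0 k - v i k| ≤ 1 := by
    intro k
    rw [abs_le]
    have h1 := hv.apply_le_apply_add_one 0 i k
    have h2 := hv.apply_le_apply_add_one i 0 k
    constructor <;> linarith
  have hclose := CakeCutting.abs_pieceVal_sub_pieceVal_le (hab i) (by lia) (hlen i) (hv.nonneg 0)
    (hv.nonneg i) hdiff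
  have hi := abs_le.mp (hclose (π i))
  have hj := abs_le.mp (hclose (π j))
  have h := hmax i (π j)
  change CakeCutting.pieceVal (a i) (b i) N (v 0) (π i) ≥
    CakeCutting.pieceVal (a i) (b i) N (v 0) (π j) - 1 / 4
  linarith
end

section
/- Let v_1,…,v_n be normalized piecewise constant valuations on [0,1] such that all breakpoints of the densities and all values taken by the densities are rational numbers. Then there exists a contiguous exactly envy-free allocation in which all of the cut points y_1, …, y_{n−1} are rational. -/
open Equiv Filter Topology

/-- Modulo two, a labelling of the vertices of a simplex is onto iff the number of facets whose
labels include every nonzero one is odd. -/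
lemma sum_facet_eq_surjective {d : ℕ} (l : Fin (d + 1) → Fin (d + 1)) :
    open Classical in
    (∑ k, if ∀ c : Fin d, ∃ i, i ≠ k ∧ l i = c.succ then (1 : ZMod 2) else 0) =
      if Function.Surjective l then 1 else 0 := by
  classical
  by_cases h : ∃ k, ∀ c : Fin d, ∃ i, i ≠ k ∧ l i = c.succ
  · obtain ⟨k, hk⟩ := h
    choose s hsk hs using hk
    have he : Function.Injective (Fin.cons k s : Fin (d + 1) → Fin (d + 1)) := by
      rw [Fin.cons_injective_iff]
      refine ⟨fun ⟨c, hc⟩ => hsk c hc, fun a b hab => ?_⟩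
      have := congrArg l hab
      rw [hs, hs] at this
      exact Fin.succ_injective _ this
    have hsurj := Finite.surjective_of_injective he
    have key : ∀ k', (∀ c : Fin d, ∃ i, i ≠ k' ∧ l i = c.succ) ↔
        (k' = k ∨ ∃ c, k' = s c ∧ l k = c.succ) := by
      intro k'
      constructor
      · intro hk'
        obtain ⟨a, rfl⟩ := hsurj k'
        induction a using Fin.cases with
        | zero => left; simp
        | succ a =>
          right
          refine ⟨a, by simp, ?_⟩
          obtain ⟨i, hi, hia⟩ := hk' a
          obtain ⟨b, rfl⟩ := hsurj i
          induction b using Fin.cases with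
          | zero => simpa using hia
          | succ b =>
            simp only [Fin.cons_succ, hs] at hia hi
            exact absurd (by rw [Fin.succ_injective _ hia]) hi
      · rintro (rfl | ⟨a, rfl, ha⟩) c
        · exact ⟨s c, hsk c, hs c⟩
        · by_cases hca : c = a
          · subst hca
            exact ⟨k, (hsk c).symm, ha⟩
          · refine ⟨s c, fun h => hca ?_, hs c⟩
            have := congrArg l h
            rw [hs, hs] at this
            exact Fin.succ_injective _ this
    simp only [key]
    rcases Fin.eq_zero_or_eq_succ (l k) with h0 | ⟨a, ha⟩
    · have : Function.Surjective l := by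
        intro c
        induction c using Fin.cases with
        | zero => exact ⟨k, h0⟩
        | succ c => exact ⟨s c, hs c⟩
      simp [this, h0, (Fin.succ_ne_zero _).symm]
    · have hns : ¬ Function.Surjective l := by
        intro hl
        obtain ⟨i, hi⟩ := hl 0
        obtain ⟨b, rfl⟩ := hsurj i
        induction b using Fin.cases with
        | zero => simp [ha] at hi
        | succ b => simp [hs] at hi
      have : ∀ k', (k' = k ∨ ∃ c, k' = s c ∧ l k = c.succ) ↔ k' ∈ ({k, s a} : Finset _) := by
        intro k'
        simp only [ha, Finset.mem_insert, Finset.mem_singleton, Fin.succ_inj]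
        constructor
        · rintro (h | ⟨c, h, rfl⟩) <;> simp [h]
        · rintro (h | h)
          · exact Or.inl h
          · exact Or.inr ⟨a, h, rfl⟩
      simp only [this, hns, if_false]
      rw [Finset.sum_ite_mem, Finset.univ_inter, Finset.sum_pair (hsk a).symm]
      decide
  · push Not at h
    have hns : ¬ Function.Surjective l := by
      intro hl
      obtain ⟨k, hk⟩ := hl 0
      obtain ⟨c, hc⟩ := h k
      obtain ⟨i, hi⟩ := hl c.succ
      refine hc i ?_ hi
      rintro rfl
      rw [hk] at hi
      exact Fin.succ_ne_zero _ hi.symm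
    simp only [hns, if_false]
    refine Finset.sum_eq_zero fun k _ => if_neg ?_
    intro hk
    obtain ⟨c, hc⟩ := h k
    obtain ⟨i, hi, hic⟩ := hk c
    exact hc i hi hic

/-- The `k`-th vertex of the simplex of the Kuhn triangulation of the cube `v + [0,1]^d` that
belongs to `σ`: vertex `0` is the top corner, and step `k` lowers coordinate `σ k`. -/
def kuhnVertex {d : ℕ} (v : Fin d → ℕ) (σ : Perm (Fin d)) (k : Fin (d + 1)) : Fin d → ℕ :=
  fun j => v j + if k ≤ (σ.symm j).castSucc then 1 else 0

lemma kuhnVertex_mul_swap {d : ℕ} (v : Fin (d + 1) → ℕ) (σ : Perm (Fin (d + 1))) (k : Fin d)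
    (i : Fin (d + 2)) (hi : i ≠ k.castSucc.succ) :
    kuhnVertex v (σ * swap k.castSucc k.succ) i = kuhnVertex v σ i := by
  funext j
  unfold kuhnVertex
  have : (σ * swap k.castSucc k.succ).symm j = swap k.castSucc k.succ (σ.symm j) := by
    simp [Equiv.symm_apply_eq]
  rw [this]
  congr 2
  rw [swap_apply_def]
  simp only [ne_eq, Fin.ext_iff, Fin.le_def] at *
  split_ifs <;> simp at * <;> omega

lemma kuhnVertex_castSucc {d : ℕ} (v : Fin (d + 1) → ℕ) (σ : Perm (Fin (d + 1)))
    (k : Fin (d + 1)) :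
    kuhnVertex v σ k.castSucc =
      kuhnVertex (Function.update v (σ (Fin.last d)) (v (σ (Fin.last d)) + 1))
        (σ * (finRotate (d + 1))⁻¹) k.succ := by
  funext j
  unfold kuhnVertex
  have : (σ * (finRotate (d + 1))⁻¹).symm j = finRotate (d + 1) (σ.symm j) := by
    simp [Equiv.symm_apply_eq]
  rw [this]
  obtain ⟨i, rfl⟩ := σ.surjective j
  rw [Equiv.symm_apply_apply]
  induction i using Fin.lastCases with
  | last => simp [Fin.le_last]
  | cast i =>
    rw [Function.update_of_ne (σ.injective.ne (Fin.castSucc_lt_last i).ne)]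
    congr 2
    simp [Fin.le_def]

lemma kuhnVertex_succ_apply_zero {d : ℕ} (v : Fin (d + 1) → ℕ) (σ : Perm (Fin (d + 1)))
    (k : Fin (d + 1)) : kuhnVertex v σ k.succ (σ 0) = v (σ 0) := by
  simp [kuhnVertex]

lemma kuhnVertex_cons_decomposeFin {d : ℕ} (v : Fin d → ℕ) (σ : Perm (Fin d))
    (k : Fin (d + 1)) :
    kuhnVertex (Fin.cons 0 v : Fin (d + 1) → ℕ) (Perm.decomposeFin.symm (0, σ)) k.succ =
      Fin.cons 0 (kuhnVertex v σ k) := by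
  have h0 : (Perm.decomposeFin.symm (0, σ)).symm 0 = 0 := by
    simp [Equiv.symm_apply_eq]
  have h1 : ∀ j : Fin d, (Perm.decomposeFin.symm (0, σ)).symm j.succ = (σ.symm j).succ := by
    intro j
    simp [Equiv.symm_apply_eq]
  funext j
  induction j using Fin.cases with
  | zero => simp [kuhnVertex, h0]
  | succ j => simp [kuhnVertex, h1, Fin.le_def]

lemma kuhnVertex_le {d p : ℕ} (v : Fin d → ℕ) (hv : ∀ j, v j < p) (σ : Perm (Fin d))
    (k : Fin (d + 1)) (j : Fin d) : kuhnVertex v σ k j ≤ p := by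
  have := hv j
  unfold kuhnVertex
  split_ifs <;> omega

lemma kuhnVertex_succ_le {d p : ℕ} (v : Fin (d + 1) → ℕ) (σ : Perm (Fin (d + 1)))
    (hv : ∀ j, j ≠ σ 0 → v j < p) (hv0 : v (σ 0) ≤ p)
    (k : Fin (d + 1)) (j : Fin (d + 1)) : kuhnVertex v σ k.succ j ≤ p := by
  by_cases h : j = σ 0
  · rw [h, kuhnVertex_succ_apply_zero]
    exact hv0
  · have := hv j h
    unfold kuhnVertex
    split_ifs <;> omega

lemma sum_range_succ_add_self (p : ℕ) (g : ℕ → ZMod 2) :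
    ∑ a ∈ Finset.range p, (g a + g (a + 1)) = g 0 + g p := by
  induction p with
  | zero => rw [Finset.sum_range_zero, CharTwo.add_self_eq_zero]
  | succ p ih =>
    rw [Finset.sum_range_succ, ih]
    linear_combination CharTwo.add_self_eq_zero (g p)

lemma sum_box_telescope {d p : ℕ} (m : Fin (d + 1)) (G : (Fin (d + 1) → ℕ) → ZMod 2) :
    ∑ v : Fin (d + 1) → Fin p, (G (fun j => v j) +
      G (Function.update (fun j => (v j : ℕ)) m (v m + 1))) =
    ∑ w : Fin d → Fin p, (G (m.insertNth 0 (fun j => (w j : ℕ))) +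
      G (m.insertNth p (fun j => (w j : ℕ)))) := by
  rw [← (Fin.insertNthEquiv (fun _ => Fin p) m).sum_comp, Fintype.sum_prod_type_right]
  refine Finset.sum_congr rfl fun w _ => ?_
  rw [← sum_range_succ_add_self p (fun a => G (m.insertNth a (fun j => (w j : ℕ)))),
    ← Fin.sum_univ_eq_sum_range (fun a => G (m.insertNth a (fun j => (w j : ℕ))) +
      G (m.insertNth (a + 1) (fun j => (w j : ℕ))))]
  refine Finset.sum_congr rfl fun a _ => ?_
  have : (fun j => ((Fin.insertNthEquiv (fun _ => Fin p) m (a, w) j : Fin p) : ℕ)) =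
      m.insertNth (a : ℕ) (fun j => (w j : ℕ)) := by
    funext j
    induction j using Fin.succAboveCases m with
    | x => simp [Fin.insertNthEquiv]
    | p j => simp [Fin.insertNthEquiv]
  rw [this]
  simp [Fin.insertNthEquiv]

/-- Kuhn's cubical Sperner lemma: the number of fully labelled simplices is odd. -/
theorem kuhn_parity (p d : ℕ) (L : (Fin d → ℕ) → Fin (d + 1))
    (hL0 : ∀ x, (∀ i, x i ≤ p) → ∀ j, x j = 0 → j.succ ≤ L x)
    (hLp : ∀ x, (∀ i, x i ≤ p) → ∀ j, x j = p → L x ≠ j.succ) :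
    open Classical in
    (∑ v : Fin d → Fin p, ∑ σ : Perm (Fin d),
      if Function.Surjective (fun k => L (kuhnVertex (fun j => v j) σ k))
        then (1 : ZMod 2) else 0) = 1 := by
  classical
  induction d with
  | zero =>
    have : Function.Surjective
        (fun k => L (kuhnVertex (fun j => ((default : Fin 0 → Fin p) j : ℕ)) 1 k)) :=
      fun c => ⟨0, (Fin.eq_zero _).trans (Fin.eq_zero _).symm⟩
    rw [Fintype.sum_unique, Fintype.sum_unique]
    exact if_pos this
  | succ d ih =>
    set G : (Fin (d + 1) → ℕ) → Perm (Fin (d + 1)) → ZMod 2 := fun v σ =>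
      if ∀ c : Fin (d + 1), ∃ k : Fin (d + 1), L (kuhnVertex v σ k.succ) = c.succ then 1 else 0
      with hG
    set Q : (Fin (d + 1) → ℕ) → Perm (Fin (d + 1)) → Fin (d + 2) → ZMod 2 := fun v σ k =>
      if ∀ c : Fin (d + 1), ∃ i, i ≠ k ∧ L (kuhnVertex v σ i) = c.succ then 1 else 0 with hQ
    have hQ0 : ∀ v σ, Q v σ 0 = G v σ := by
      intro v σ
      simp only [hQ, hG]
      refine if_congr (forall_congr' fun c => ?_) rfl rfl
      constructor
      · rintro ⟨i, hi, h⟩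
        obtain ⟨k, rfl⟩ := Fin.exists_succ_eq_of_ne_zero hi
        exact ⟨k, h⟩
      · rintro ⟨k, h⟩
        exact ⟨k.succ, Fin.succ_ne_zero _, h⟩
    have hQlast : ∀ v σ, Q v σ (Fin.last _) =
        G (Function.update v (σ (Fin.last d)) (v (σ (Fin.last d)) + 1))
          (σ * (finRotate (d + 1))⁻¹) := by
      intro v σ
      simp only [hQ, hG, ← kuhnVertex_castSucc]
      refine if_congr (forall_congr' fun c => ?_) rfl rfl
      constructor
      · rintro ⟨i, hi, h⟩
        obtain ⟨k, rfl⟩ := Fin.exists_castSucc_eq.mpr hi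
        exact ⟨k, h⟩
      · rintro ⟨k, h⟩
        exact ⟨k.castSucc, (Fin.castSucc_lt_last _).ne, h⟩
    have hQmid : ∀ v (k : Fin d), ∑ σ, Q v σ k.castSucc.succ = 0 := by
      intro v k
      have hswap : ∀ σ, Q v (σ * swap k.castSucc k.succ) k.castSucc.succ =
          Q v σ k.castSucc.succ := by
        intro σ
        simp only [hQ]
        refine if_congr (forall_congr' fun c => exists_congr fun i => and_congr_right fun hi => ?_)
          rfl rfl
        rw [kuhnVertex_mul_swap v σ k i hi]
      refine Finset.sum_involution (fun σ _ => σ * swap k.castSucc k.succ) ?_ ?_ ?_ ?_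
      · intro σ _
        rw [hswap, CharTwo.add_self_eq_zero]
      · intro σ _ _ h
        rw [mul_eq_left, swap_eq_one_iff] at h
        exact (Fin.castSucc_lt_succ).ne h
      · intros; exact Finset.mem_univ _
      · intro σ _
        simp [mul_assoc]
    have hGp : ∀ (σ : Perm (Fin (d + 1))) (w : Fin d → Fin p),
        G ((σ 0).insertNth p (fun j => (w j : ℕ))) σ = 0 := by
      intro σ w
      refine if_neg fun h => ?_
      obtain ⟨k, hk⟩ := h (σ 0)
      refine hLp _ (kuhnVertex_succ_le _ σ ?_ ?_ k) (σ 0) ?_ hk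
      · intro j hj
        obtain ⟨i, rfl⟩ := Fin.exists_succAbove_eq hj
        simp
      · simp
      · rw [kuhnVertex_succ_apply_zero]
        simp
    have hle0 : ∀ (σ : Perm (Fin (d + 1))) (w : Fin d → Fin p) (k : Fin (d + 1)),
        (σ 0).succ ≤ L (kuhnVertex ((σ 0).insertNth 0 (fun j => (w j : ℕ))) σ k.succ) := by
      intro σ w k
      refine hL0 _ (kuhnVertex_succ_le _ σ ?_ ?_ k) (σ 0) ?_
      · intro j hj
        obtain ⟨i, rfl⟩ := Fin.exists_succAbove_eq hj
        simp
      · simp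
      · rw [kuhnVertex_succ_apply_zero]
        simp
    have hG0 : ∀ (σ : Perm (Fin (d + 1))) (w : Fin d → Fin p), σ 0 ≠ 0 →
        G ((σ 0).insertNth 0 (fun j => (w j : ℕ))) σ = 0 := by
      intro σ w hσ
      refine if_neg fun h => ?_
      obtain ⟨k, hk⟩ := h 0
      have := hle0 σ w k
      rw [hk, Fin.succ_le_succ_iff, Fin.le_zero_iff] at this
      exact hσ this
    have hcons : ∀ x : Fin d → ℕ, (∀ i, x i ≤ p) →
        ∀ i, (Fin.cons 0 x : Fin (d + 1) → ℕ) i ≤ p := by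
      intro x hx i
      induction i using Fin.cases with
      | zero => simp
      | succ i => simpa using hx i
    have hL' : ∀ x : Fin d → ℕ, (∀ i, x i ≤ p) →
        L (Fin.cons 0 x) = (Fin.predAbove 0 (L (Fin.cons 0 x))).succ := by
      intro x hx
      have h1 : (Fin.succ 0 : Fin (d + 2)) ≤ L (Fin.cons 0 x) :=
        hL0 (Fin.cons 0 x) (hcons x hx) 0 (by simp)
      obtain ⟨a, ha⟩ := Fin.exists_succ_eq_of_ne_zero
        (show L (Fin.cons 0 x) ≠ 0 from fun h => by rw [h] at h1; simp at h1)
      rw [← ha, Fin.predAbove_zero_succ]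
    have hrec := ih (fun x => Fin.predAbove 0 (L (Fin.cons 0 x)))
      (fun x hx j hj => by
        have := hL0 (Fin.cons 0 x) (hcons x hx) j.succ (by simpa using hj)
        rwa [hL' x hx, Fin.succ_le_succ_iff] at this)
      (fun x hx j hj h => by
        refine hLp (Fin.cons 0 x) (hcons x hx) j.succ (by simpa using hj) ?_
        rw [hL' x hx, h])
    calc _ = ∑ v : Fin (d + 1) → Fin p, ∑ σ : Perm (Fin (d + 1)), ∑ k,
          Q (fun j => v j) σ k := by
          refine Finset.sum_congr rfl fun v _ => Finset.sum_congr rfl fun σ _ => ?_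
          rw [← sum_facet_eq_surjective]
      _ = ∑ v : Fin (d + 1) → Fin p, ∑ σ : Perm (Fin (d + 1)),
          (G (fun j => v j) σ +
            G (Function.update (fun j => (v j : ℕ)) (σ 0) (v (σ 0) + 1)) σ) := by
          refine Finset.sum_congr rfl fun v _ => ?_
          rw [Finset.sum_comm, Fin.sum_univ_succ, Fin.sum_univ_castSucc,
            Finset.sum_eq_zero (fun k _ => hQmid _ k), zero_add, Finset.sum_add_distrib]
          congr 1
          · simp only [hQ0]
          · rw [← Equiv.sum_comp (Equiv.mulRight (finRotate (d + 1))⁻¹) (fun σ : Perm (Fin (d + 1)) =>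
              G (Function.update (fun j => (v j : ℕ)) (σ 0) (v (σ 0) + 1)) σ)]
            refine Finset.sum_congr rfl fun σ _ => ?_
            rw [Fin.succ_last, hQlast]
            have : (finRotate (d + 1))⁻¹ 0 = Fin.last d := by
              rw [Perm.inv_eq_iff_eq, finRotate_last]
            rw [Equiv.coe_mulRight, Perm.mul_apply, this]
      _ = ∑ σ : Perm (Fin (d + 1)), ∑ w : Fin d → Fin p,
          G ((σ 0).insertNth 0 (fun j => (w j : ℕ))) σ := by
          rw [Finset.sum_comm]
          refine Finset.sum_congr rfl fun σ _ => ?_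
          rw [sum_box_telescope (σ 0) (fun v => G v σ)]
          refine Finset.sum_congr rfl fun w _ => ?_
          rw [hGp, add_zero]
      _ = ∑ τ : Perm (Fin d), ∑ w : Fin d → Fin p,
          G (Fin.cons 0 (fun j => (w j : ℕ))) (Perm.decomposeFin.symm (0, τ)) := by
          rw [← Perm.decomposeFin.symm.sum_comp, Fintype.sum_prod_type,
            Finset.sum_eq_single 0]
          · refine Finset.sum_congr rfl fun τ _ => Finset.sum_congr rfl fun w _ => ?_
            rw [Perm.decomposeFin_symm_apply_zero, Fin.insertNth_zero']
          · intro m _ hm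
            refine Finset.sum_eq_zero fun τ _ => Finset.sum_eq_zero fun w _ => hG0 _ _ ?_
            rwa [Perm.decomposeFin_symm_apply_zero]
          · intro h; exact absurd (Finset.mem_univ _) h
      _ = 1 := by
          rw [Finset.sum_comm, ← hrec]
          refine Finset.sum_congr rfl fun w _ => Finset.sum_congr rfl fun τ _ => ?_
          refine if_congr (forall_congr' fun c => exists_congr fun k => ?_) rfl rfl
          rw [kuhnVertex_cons_decomposeFin,
            hL' _ (fun j => kuhnVertex_le _ (fun j => (w j).2) τ k j), Fin.succ_inj]

lemma kuhnVertex_le_kuhnVertex_add_one {d : ℕ} (v : Fin d → ℕ) (σ : Perm (Fin d))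
    (k l : Fin (d + 1)) (j : Fin d) : kuhnVertex v σ k j ≤ kuhnVertex v σ l j + 1 := by
  unfold kuhnVertex
  split_ifs <;> omega

lemma sum_kuhnVertex {d : ℕ} (v : Fin d → ℕ) (σ : Perm (Fin d)) (k : Fin (d + 1)) :
    ∑ j, kuhnVertex v σ k j + k = ∑ j, v j + d := by
  simp only [kuhnVertex, Finset.sum_add_distrib]
  rw [σ.symm.sum_comp (fun i => if k ≤ i.castSucc then 1 else 0)]
  simp only [Fin.le_def, Fin.val_castSucc]
  rw [Fin.sum_univ_eq_sum_range (fun i => if (k : ℕ) ≤ i then 1 else 0), ← Finset.card_filter]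
  have : (Finset.range d).filter (fun i => (k : ℕ) ≤ i) = Finset.Ico (k : ℕ) d := by
    ext i
    simp [and_comm]
  rw [this, Nat.card_Ico]
  omega

/-- The coordinate sum modulo `d + 1` takes distinct values on the vertices of a simplex. -/
lemma sum_kuhnVertex_mod_injective {d : ℕ} (v : Fin d → ℕ) (σ : Perm (Fin d)) :
    Function.Injective (fun k => Fin.ofNat (d + 1) (∑ j, kuhnVertex v σ k j)) := by
  intro k l h
  have h' : (∑ j, kuhnVertex v σ k j) ≡ (∑ j, kuhnVertex v σ l j) [MOD (d + 1)] :=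
    congrArg Fin.val h
  have hkl : (∑ j, kuhnVertex v σ k j) + k ≡ (∑ j, kuhnVertex v σ l j) + l [MOD (d + 1)] := by
    rw [sum_kuhnVertex, sum_kuhnVertex]
  exact Fin.ext (Nat.ModEq.eq_of_lt_of_lt (Nat.ModEq.add_left_cancel h' hkl) k.2 l.2)

/-- The division of `[0, p]` whose cut points are the suffix minima of `x`. -/
def suffixMinCuts {d : ℕ} (p : ℕ) (x : Fin d → ℕ) : Fin (d + 2) → ℕ :=
  Fin.cons 0 fun k : Fin (d + 1) =>
    (Finset.Ici k).inf' Finset.nonempty_Ici (Fin.snoc x p : Fin (d + 1) → ℕ)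

section suffixMinCuts

variable {d p : ℕ} {x : Fin d → ℕ}

lemma suffixMinCuts_zero : suffixMinCuts p x 0 = 0 := rfl

lemma suffixMinCuts_last : suffixMinCuts p x (Fin.last (d + 1)) = p := by
  have : Finset.Ici (Fin.last d) = {Fin.last d} := by
    ext i
    simp [Fin.last_le_iff]
  rw [← Fin.succ_last]
  simp [suffixMinCuts, this]

lemma suffixMinCuts_mono : Monotone (suffixMinCuts p x) := by
  rw [Fin.monotone_iff_le_succ]
  intro k
  induction k using Fin.cases with
  | zero => exact Nat.zero_le _
  | succ k =>
    rw [← Fin.succ_castSucc]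
    simp only [suffixMinCuts, Fin.cons_succ]
    exact Finset.inf'_mono _ (Finset.Ici_subset_Ici.mpr (Fin.castSucc_lt_succ).le) _

lemma suffixMinCuts_eq_zero {j : Fin d} (hj : x j = 0) {k : Fin (d + 2)}
    (hk : k ≤ j.castSucc.succ) : suffixMinCuts p x k = 0 := by
  refine Nat.le_zero.mp ((suffixMinCuts_mono hk).trans ?_)
  simp only [suffixMinCuts, Fin.cons_succ]
  refine (Finset.inf'_le _ (Finset.mem_Ici.mpr le_rfl)).trans ?_
  simp [hj]

lemma suffixMinCuts_succ_eq {j : Fin d} (hj : x j = p) :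
    suffixMinCuts p x j.succ.succ = suffixMinCuts p x j.succ.castSucc := by
  refine le_antisymm ?_ (suffixMinCuts_mono (Fin.castSucc_lt_succ).le)
  rw [← Fin.succ_castSucc]
  simp only [suffixMinCuts, Fin.cons_succ]
  refine Finset.le_inf' _ _ fun i hi => ?_
  rcases (Finset.mem_Ici.mp hi).eq_or_lt with rfl | hlt
  · rw [Fin.snoc_castSucc, hj]
    refine (Finset.inf'_le _ (Finset.mem_Ici.mpr (Fin.le_last _))).trans ?_
    simp
  · exact Finset.inf'_le _ (Finset.mem_Ici.mpr (Fin.castSucc_lt_iff_succ_le.mp hlt))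

lemma suffixMinCuts_le_add_one {x' : Fin d → ℕ} (h : ∀ j, x j ≤ x' j + 1) (k : Fin (d + 2)) :
    suffixMinCuts p x k ≤ suffixMinCuts p x' k + 1 := by
  induction k using Fin.cases with
  | zero => simp [suffixMinCuts]
  | succ k =>
    simp only [suffixMinCuts, Fin.cons_succ]
    obtain ⟨i, hi, hi'⟩ := Finset.exists_mem_eq_inf' (Finset.nonempty_Ici (a := k))
      (Fin.snoc x' p : Fin (d + 1) → ℕ)
    rw [hi']
    refine (Finset.inf'_le _ hi).trans ?_
    induction i using Fin.lastCases with
    | last => simp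
    | cast i => simpa using h i

end suffixMinCuts

/-- Divisions of a grid of mesh `1 / p`, one for each agent and pairwise at distance at most
`1 / p`, such that agent `i` likes piece `π i` best in their own division. -/
theorem exists_close_divisions {d p : ℕ} (hp : 0 < p) (F : Fin (d + 1) → ℝ → ℝ)
    (hF : ∀ i, F i 0 < F i 1) :
    ∃ (Y : Fin (d + 1) → Fin (d + 2) → ℕ) (π : Perm (Fin (d + 1))),
      (∀ i, Monotone (Y i) ∧ Y i 0 = 0 ∧ Y i (Fin.last _) = p) ∧
      (∀ i i' k, Y i k ≤ Y i' k + 1) ∧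
      ∀ i (k : Fin (d + 1)), F i (Y i k.succ / p) - F i (Y i k.castSucc / p) ≤
        F i (Y i (π i).succ / p) - F i (Y i (π i).castSucc / p) := by
  classical
  set val : Fin (d + 1) → (Fin d → ℕ) → Fin (d + 1) → ℝ := fun i x k =>
    F i (suffixMinCuts p x k.succ / p) - F i (suffixMinCuts p x k.castSucc / p) with hval
  choose best hbest using fun i x => Finite.exists_max (val i x)
  have hp' : (p : ℝ) ≠ 0 := by exact_mod_cast hp.ne'
  have hpos : ∀ i x, 0 < val i x (best i x) := by
    intro i x
    by_contra! hle
    have hsum : ∑ k, val i x k = F i 1 - F i 0 := by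
      have h1 := Fin.sum_univ_succ (fun k => F i (suffixMinCuts p x k / p))
      have h2 := Fin.sum_univ_castSucc (fun k => F i (suffixMinCuts p x k / p))
      rw [suffixMinCuts_zero, Nat.cast_zero, zero_div] at h1
      rw [suffixMinCuts_last, div_self hp'] at h2
      rw [Finset.sum_sub_distrib]
      linarith
    have : ∑ k, val i x k ≤ 0 := Finset.sum_nonpos fun k _ => (hbest i x k).trans hle
    linarith [hF i]
  let owner : (Fin d → ℕ) → Fin (d + 1) := fun x => Fin.ofNat (d + 1) (∑ j, x j)
  have hparity := kuhn_parity p d (fun x => best (owner x) x)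
    (fun x _ j hj => by
      by_contra! hlt
      have := hpos (owner x) x
      simp only [hval] at this
      rw [suffixMinCuts_eq_zero hj (by simpa [Fin.le_def, Fin.lt_def] using hlt),
        suffixMinCuts_eq_zero hj (by
          simp only [Fin.le_def, Fin.lt_def, Fin.val_succ, Fin.val_castSucc] at hlt ⊢
          omega)] at this
      simp at this)
    (fun x _ j hj h => by
      have := hpos (owner x) x
      rw [h] at this
      simp only [hval] at this
      rw [suffixMinCuts_succ_eq hj, sub_self] at this
      exact this.false)
  obtain ⟨v, -, hv⟩ := Finset.exists_ne_zero_of_sum_ne_zero (hparity.trans_ne one_ne_zero)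
  obtain ⟨σ, -, hσ⟩ := Finset.exists_ne_zero_of_sum_ne_zero hv
  have hsurj := (ite_ne_right_iff.mp hσ).1
  set u := kuhnVertex (fun j => (v j : ℕ)) σ
  let O : Perm (Fin (d + 1)) := Equiv.ofBijective (fun k => owner (u k))
    (Finite.injective_iff_bijective.mp (sum_kuhnVertex_mod_injective _ σ))
  let B : Perm (Fin (d + 1)) := Equiv.ofBijective _ (Finite.surjective_iff_bijective.mp hsurj)
  refine ⟨fun i => suffixMinCuts p (u (O.symm i)), O.symm.trans B,
    fun i => ⟨suffixMinCuts_mono, suffixMinCuts_zero, suffixMinCuts_last⟩,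
    fun i i' k => suffixMinCuts_le_add_one
      (fun j => kuhnVertex_le_kuhnVertex_add_one _ σ _ _ j) k, fun i k => ?_⟩
  obtain ⟨l, rfl⟩ := O.surjective i
  have h1 : (O.symm.trans B) (O l) = best (O l) (u l) := by simp [O, B]
  beta_reduce
  rw [h1, O.symm_apply_apply]
  exact hbest (O l) (u l) k

/-- Contiguous envy-free divisions exist for continuous valuations. -/
theorem exists_envy_free {d : ℕ} (F : Fin (d + 1) → ℝ → ℝ)
    (hc : ∀ i, ContinuousOn (F i) (Set.Icc 0 1)) (hF : ∀ i, F i 0 < F i 1) :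
    ∃ (y : Fin (d + 2) → ℝ) (π : Perm (Fin (d + 1))),
      Monotone y ∧ y 0 = 0 ∧ y (Fin.last _) = 1 ∧
      ∀ i (k : Fin (d + 1)), F i (y k.succ) - F i (y k.castSucc) ≤
        F i (y (π i).succ) - F i (y (π i).castSucc) := by
  choose Y π hY hclose henvy using fun m : ℕ => exists_close_divisions m.succ_pos F hF
  set z : ℕ → Fin (d + 1) → Fin (d + 2) → ℝ := fun m i k => Y m i k / (m.succ : ℕ) with hz
  have hzmono : ∀ m i, Monotone (z m i) := fun m i a b hab =>
    div_le_div_of_nonneg_right (by exact_mod_cast (hY m i).1 hab) (by positivity)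
  have hz0 : ∀ m i, z m i 0 = 0 := fun m i => by simp [hz, (hY m i).2.1]
  have hz1 : ∀ m i, z m i (Fin.last _) = 1 := fun m i => by
    simp only [hz, (hY m i).2.2]
    exact div_self (by positivity)
  have hzmem : ∀ m i k, z m i k ∈ Set.Icc (0 : ℝ) 1 := fun m i k =>
    ⟨hz0 m i ▸ hzmono m i (Fin.zero_le k), hz1 m i ▸ hzmono m i (Fin.le_last k)⟩
  have hzclose : ∀ m i i' k, |z m i k - z m i' k| ≤ 1 / ((m : ℝ) + 1) := by
    intro m i i' k
    have h1 : (Y m i k : ℝ) ≤ Y m i' k + 1 := by exact_mod_cast hclose m i i' k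
    have h2 : (Y m i' k : ℝ) ≤ Y m i k + 1 := by exact_mod_cast hclose m i' i k
    simp only [hz, ← sub_div, Nat.cast_succ]
    rw [abs_div, abs_of_pos (by positivity : (0 : ℝ) < (m : ℝ) + 1)]
    gcongr
    rw [abs_le]
    constructor <;> linarith
  let U : Ultrafilter ℕ := hyperfilter ℕ
  have hU : (U : Filter ℕ) ≤ atTop := Nat.hyperfilter_le_atTop
  have hlim : ∀ k, ∃ t ∈ Set.Icc (0 : ℝ) 1, Tendsto (fun m => z m 0 k) U (𝓝 t) := by
    intro k
    exact isCompact_Icc.ultrafilter_le_nhds (U.map fun m => z m 0 k)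
      (le_principal_iff.mpr (mem_map.mpr (Eventually.of_forall fun m : ℕ => hzmem m 0 k)))
  choose y hymem hy using hlim
  obtain ⟨ρ, hρ⟩ := Ultrafilter.eq_pure_of_finite (U.map π)
  have hπ : ∀ᶠ m in (U : Filter ℕ), π m = ρ := by
    have : ({ρ} : Set _) ∈ U.map π := by rw [hρ]; exact Set.mem_singleton ρ
    exact this
  have hyi : ∀ i k, Tendsto (fun m => z m i k) U (𝓝 (y k)) := by
    intro i k
    have h0 : Tendsto (fun m => z m i k - z m 0 k) U (𝓝 0) :=
      squeeze_zero_norm (fun m => hzclose m i 0 k)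
        (tendsto_one_div_add_atTop_nhds_zero_nat.mono_left hU)
    simpa using h0.add (hy k)
  have hFy : ∀ i k, Tendsto (fun m => F i (z m i k)) U (𝓝 (F i (y k))) := fun i k =>
    ((hc i _ (hymem k)).tendsto).comp
      (tendsto_nhdsWithin_iff.mpr ⟨hyi i k, Eventually.of_forall fun m => hzmem m i k⟩)
  refine ⟨y, ρ, fun a b hab => ?_, ?_, ?_, fun i k => ?_⟩
  · exact le_of_tendsto_of_tendsto' (hy a) (hy b) fun m => hzmono m 0 hab
  · exact tendsto_nhds_unique (hy 0) (by simp [hz0])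
  · exact tendsto_nhds_unique (hy _) (by simp [hz1])
  · refine le_of_tendsto_of_tendsto ((hFy i k.succ).sub (hFy i k.castSucc))
      ((hFy i (ρ i).succ).sub (hFy i (ρ i).castSucc)) ?_
    filter_upwards [hπ] with m hm
    rw [← hm]
    exact henvy m i k

/-- A `ℚ`-linear retraction `ℝ → ℚ` can be chosen to preserve the positivity of finitely many
given reals. -/
theorem exists_rat_linear_pos (T : Set ℝ) (hT : T.Finite) :
    ∃ φ : ℝ →ₗ[ℚ] ℚ, φ 1 = 1 ∧ ∀ x ∈ T, 0 < x → 0 < φ x := by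
  have hli : LinearIndepOn ℚ id ({1} : Set ℝ) :=
    LinearIndepOn.singleton one_ne_zero
  let b := Module.Basis.extend hli
  have hmem : (1 : ℝ) ∈ hli.extend (Set.subset_univ _) := hli.subset_extend _ rfl
  have hseq : ∀ t : ℝ, ∃ q : ℕ → ℚ, Tendsto (fun m => (q m : ℝ)) atTop (𝓝 t) ∧
      (t = 1 → ∀ m, q m = 1) := by
    intro t
    by_cases ht : t = 1
    · exact ⟨fun _ => 1, by simp [ht], fun _ _ => rfl⟩
    · obtain ⟨q, -, -, hq⟩ := Real.exists_seq_rat_strictMono_tendsto t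
      exact ⟨q, hq, fun h => absurd h ht⟩
  choose q hq hq1 using hseq
  let φ : ℕ → ℝ →ₗ[ℚ] ℚ := fun m => b.constr ℚ fun i => q i m
  have hφ : ∀ x, Tendsto (fun m => (φ m x : ℝ)) atTop (𝓝 x) := by
    intro x
    have hx : (b.repr x).sum (fun i a => (a : ℝ) * i) = x := by
      conv_rhs => rw [← b.linearCombination_repr x, Finsupp.linearCombination_apply]
      refine Finsupp.sum_congr fun i _ => ?_
      rw [Module.Basis.extend_apply_self, Rat.smul_def]
    conv => arg 3; rw [← hx]
    simp only [φ, Module.Basis.constr_apply, Finsupp.sum, Rat.cast_sum, smul_eq_mul, Rat.cast_mul]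
    exact tendsto_finsetSum _ fun i _ => (hq i).const_mul _
  have hev : ∀ᶠ m in atTop, ∀ x ∈ T, 0 < x → 0 < φ m x := by
    rw [hT.eventually_all]
    intro x _
    by_cases hx : 0 < x
    · filter_upwards [(hφ x).eventually (lt_mem_nhds hx)] with m hm _
      exact_mod_cast hm
    · exact Eventually.of_forall fun m h => absurd h hx
  obtain ⟨m, hm⟩ := hev.exists
  refine ⟨φ m, ?_, hm⟩
  have h1 : b ⟨1, hmem⟩ = 1 := Module.Basis.extend_apply_self hli _
  rw [← h1, Module.Basis.constr_basis]
  exact hq1 _ rfl m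

/-- The primitive of a rational step function is, near each point, an affine function with
rational coefficients on an interval with rational end points. -/
theorem exists_rat_affine_primitive {p : ℕ} (f : ℝ → ℝ) (c : Fin (p + 1) → ℚ) (h : Fin p → ℚ)
    (hc : Monotone c) (hc0 : c 0 = 0) (hc1 : c (Fin.last p) = 1)
    (hf : ∀ (j : Fin p) (x : ℝ), (c j.castSucc : ℝ) < x → x < (c j.succ : ℝ) → f x = (h j : ℝ))
    (hfint : IntervalIntegrable f MeasureTheory.volume 0 1) (t : ℝ) (ht : t ∈ Set.Icc (0 : ℝ) 1) :
    ∃ lo hi α β : ℚ, 0 ≤ lo ∧ hi ≤ 1 ∧ (lo : ℝ) ≤ t ∧ t ≤ (hi : ℝ) ∧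
      ∀ s : ℝ, (lo : ℝ) ≤ s → s ≤ (hi : ℝ) → ∫ x in (0 : ℝ)..s, f x = α + β * s := by
  suffices H : ∀ k : Fin (p + 1), ∀ t : ℝ, 0 ≤ t → t ≤ (c k : ℝ) →
      ∃ lo hi α β : ℚ, 0 ≤ lo ∧ hi ≤ 1 ∧ (lo : ℝ) ≤ t ∧ t ≤ (hi : ℝ) ∧
      ∀ s : ℝ, (lo : ℝ) ≤ s → s ≤ (hi : ℝ) → ∫ x in (0 : ℝ)..s, f x = α + β * s from
    H (Fin.last p) t ht.1 (by rw [hc1]; exact_mod_cast ht.2)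
  have hc_nonneg : ∀ k, 0 ≤ c k := fun k => hc0 ▸ hc (Fin.zero_le k)
  have hc_le : ∀ k, c k ≤ 1 := fun k => hc1 ▸ hc (Fin.le_last k)
  intro k
  induction k using Fin.induction with
  | zero =>
    intro t ht0 ht1
    rw [hc0] at ht1
    refine ⟨0, 0, 0, 0, le_rfl, zero_le_one, by simpa using ht0, ht1, fun s hs0 hs1 => ?_⟩
    have : s = 0 := le_antisymm (by simpa using hs1) (by simpa using hs0)
    simp [this]
  | succ k ih =>
    intro t ht0 ht1
    rcases le_total t (c k.castSucc : ℝ) with htk | htk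
    · exact ih t ht0 htk
    have hk0 : (0 : ℝ) ≤ c k.castSucc := by exact_mod_cast hc_nonneg _
    obtain ⟨lo, hi, α, β, -, -, hlo, hhi, hαβ⟩ := ih (c k.castSucc) hk0 le_rfl
    refine ⟨c k.castSucc, c k.succ, α + β * c k.castSucc - h k * c k.castSucc, h k,
      hc_nonneg _, hc_le _, htk, ht1, fun s hs0 hs1 => ?_⟩
    have hs1' : s ≤ 1 := hs1.trans (by exact_mod_cast hc_le _)
    have hfint_left : IntervalIntegrable f MeasureTheory.volume 0 (c k.castSucc) :=
      hfint.mono_set (Set.uIcc_subset_uIcc_left (by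
        rw [Set.uIcc_of_le zero_le_one]; exact ⟨hk0, hs0.trans hs1'⟩))
    have hfint_right : IntervalIntegrable f MeasureTheory.volume (c k.castSucc) s :=
      hfint.mono_set (Set.uIcc_subset_uIcc
        (by rw [Set.uIcc_of_le zero_le_one]; exact ⟨hk0, hs0.trans hs1'⟩)
        (by rw [Set.uIcc_of_le zero_le_one]; exact ⟨hk0.trans hs0, hs1'⟩))
    have hconst : ∫ x in (c k.castSucc : ℝ)..s, f x = ∫ x in (c k.castSucc : ℝ)..s, (h k : ℝ) := by
      rw [intervalIntegral.integral_of_le hs0, intervalIntegral.integral_of_le hs0,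
        MeasureTheory.integral_Ioc_eq_integral_Ioo, MeasureTheory.integral_Ioc_eq_integral_Ioo]
      exact MeasureTheory.setIntegral_congr_fun measurableSet_Ioo
        fun x hx => hf k x hx.1 (hx.2.trans_le hs1)
    rw [← intervalIntegral.integral_add_adjacent_intervals hfint_left hfint_right, hαβ _ hlo hhi, hconst,
      intervalIntegral.integral_const, smul_eq_mul]
    push_cast
    ring

/-- For normalized piecewise constant valuations on `[0,1]` with rational
breakpoints and rational step values, there exists a contiguous exactly envy-free allocation
in which all cut points are rational. -/
theorem rational_envy_free_exists_piecewise_constant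
    (n : ℕ) (hn : 0 < n) (f : Fin n → ℝ → ℝ)
    (hnn : ∀ i x, 0 ≤ f i x)
    (hpc : ∀ i : Fin n, ∃ (p : ℕ) (c : Fin (p + 1) → ℚ) (h : Fin p → ℚ),
      Monotone c ∧ c 0 = 0 ∧ c (Fin.last p) = 1 ∧ (∀ j, 0 ≤ h j) ∧
      (∀ (j : Fin p) (x : ℝ),
        (c j.castSucc : ℝ) < x → x < (c j.succ : ℝ) → f i x = (h j : ℝ)))
    (hnorm : ∀ i, (∫ x in (0 : ℝ)..1, f i x) = 1) :
    ∃ (y : Fin (n + 1) → ℝ) (π : Equiv.Perm (Fin n)),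
      Monotone y ∧ y 0 = 0 ∧ y (Fin.last n) = 1 ∧
      (∀ k : Fin (n + 1), ∃ q : ℚ, y k = (q : ℝ)) ∧
      (∀ i j : Fin n,
        (∫ x in (y (π i).castSucc)..(y (π i).succ), f i x) ≥
          (∫ x in (y (π j).castSucc)..(y (π j).succ), f i x)) := by
  obtain ⟨d, rfl⟩ := Nat.exists_eq_add_one.mpr hn
  have hfint : ∀ i, IntervalIntegrable (f i) MeasureTheory.volume 0 1 := fun i =>
    intervalIntegral.intervalIntegrable_of_integral_ne_zero (by rw [hnorm]; exact one_ne_zero)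
  set F : Fin (d + 1) → ℝ → ℝ := fun i t => ∫ x in (0 : ℝ)..t, f i x with hFdef
  have hFc : ∀ i, ContinuousOn (F i) (Set.Icc 0 1) := fun i => by
    have := intervalIntegral.continuousOn_primitive_interval' (hfint i) Set.left_mem_uIcc
    rwa [Set.uIcc_of_le zero_le_one] at this
  obtain ⟨y, π, hmono, hy0, hy1, henvy⟩ := exists_envy_free F hFc
    (fun i => by simp [hFdef, hnorm])
  have hymem : ∀ k, y k ∈ Set.Icc (0 : ℝ) 1 := fun k =>
    ⟨hy0 ▸ hmono (Fin.zero_le k), hy1 ▸ hmono (Fin.le_last k)⟩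
  have hloc : ∀ i k, ∃ lo hi α β : ℚ, 0 ≤ lo ∧ hi ≤ 1 ∧ (lo : ℝ) ≤ y k ∧ y k ≤ (hi : ℝ) ∧
      ∀ s : ℝ, (lo : ℝ) ≤ s → s ≤ (hi : ℝ) → F i s = α + β * s := by
    intro i k
    obtain ⟨p, c, h, hc, hc0, hc1, -, hf⟩ := hpc i
    exact exists_rat_affine_primitive (f i) c h hc hc0 hc1 hf (hfint i) _ (hymem k)
  choose lo hi α β hlo0 hhi1 hlo hhi hF using hloc
  set gain : Fin (d + 1) → Fin (d + 1) → ℝ := fun i k =>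
    F i (y (π i).succ) - F i (y (π i).castSucc) - (F i (y k.succ) - F i (y k.castSucc)) with hgain
  obtain ⟨φ, hφ1, hφ⟩ := exists_rat_linear_pos
    (Set.range (fun ik : Fin (d + 1) × Fin (d + 2) => y ik.2 - lo ik.1 ik.2) ∪
      Set.range (fun ik : Fin (d + 1) × Fin (d + 2) => hi ik.1 ik.2 - y ik.2) ∪
      Set.range (fun k : Fin (d + 1) => y k.succ - y k.castSucc) ∪
      Set.range (fun ik : Fin (d + 1) × Fin (d + 1) => gain ik.1 ik.2))
    ((((Set.finite_range _).union (Set.finite_range _)).union (Set.finite_range _)).union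
      (Set.finite_range _))
  have hφrat : ∀ (a : ℚ) (x : ℝ), φ (a * x) = a * φ x := fun a x => by
    rw [← Rat.smul_def, map_smul, smul_eq_mul]
  have hφcast : ∀ a : ℚ, φ a = a := fun a => by
    have := hφrat a 1
    rwa [mul_one, hφ1, mul_one] at this
  have hφnonneg : ∀ x : ℝ, (0 < x → 0 < φ x) → 0 ≤ x → 0 ≤ φ x := by
    intro x h hx
    rcases hx.eq_or_lt with rfl | hx
    · simp
    · exact (h hx).le
  have hφlo : ∀ i k, lo i k ≤ φ (y k) := fun i k => by
    have := hφnonneg _ (hφ _ (by simp)) (sub_nonneg.mpr (hlo i k))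
    rwa [map_sub, hφcast, sub_nonneg] at this
  have hφhi : ∀ i k, φ (y k) ≤ hi i k := fun i k => by
    have := hφnonneg _ (hφ _ (by simp)) (sub_nonneg.mpr (hhi i k))
    rwa [map_sub, hφcast, sub_nonneg] at this
  have hφF : ∀ i k, F i (φ (y k) : ℝ) = (φ (F i (y k)) : ℝ) := fun i k => by
    rw [hF i k _ (hlo i k) (hhi i k), hF i k _ (by exact_mod_cast hφlo i k)
      (by exact_mod_cast hφhi i k), map_add, hφcast, hφrat]
    push_cast
    rfl
  have hφmem : ∀ k, (φ (y k) : ℝ) ∈ Set.uIcc (0 : ℝ) 1 := fun k => by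
    rw [Set.uIcc_of_le zero_le_one]
    exact ⟨by exact_mod_cast (hlo0 0 k).trans (hφlo 0 k),
      by exact_mod_cast (hφhi 0 k).trans (hhi1 0 k)⟩
  have hpiece : ∀ i k l, ∫ x in (φ (y k) : ℝ)..(φ (y l) : ℝ), f i x =
      ((φ (F i (y l)) - φ (F i (y k)) : ℚ) : ℝ) := fun i k l => by
    rw [Rat.cast_sub, ← hφF, ← hφF]
    exact (intervalIntegral.integral_interval_sub_left
      ((hfint i).mono_set (Set.uIcc_subset_uIcc_left (hφmem l)))
      ((hfint i).mono_set (Set.uIcc_subset_uIcc_left (hφmem k)))).symm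
  refine ⟨fun k => φ (y k), π, Fin.monotone_iff_le_succ.mpr fun k => ?_, by simp [hy0],
    by simp [hy1, hφ1], fun k => ⟨_, rfl⟩, fun i j => ?_⟩
  · have := hφnonneg _ (hφ _ (by simp))
      (sub_nonneg.mpr (hmono (Fin.castSucc_lt_succ (i := k)).le))
    rw [map_sub, sub_nonneg] at this
    exact_mod_cast this
  · have := hφnonneg (gain i (π j)) (hφ _ (by simp)) (sub_nonneg.mpr (henvy i (π j)))
    simp only [hgain, map_sub] at this
    rw [hpiece, hpiece, ge_iff_le, Rat.cast_le]
    linarith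
end

section
/- Let φ be a 3-SAT formula with clauses C_1,…,C_m (each a disjunction of 3 literals) over variables x_1,…,x_n. Construct the following discrete instance with agents C_i^1, C_i^2, C_i^3 for each clause C_i (C_i^k associated with the k-th literal ℓ(C_i^k) of C_i), agents L_j and R_j for each variable x_j, and 5 fresh agents for each Isolation-Gadget. The items, from left to right, are: for i = 1,…,m the Clause-Gadget of C_i, consisting of 27 items made of three repetitions of (3 items valued only by C_i^1, then 3 items valued only by C_i^2, then 3 items valued only by C_i^3); then for j = 1,…,n the Variable-Gadget of x_j, consisting of 13 items valued only by L_j, then 4 items each valued by exactly the clause agents A with ℓ(A) = x_j, then 4 items each valued by exactly the clause agents A with ℓ(A) = ¬x_j, then 13 items valued only by R_j; with an Isolation-Gadget — 13 items each valued by exactly its 5 fresh agents — inserted between every two consecutive gadgets. (Every agent values exactly 13 items and there are 8m+7n−5 agents.) Then for every ε with 0 ≤ ε < 1/13: this instance admits a contiguous ε-envy-free allocation if and only if φ is satisfiable. -/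
/-- `owner` is a contiguous allocation of the items `Fin M` (items numbered from left to
right) to the agents of type `A`: each agent's set of items is a (possibly empty) set of
consecutive items. -/
def ContigAlloc {M : ℕ} {A : Type*} (owner : Fin M → A) : Prop :=
  ∀ (a : A) (t₁ t₂ t₃ : Fin M), t₁ ≤ t₂ → t₂ ≤ t₃ →
    owner t₁ = a → owner t₃ = a → owner t₂ = a

open Classical in
/-- The (normalized) value that agent `a` assigns to the bundle received by agent `b`
under the allocation `owner`, where `V a` is the set of items valued by agent `a`:
`|A_b ∩ V_a| / |V_a|`. -/
noncomputable def discVal {M : ℕ} {A : Type*} (V : A → Finset (Fin M))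
    (owner : Fin M → A) (a b : A) : ℝ :=
  (((V a).filter fun t => owner t = b).card : ℝ) / ((V a).card : ℝ)

/-- Satisfiability of the 3-SAT formula `φ` (`φ i k = (j, pol)` means the `k`-th literal
of clause `i` is `x_j` if `pol = true` and `¬ x_j` if `pol = false`). -/
def SatFormula (m n : ℕ) (φ : Fin m → Fin 3 → Fin n × Bool) : Prop :=
  ∃ a : Fin n → Bool, ∀ i : Fin m, ∃ k : Fin 3, a (φ i k).1 = (φ i k).2

/-- Item index at which the Variable-Gadget of variable `j` starts. -/
def varGadgetStart (m : ℕ) (j : ℕ) : ℕ := 40 * m + 47 * j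

/-- Item index at which the `g`-th Isolation-Gadget starts. -/
def isoGadgetStart (m : ℕ) (g : ℕ) : ℕ :=
  if g < m then 40 * g + 27 else 40 * m + 47 * (g - m) + 34

/-- Valued sets of the discrete instance built from the 3-SAT formula `φ`: clause agents
`Sum.inl (i, k)`, variable agents `Sum.inr (Sum.inl (j, true)) = L_j` and
`Sum.inr (Sum.inl (j, false)) = R_j`, and the 5 agents of each Isolation-Gadget
`Sum.inr (Sum.inr (g, _))`. Every agent values exactly 13 items. -/
def satV (m n : ℕ) (φ : Fin m → Fin 3 → Fin n × Bool) :
    ((Fin m × Fin 3) ⊕ (Fin n × Bool) ⊕ (Fin (m + n - 1) × Fin 5)) →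
      Finset (Fin (40 * m + 47 * n - 13))
  | .inl (i, k) => Finset.univ.filter fun t =>
      (40 * i.val ≤ t.val ∧ t.val < 40 * i.val + 27 ∧
        ((t.val - 40 * i.val) % 9) / 3 = k.val) ∨
      (varGadgetStart m (φ i k).1.val + (if (φ i k).2 then 13 else 17) ≤ t.val ∧
        t.val < varGadgetStart m (φ i k).1.val + (if (φ i k).2 then 17 else 21))
  | .inr (.inl (j, true)) => Finset.univ.filter fun t =>
      varGadgetStart m j.val ≤ t.val ∧ t.val < varGadgetStart m j.val + 13
  | .inr (.inl (j, false)) => Finset.univ.filter fun t =>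
      varGadgetStart m j.val + 21 ≤ t.val ∧ t.val < varGadgetStart m j.val + 34
  | .inr (.inr (g, _)) => Finset.univ.filter fun t =>
      isoGadgetStart m g.val ≤ t.val ∧ t.val < isoGadgetStart m g.val + 13

open Finset

/-- The agents of the instance built from a formula with `m` clauses and `n` variables. -/
abbrev SatAgent (m n : ℕ) : Type :=
  (Fin m × Fin 3) ⊕ (Fin n × Bool) ⊕ (Fin (m + n - 1) × Fin 5)

/-- `SatValues φ a t`: agent `a` values the item with index `t`. -/
def SatValues {m n : ℕ} (φ : Fin m → Fin 3 → Fin n × Bool) : SatAgent m n → ℕ → Prop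
  | .inl (i, k), t =>
      (40 * i.val ≤ t ∧ t < 40 * i.val + 27 ∧ ((t - 40 * i.val) % 9) / 3 = k.val) ∨
      (varGadgetStart m (φ i k).1.val + (if (φ i k).2 then 13 else 17) ≤ t ∧
        t < varGadgetStart m (φ i k).1.val + (if (φ i k).2 then 17 else 21))
  | .inr (.inl (j, true)), t => varGadgetStart m j.val ≤ t ∧ t < varGadgetStart m j.val + 13
  | .inr (.inl (j, false)), t =>
      varGadgetStart m j.val + 21 ≤ t ∧ t < varGadgetStart m j.val + 34
  | .inr (.inr (g, _)), t => isoGadgetStart m g.val ≤ t ∧ t < isoGadgetStart m g.val + 13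

theorem mem_satV {m n : ℕ} (φ : Fin m → Fin 3 → Fin n × Bool) (a : SatAgent m n)
    (t : Fin (40 * m + 47 * n - 13)) : t ∈ satV m n φ a ↔ SatValues φ a t.val := by
  rcases a with ⟨i, k⟩ | ⟨j, _ | _⟩ | ⟨g, k⟩ <;> simp [satV, SatValues]

section Counting

variable {m n : ℕ} (φ : Fin m → Fin 3 → Fin n × Bool)

theorem SatValues.lt {φ : Fin m → Fin 3 → Fin n × Bool} {a : SatAgent m n} {t : ℕ}
    (h : SatValues φ a t) : t < 40 * m + 47 * n - 13 := by
  rcases a with ⟨i, k⟩ | ⟨j, _ | _⟩ | ⟨g, k⟩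
  · have := (φ i k).1.isLt
    simp only [SatValues, varGadgetStart] at h
    split_ifs at h <;> omega
  all_goals simp only [SatValues, varGadgetStart, isoGadgetStart] at h
  · omega
  · omega
  · split_ifs at h <;> omega

open Classical in
/-- The number of items valued by `a` in the bundle of `b` under the allocation `o`. -/
noncomputable def bundleCount (o : ℕ → SatAgent m n) (a b : SatAgent m n) : ℕ :=
  #{t ∈ range (40 * m + 47 * n - 13) | SatValues φ a t ∧ o t = b}

theorem le_bundleCount {φ : Fin m → Fin 3 → Fin n × Bool} {o : ℕ → SatAgent m n}
    {a b : SatAgent m n} (s : Finset ℕ) (h : ∀ t ∈ s, SatValues φ a t ∧ o t = b) :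
    #s ≤ bundleCount φ o a b := by
  classical
  refine card_le_card fun t ht => ?_
  rw [mem_filter, mem_range]
  exact ⟨(h t ht).1.lt, h t ht⟩

theorem bundleCount_le {φ : Fin m → Fin 3 → Fin n × Bool} {o : ℕ → SatAgent m n}
    {a b : SatAgent m n} (s : Finset ℕ)
    (h : ∀ t < 40 * m + 47 * n - 13, SatValues φ a t → o t = b → t ∈ s) :
    bundleCount φ o a b ≤ #s := by
  classical
  refine card_le_card fun t ht => ?_
  rw [mem_filter, mem_range] at ht
  exact h t ht.1 ht.2.1 ht.2.2

theorem exists_of_bundleCount_pos {φ : Fin m → Fin 3 → Fin n × Bool} {o : ℕ → SatAgent m n}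
    {a b : SatAgent m n} (h : 0 < bundleCount φ o a b) :
    ∃ t, SatValues φ a t ∧ o t = b := by
  classical
  obtain ⟨t, ht⟩ := card_pos.1 h
  exact ⟨t, (mem_filter.1 ht).2⟩

theorem discVal_satV_eq (owner : Fin (40 * m + 47 * n - 13) → SatAgent m n)
    (o : ℕ → SatAgent m n) (ho : ∀ t, owner t = o t.val) (a b : SatAgent m n) :
    discVal (satV m n φ) owner a b = bundleCount φ o a b / #(satV m n φ a) := by
  classical
  unfold discVal bundleCount
  congr 2
  refine card_bij (fun t _ => t.val) ?_ ?_ ?_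
  · intro t ht
    simpa [mem_satV, ho] using ht
  · intro t _ u _ h
    exact Fin.ext h
  · intro t ht
    simp only [mem_filter, mem_range] at ht
    exact ⟨⟨t, ht.1⟩, by simpa [mem_satV, ho] using ht.2, rfl⟩

theorem exists_satValues (a : SatAgent m n) : ∃ t, SatValues φ a t := by
  rcases a with ⟨i, k⟩ | ⟨j, _ | _⟩ | ⟨g, k⟩
  · exact ⟨40 * i.val + 3 * k.val, Or.inl (by omega)⟩
  · exact ⟨varGadgetStart m j.val + 21, by simp [SatValues]⟩
  · exact ⟨varGadgetStart m j.val, by simp [SatValues]⟩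
  · exact ⟨isoGadgetStart m g.val, by simp [SatValues]⟩

theorem card_satV_le (a : SatAgent m n) : #(satV m n φ a) ≤ 13 := by
  classical
  have key : ∀ s : Finset ℕ, (∀ t, SatValues φ a t → t ∈ s) → #(satV m n φ a) ≤ #s := by
    intro s hs
    refine card_le_card_of_injOn Fin.val (fun t ht => hs _ ((mem_satV φ a t).1 ht)) ?_
    exact fun t _ u _ h => Fin.ext h
  rcases a with ⟨i, k⟩ | ⟨j, _ | _⟩ | ⟨g, k⟩
  · let p := varGadgetStart m (φ i k).1.val + (if (φ i k).2 then 13 else 17)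
    refine (key ((({r ∈ range 27 | r % 9 / 3 = k.val} : Finset ℕ).image (40 * i.val + ·)) ∪
      Ico p (p + 4)) ?_).trans ?_
    · rintro t (h | h)
      · refine mem_union_left _ (mem_image.2 ⟨t - 40 * i.val, ?_, by omega⟩)
        rw [mem_filter, mem_range]
        omega
      · refine mem_union_right _ (mem_Ico.2 ?_)
        simp only [p]
        split_ifs at h ⊢ <;> omega
    · refine (card_union_le _ _).trans ?_
      have h₁ : #({r ∈ range 27 | r % 9 / 3 = k.val} : Finset ℕ) ≤ 9 := by
        fin_cases k <;> decide
      have h₂ := card_image_le (s := ({r ∈ range 27 | r % 9 / 3 = k.val} : Finset ℕ))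
        (f := (40 * i.val + ·))
      rw [Nat.card_Ico]
      omega
  · refine (key (Ico (varGadgetStart m j.val + 21) (varGadgetStart m j.val + 34))
      fun t h => mem_Ico.2 h).trans ?_
    rw [Nat.card_Ico]
    omega
  · refine (key (Ico (varGadgetStart m j.val) (varGadgetStart m j.val + 13))
      fun t h => mem_Ico.2 h).trans ?_
    rw [Nat.card_Ico]
    omega
  · refine (key (Ico (isoGadgetStart m g.val) (isoGadgetStart m g.val + 13))
      fun t h => mem_Ico.2 h).trans ?_
    rw [Nat.card_Ico]
    omega

theorem bundleCount_le_of_discVal {ε : ℝ} (hε : ε < 1 / 13)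
    {owner : Fin (40 * m + 47 * n - 13) → SatAgent m n} {o : ℕ → SatAgent m n}
    (ho : ∀ t, owner t = o t.val) {a b : SatAgent m n}
    (h : discVal (satV m n φ) owner a a ≥ discVal (satV m n φ) owner a b - ε) :
    bundleCount φ o a b ≤ bundleCount φ o a a := by
  rw [discVal_satV_eq φ owner o ho, discVal_satV_eq φ owner o ho] at h
  obtain ⟨t, ht⟩ := exists_satValues φ a
  have hpos : 0 < #(satV m n φ a) := card_pos.2 ⟨⟨t, ht.lt⟩, (mem_satV φ a _).2 ht⟩
  have hle : (#(satV m n φ a) : ℝ) ≤ 13 := by exact_mod_cast card_satV_le φ a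
  have hpos' : (0 : ℝ) < #(satV m n φ a) := by exact_mod_cast hpos
  by_contra! hlt
  have hlt' : (bundleCount φ o a a : ℝ) + 1 ≤ bundleCount φ o a b := by exact_mod_cast hlt
  have h₁ : (bundleCount φ o a b : ℝ) / #(satV m n φ a) ≥
      bundleCount φ o a a / #(satV m n φ a) + 1 / #(satV m n φ a) := by
    rw [← add_div]
    exact div_le_div_of_nonneg_right hlt' hpos'.le
  have h₂ : (1 : ℝ) / 13 ≤ 1 / #(satV m n φ a) := one_div_le_one_div_of_le hpos' hle
  linarith

end Counting

theorem SatValues.eq_iso {m n : ℕ} {φ : Fin m → Fin 3 → Fin n × Bool} {b : SatAgent m n}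
    {t : ℕ} (h : SatValues φ b t) (g : Fin (m + n - 1))
    (h₁ : isoGadgetStart m g.val ≤ t) (h₂ : t < isoGadgetStart m g.val + 13) :
    ∃ k, b = .inr (.inr (g, k)) := by
  rcases b with ⟨i, k⟩ | ⟨j, _ | _⟩ | ⟨g', k⟩
  · exfalso
    simp only [SatValues, varGadgetStart] at h
    simp only [isoGadgetStart] at h₁ h₂
    split_ifs at h h₁ h₂ <;> omega
  · exfalso
    simp only [SatValues, varGadgetStart] at h
    simp only [isoGadgetStart] at h₁ h₂
    split_ifs at h₁ h₂ <;> omega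
  · exfalso
    simp only [SatValues, varGadgetStart] at h
    simp only [isoGadgetStart] at h₁ h₂
    split_ifs at h₁ h₂ <;> omega
  · refine ⟨k, ?_⟩
    have : g' = g := by
      simp only [SatValues, isoGadgetStart] at h h₁ h₂
      apply Fin.ext
      split_ifs at h h₁ h₂ <;> omega
    rw [this]

theorem SatValues.eq_clause {m n : ℕ} {φ : Fin m → Fin 3 → Fin n × Bool} {b : SatAgent m n}
    {t : ℕ} (h : SatValues φ b t) (i : Fin m)
    (h₁ : 40 * i.val ≤ t) (h₂ : t < 40 * i.val + 27) : ∃ k, b = .inl (i, k) := by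
  rcases b with ⟨i', k⟩ | ⟨j, _ | _⟩ | ⟨g', k⟩
  · refine ⟨k, ?_⟩
    have : i' = i := by
      simp only [SatValues, varGadgetStart] at h
      apply Fin.ext
      split_ifs at h <;> omega
    rw [this]
  all_goals
    exfalso
    simp only [SatValues, varGadgetStart, isoGadgetStart] at h
  · omega
  · omega
  · split_ifs at h <;> omega

theorem SatValues.eq_variable {m n : ℕ} {φ : Fin m → Fin 3 → Fin n × Bool}
    {b : SatAgent m n} {t : ℕ} (h : SatValues φ b t) (j : Fin n)
    (h₁ : varGadgetStart m j.val ≤ t) (h₂ : t < varGadgetStart m j.val + 34) :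
    (∃ i k, b = .inl (i, k)) ∨ ∃ c, b = .inr (.inl (j, c)) := by
  rcases b with ⟨i', k⟩ | ⟨j', c⟩ | ⟨g', k⟩
  · exact Or.inl ⟨i', k, rfl⟩
  · refine Or.inr ⟨c, ?_⟩
    have : j' = j := by
      apply Fin.ext
      cases c <;> simp only [SatValues, varGadgetStart] at h h₁ h₂ <;> omega
    rw [this]
  · exfalso
    simp only [SatValues, varGadgetStart, isoGadgetStart] at h h₁ h₂
    split_ifs at h <;> omega

/-- `o` restricted to the items of the instance is a contiguous envy-free allocation. -/
structure IsEnvyFreeAlloc {m n : ℕ} (φ : Fin m → Fin 3 → Fin n × Bool)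
    (o : ℕ → SatAgent m n) : Prop where
  contig : ∀ x y z, x ≤ y → y ≤ z → z < 40 * m + 47 * n - 13 → o x = o z → o y = o z
  envy_free : ∀ a b, bundleCount φ o a b ≤ bundleCount φ o a a

namespace IsEnvyFreeAlloc

variable {m n : ℕ} {φ : Fin m → Fin 3 → Fin n × Bool} {o : ℕ → SatAgent m n}

theorem exists_own (H : IsEnvyFreeAlloc φ o) (a : SatAgent m n) :
    ∃ t, SatValues φ a t ∧ o t = a := by
  obtain ⟨t, ht⟩ := exists_satValues φ a
  have h₁ : 1 ≤ bundleCount φ o a (o t) :=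
    le_bundleCount {t} fun u hu => by rw [mem_singleton] at hu; subst hu; exact ⟨ht, rfl⟩
  exact exists_of_bundleCount_pos (h₁.trans (H.envy_free a (o t)))

theorem iso_end_lt (g : Fin (m + n - 1)) :
    isoGadgetStart m g.val + 13 < 40 * m + 47 * n - 13 := by
  unfold isoGadgetStart
  split_ifs <;> omega

open Classical in
theorem bundleCount_iso (g : Fin (m + n - 1)) (k : Fin 5) (b : SatAgent m n) :
    bundleCount φ o (.inr (.inr (g, k))) b =
      #{t ∈ Ico (isoGadgetStart m g.val) (isoGadgetStart m g.val + 13) | o t = b} := by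
  apply le_antisymm
  · refine bundleCount_le _ fun t _ h hb => ?_
    rw [mem_filter, mem_Ico]
    exact ⟨h, hb⟩
  · refine le_bundleCount _ fun t ht => ?_
    rw [mem_filter, mem_Ico] at ht
    exact ht

open Classical in
theorem card_iso_le_two (H : IsEnvyFreeAlloc φ o) (g : Fin (m + n - 1)) (b : SatAgent m n) :
    #{t ∈ Ico (isoGadgetStart m g.val) (isoGadgetStart m g.val + 13) | o t = b} ≤ 2 := by
  set I := Ico (isoGadgetStart m g.val) (isoGadgetStart m g.val + 13) with hI
  have h₁ : ∑ k : Fin 5, #{t ∈ I | o t = .inr (.inr (g, k))} ≤ #I := by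
    rw [← card_biUnion]
    · exact card_le_card (biUnion_subset.2 fun k _ => filter_subset _ _)
    · intro k _ l _ hkl
      refine disjoint_filter.2 fun t _ h₁ h₂ => hkl ?_
      simpa using h₁.symm.trans h₂
  have h₂ : ∑ _k : Fin 5, #{t ∈ I | o t = b} ≤
      ∑ k : Fin 5, #{t ∈ I | o t = .inr (.inr (g, k))} := by
    refine sum_le_sum fun k _ => ?_
    rw [← bundleCount_iso (φ := φ) g k, ← bundleCount_iso (φ := φ) g k]
    exact H.envy_free _ _
  have h₃ : #I = 13 := by rw [hI, Nat.card_Ico]; omega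
  rw [sum_const, card_univ, Fintype.card_fin, smul_eq_mul] at h₂
  omega

/-- The items of an Isolation-Gadget that go to outsiders cannot all go to one agent. -/
theorem not_outsiders_subset (H : IsEnvyFreeAlloc φ o) (g : Fin (m + n - 1))
    (b : SatAgent m n)
    (h : ∀ t, isoGadgetStart m g.val ≤ t → t < isoGadgetStart m g.val + 13 →
      (∃ k, o t = .inr (.inr (g, k))) ∨ o t = b) : False := by
  classical
  let I := Ico (isoGadgetStart m g.val) (isoGadgetStart m g.val + 13)
  have hsub : I ⊆ (univ.biUnion fun k : Fin 5 => {t ∈ I | o t = .inr (.inr (g, k))}) ∪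
      {t ∈ I | o t = b} := by
    intro t ht
    rcases h t (mem_Ico.1 ht).1 (mem_Ico.1 ht).2 with ⟨k, hk⟩ | hb
    · exact mem_union_left _ (mem_biUnion.2 ⟨k, mem_univ _, mem_filter.2 ⟨ht, hk⟩⟩)
    · exact mem_union_right _ (mem_filter.2 ⟨ht, hb⟩)
  have h₁ := (card_le_card hsub).trans (card_union_le _ _)
  have h₂ := card_biUnion_le_card_mul (univ : Finset (Fin 5))
    (fun k : Fin 5 => {t ∈ I | o t = .inr (.inr (g, k))}) 2
    fun k _ => H.card_iso_le_two g _
  have h₃ := H.card_iso_le_two g b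
  have h₄ : #I = 13 := by rw [Nat.card_Ico]; omega
  rw [card_univ, Fintype.card_fin] at h₂
  change #{t ∈ I | o t = b} ≤ 2 at h₃
  omega

theorem iso_first_ne (H : IsEnvyFreeAlloc φ o) (g : Fin (m + n - 1)) (k : Fin 5) :
    o (isoGadgetStart m g.val) ≠ .inr (.inr (g, k)) := by
  intro hk
  refine H.not_outsiders_subset g (o (isoGadgetStart m g.val + 12)) fun t h₁ h₂ => ?_
  obtain ⟨u, hu, hou⟩ := H.exists_own (o t)
  have hN := iso_end_lt g
  rcases lt_or_ge u (isoGadgetStart m g.val) with h | h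
  · exact Or.inl ⟨k, (H.contig u _ t h.le h₁ (by omega) hou).symm.trans hk⟩
  rcases lt_or_ge u (isoGadgetStart m g.val + 13) with h' | h'
  · exact Or.inl (hu.eq_iso g h h')
  · exact Or.inr (hou.symm.trans
      (H.contig t (isoGadgetStart m g.val + 12) u (by omega) (by omega) hu.lt hou.symm).symm)

theorem iso_last_ne (H : IsEnvyFreeAlloc φ o) (g : Fin (m + n - 1)) (k : Fin 5) :
    o (isoGadgetStart m g.val + 12) ≠ .inr (.inr (g, k)) := by
  intro hk
  refine H.not_outsiders_subset g (o (isoGadgetStart m g.val)) fun t h₁ h₂ => ?_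
  obtain ⟨u, hu, hou⟩ := H.exists_own (o t)
  have hN := iso_end_lt g
  rcases lt_or_ge u (isoGadgetStart m g.val) with h | h
  · exact Or.inr (H.contig u _ t h.le h₁ (by omega) hou).symm
  rcases lt_or_ge u (isoGadgetStart m g.val + 13) with h' | h'
  · exact Or.inl (hu.eq_iso g h h')
  · refine Or.inl ⟨k, Eq.trans ?_ hk⟩
    exact hou.symm.trans
      (H.contig t (isoGadgetStart m g.val + 12) u (by omega) (by omega) hu.lt hou.symm).symm

/-- No bundle contains a whole Isolation-Gadget. -/
theorem not_cross_iso (H : IsEnvyFreeAlloc φ o) (g : Fin (m + n - 1)) {t u : ℕ}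
    (ht : t < isoGadgetStart m g.val) (hu : isoGadgetStart m g.val + 13 ≤ u)
    (huN : u < 40 * m + 47 * n - 13) (h : o t = o u) : False :=
  H.not_outsiders_subset g (o u) fun x h₁ h₂ =>
    Or.inr (H.contig t x u (by omega) (by omega) huN h)

theorem own_lt_iso (H : IsEnvyFreeAlloc φ o) (g : Fin (m + n - 1)) {t u : ℕ}
    (ht : t < isoGadgetStart m g.val) (hu : SatValues φ (o t) u) (hou : o u = o t) :
    u < isoGadgetStart m g.val := by
  by_contra! h
  rcases lt_or_ge u (isoGadgetStart m g.val + 13) with h' | h'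
  · obtain ⟨k, hk⟩ := hu.eq_iso g h h'
    exact H.iso_first_ne g k
      ((H.contig t _ u ht.le h hu.lt hou.symm).trans (hou.trans hk))
  · exact H.not_cross_iso g ht h' hu.lt hou.symm

theorem iso_le_own (H : IsEnvyFreeAlloc φ o) (g : Fin (m + n - 1)) {t u : ℕ}
    (ht : isoGadgetStart m g.val + 13 ≤ t) (htN : t < 40 * m + 47 * n - 13)
    (hu : SatValues φ (o t) u) (hou : o u = o t) :
    isoGadgetStart m g.val + 13 ≤ u := by
  by_contra! h
  rcases lt_or_ge u (isoGadgetStart m g.val) with h' | h'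
  · exact H.not_cross_iso g h' ht htN hou
  · obtain ⟨k, hk⟩ := hu.eq_iso g h' h
    exact H.iso_last_ne g k ((H.contig u _ t (by omega) (by omega) htN hou).trans hk)

theorem clause_item_owner (H : IsEnvyFreeAlloc φ o) (hn : 0 < n) (i : Fin m) {t : ℕ}
    (h₁ : 40 * i.val ≤ t) (h₂ : t < 40 * i.val + 27) : ∃ k, o t = .inl (i, k) := by
  obtain ⟨u, hu, hou⟩ := H.exists_own (o t)
  have hi := i.isLt
  have hr := H.own_lt_iso ⟨i.val, by omega⟩ (t := t) (u := u)
    (by simp only [isoGadgetStart, hi, if_true]; omega) hu hou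
  simp only [isoGadgetStart, hi, if_true] at hr
  refine hu.eq_clause i ?_ hr
  rcases Nat.eq_zero_or_pos i.val with h0 | hpos
  · omega
  · have hi' : i.val - 1 < m := by omega
    have hl := H.iso_le_own ⟨i.val - 1, by omega⟩ (t := t) (u := u)
      (by simp only [isoGadgetStart, hi', if_true]; omega) (by omega) hu hou
    simp only [isoGadgetStart, hi', if_true] at hl
    omega

/-- Clause agents receive no item to the right of the Clause-Gadgets. -/
theorem clause_agent_lt (H : IsEnvyFreeAlloc φ o) (hn : 0 < n) (i : Fin m) (k : Fin 3) {t : ℕ}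
    (htN : t < 40 * m + 47 * n - 13) (ht : o t = .inl (i, k)) : t < 40 * m := by
  classical
  by_contra! hge
  have hm := i.isLt
  have hg : m - 1 < m := by omega
  have hown : ∀ u, SatValues φ (.inl (i, k)) u → o u = .inl (i, k) → 40 * m ≤ u := by
    intro u hu hou
    have := H.iso_le_own ⟨m - 1, by omega⟩ (t := t) (u := u)
      (by simp only [isoGadgetStart, hg, if_true]; omega) htN (ht ▸ hu) (hou.trans ht.symm)
    simp only [isoGadgetStart, hg, if_true] at this
    omega
  let p := varGadgetStart m (φ i k).1.val + (if (φ i k).2 then 13 else 17)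
  have h4 : bundleCount φ o (.inl (i, k)) (.inl (i, k)) ≤ 4 := by
    refine (bundleCount_le (Ico p (p + 4)) fun u _ hu hou => ?_).trans_eq
      (by rw [Nat.card_Ico]; omega)
    have := hown u hu hou
    rcases hu with hu | hu
    · omega
    · rw [mem_Ico]
      simp only [p]
      split_ifs at hu ⊢ <;> omega
  let S := ({r ∈ range 27 | r % 9 / 3 = k.val} : Finset ℕ).image (40 * i.val + ·)
  have hS : ∀ u ∈ S, 40 * i.val ≤ u ∧ u < 40 * i.val + 27 ∧
      ((u - 40 * i.val) % 9) / 3 = k.val := by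
    intro u hu
    obtain ⟨r, hr, rfl⟩ := mem_image.1 hu
    rw [mem_filter, mem_range] at hr
    rw [Nat.add_sub_cancel_left]
    omega
  have hScard : #S = 9 := by
    rw [card_image_of_injective _ (add_right_injective _)]
    fin_cases k <;> decide
  have hsub : S ⊆ (univ.erase k).biUnion fun l => {u ∈ S | o u = .inl (i, l)} := by
    intro u hu
    obtain ⟨h₁, h₂, h₃⟩ := hS u hu
    obtain ⟨l, hl⟩ := H.clause_item_owner hn i h₁ h₂
    refine mem_biUnion.2 ⟨l, mem_erase.2 ⟨?_, mem_univ _⟩, mem_filter.2 ⟨hu, hl⟩⟩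
    rintro rfl
    have := hown u (Or.inl ⟨h₁, h₂, h₃⟩) hl
    omega
  have h8 := card_biUnion_le_card_mul (univ.erase k)
    (fun l => {u ∈ S | o u = .inl (i, l)}) 4 fun l _ =>
      (le_bundleCount (φ := φ) (a := .inl (i, k)) _ fun u hu =>
        ⟨Or.inl (hS u (mem_filter.1 hu).1), (mem_filter.1 hu).2⟩).trans
        ((H.envy_free _ _).trans h4)
  have hle := (card_le_card hsub).trans h8
  rw [hScard, card_erase_of_mem (mem_univ _), card_univ, Fintype.card_fin] at hle
  omega

theorem variable_item_owner (H : IsEnvyFreeAlloc φ o) (hm : 0 < m) (j : Fin n) {t : ℕ}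
    (h₁ : varGadgetStart m j.val ≤ t) (h₂ : t < varGadgetStart m j.val + 34) :
    ∃ c, o t = .inr (.inl (j, c)) := by
  obtain ⟨u, hu, hou⟩ := H.exists_own (o t)
  have hj := j.isLt
  have hN : varGadgetStart m j.val + 34 ≤ 40 * m + 47 * n - 13 := by
    unfold varGadgetStart; omega
  have hl := H.iso_le_own ⟨m + j.val - 1, by omega⟩ (t := t) (u := u)
    (by simp only [isoGadgetStart, varGadgetStart] at h₁ ⊢; split_ifs <;> omega)
    (by omega) hu hou
  have hl' : varGadgetStart m j.val ≤ u := by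
    simp only [isoGadgetStart, varGadgetStart] at hl ⊢
    split_ifs at hl <;> omega
  have hr' : u < varGadgetStart m j.val + 34 := by
    rcases lt_or_ge (j.val + 1) n with hlt | hge
    · have hr := H.own_lt_iso ⟨m + j.val, by omega⟩ (t := t) (u := u)
        (by simp only [isoGadgetStart, varGadgetStart] at h₂ ⊢; split_ifs <;> omega) hu hou
      simp only [isoGadgetStart, varGadgetStart] at hr ⊢
      split_ifs at hr <;> omega
    · have := hu.lt
      unfold varGadgetStart
      omega
  rcases hu.eq_variable j hl' hr' with ⟨i, k, hik⟩ | h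
  · exfalso
    have := H.clause_agent_lt (by omega) i k (by omega) hik
    unfold varGadgetStart at h₁
    omega
  · exact h

theorem satFormula (H : IsEnvyFreeAlloc φ o) (hm : 0 < m) (hn : 0 < n) :
    SatFormula m n φ := by
  classical
  refine ⟨fun j => decide (o (varGadgetStart m j.val + 16) = .inr (.inl (j, false))),
    fun i => ?_⟩
  by_contra! hfalse
  -- an agent whose literal is false sees four valued items in a single bundle
  have hfour : ∀ k, 4 ≤ bundleCount φ o (.inl (i, k)) (.inl (i, k)) := by
    intro k
    have hk := hfalse k
    rcases hφ : φ i k with ⟨j, pol⟩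
    simp only [hφ] at hk
    have hN : varGadgetStart m j.val + 34 ≤ 40 * m + 47 * n - 13 := by
      have := j.isLt
      unfold varGadgetStart; omega
    cases pol
    · have hR : o (varGadgetStart m j.val + 16) = .inr (.inl (j, false)) := by simpa using hk
      obtain ⟨r, hr, hor⟩ := H.exists_own (.inr (.inl (j, false)))
      simp only [SatValues] at hr
      refine le_trans ?_ (H.envy_free _ (.inr (.inl (j, false))))
      refine le_trans ?_ (le_bundleCount
        (Ico (varGadgetStart m j.val + 17) (varGadgetStart m j.val + 21)) fun t ht => ?_)
      · rw [Nat.card_Ico]; omega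
      · rw [mem_Ico] at ht
        refine ⟨Or.inr ?_, (H.contig (varGadgetStart m j.val + 16) t r (by omega) (by omega)
          (by omega) (hR.trans hor.symm)).trans hor⟩
        simpa [hφ] using ht
    · have hR : o (varGadgetStart m j.val + 16) ≠ .inr (.inl (j, false)) := by simpa using hk
      obtain ⟨c, hc⟩ := H.variable_item_owner hm j (t := varGadgetStart m j.val + 16)
        (by omega) (by omega)
      have hL : o (varGadgetStart m j.val + 16) = .inr (.inl (j, true)) := by
        cases c
        · exact absurd hc hR
        · exact hc
      obtain ⟨r, hr, hor⟩ := H.exists_own (.inr (.inl (j, true)))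
      simp only [SatValues] at hr
      refine le_trans ?_ (H.envy_free _ (.inr (.inl (j, true))))
      refine le_trans ?_ (le_bundleCount
        (Ico (varGadgetStart m j.val + 13) (varGadgetStart m j.val + 17)) fun t ht => ?_)
      · rw [Nat.card_Ico]; omega
      · rw [mem_Ico] at ht
        refine ⟨Or.inr ?_, (H.contig r t (varGadgetStart m j.val + 16) (by omega) (by omega)
          (by omega) (hor.trans hL.symm)).trans hL⟩
        simpa [hφ] using ht
  -- hence each of the three bundles spans at least ten items of the Clause-Gadget
  have hspan : ∀ k : Fin 3, ∃ u v, 40 * i.val ≤ u ∧ u + 9 ≤ v ∧ v < 40 * i.val + 27 ∧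
      o u = .inl (i, k) ∧ o v = .inl (i, k) := by
    intro k
    let S : Finset ℕ := {t ∈ range (40 * m + 47 * n - 13) |
      SatValues φ (.inl (i, k)) t ∧ o t = .inl (i, k)}
    have hS : ∀ t ∈ S, (40 * i.val ≤ t ∧ t < 40 * i.val + 27 ∧
        ((t - 40 * i.val) % 9) / 3 = k.val) ∧ o t = .inl (i, k) := by
      intro t ht
      rw [mem_filter, mem_range] at ht
      have hlt := H.clause_agent_lt hn i k ht.1 ht.2.2
      refine ⟨?_, ht.2.2⟩
      rcases ht.2.1 with h | h
      · exact h
      · unfold varGadgetStart at h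
        omega
    have hcard : #(Ico (3 * k.val) (3 * k.val + 3)) < #S := by
      rw [Nat.card_Ico]
      have : 4 ≤ #S := hfour k
      omega
    obtain ⟨u, hu, v, hv, hne, heq⟩ := exists_ne_map_eq_of_card_lt_of_maps_to
      (f := fun t => (t - 40 * i.val) % 9) hcard (fun t ht => by
        have := (hS t ht).1
        simp only [coe_Ico, Set.mem_Ico]
        omega)
    obtain ⟨hu', hou⟩ := hS u hu
    obtain ⟨hv', hov⟩ := hS v hv
    rcases lt_or_gt_of_ne hne with h | h
    · exact ⟨u, v, by omega, by omega, by omega, hou, hov⟩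
    · exact ⟨v, u, by omega, by omega, by omega, hov, hou⟩
  choose u v h₁ h₂ h₃ hou hov using hspan
  have hdisj : ∀ k l, k ≠ l → v k < u l ∨ v l < u k := by
    intro k l hkl
    by_contra! h
    have hi := i.isLt
    have hk := h₃ k
    have hl := h₃ l
    apply hkl
    have hk' := H.contig (u k) (max (u k) (u l)) (v k) (by omega)
      (by have := h₂ k; omega) (by omega) ((hou k).trans (hov k).symm)
    have hl' := H.contig (u l) (max (u k) (u l)) (v l) (by omega)
      (by have := h₂ l; omega) (by omega) ((hou l).trans (hov l).symm)
    have := (hov k).symm.trans (hk'.symm.trans (hl'.trans (hov l)))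
    simpa using this
  have := hdisj 0 1 (by decide)
  have := hdisj 0 2 (by decide)
  have := hdisj 1 2 (by decide)
  have := h₁ 0
  have := h₁ 1
  have := h₁ 2
  have := h₂ 0
  have := h₂ 1
  have := h₂ 2
  have := h₃ 0
  have := h₃ 1
  have := h₃ 2
  omega

end IsEnvyFreeAlloc

/-- Where the three bundles of a Clause-Gadget are cut when the literal `κ` is true, as offsets
from the item preceding the gadget: the agent `κ` gets one block of three valued items, the
two others get two blocks each. -/
def clauseCut (κ : Fin 3) : ℕ → ℕ
  | 0 => 0
  | 1 => if κ = 0 then 4 else 13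
  | 2 => if κ = 2 then 25 else 16
  | _ => 30

/-- The bundles of the allocation built from an assignment `α` and a choice `κ` of a true
literal in each clause. -/
def SatBundle {m n : ℕ} (κ : Fin m → Fin 3) (α : Fin n → Bool) : SatAgent m n → ℕ → Prop
  | .inl (i, k), t =>
      40 * i.val + clauseCut (κ i) k.val ≤ t + 1 ∧ t + 1 < 40 * i.val + clauseCut (κ i) (k.val + 1)
  | .inr (.inl (j, true)), t =>
      varGadgetStart m j.val ≤ t + 1 ∧ t < varGadgetStart m j.val + (if α j then 15 else 19)
  | .inr (.inl (j, false)), t =>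
      varGadgetStart m j.val + (if α j then 15 else 19) ≤ t ∧ t < varGadgetStart m j.val + 36
  | .inr (.inr (g, k)), t =>
      isoGadgetStart m g.val + 2 + 2 * k.val ≤ t ∧ t < isoGadgetStart m g.val + 4 + 2 * k.val

theorem clauseCut_succ_le (κ k : Fin 3) : clauseCut κ (k.val + 1) ≤ 30 := by
  revert κ k
  decide

theorem exists_clauseCut (κ : Fin 3) {s : ℕ} (hs : s < 30) :
    ∃ k : Fin 3, clauseCut κ k.val ≤ s ∧ s < clauseCut κ (k.val + 1) := by
  rcases lt_or_ge s (clauseCut κ 1) with h | h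
  · exact ⟨0, Nat.zero_le _, h⟩
  rcases lt_or_ge s (clauseCut κ 2) with h' | h'
  · exact ⟨1, h, h'⟩
  · exact ⟨2, h', hs⟩

theorem clauseCut_mono (κ : Fin 3) : Monotone (clauseCut κ) := by
  refine monotone_nat_of_le_succ fun k => ?_
  match k with
  | 0 | 1 | 2 => revert κ; decide
  | _ + 3 => exact le_rfl

theorem clauseCut_unique {κ k l : Fin 3} {s : ℕ}
    (hk : clauseCut κ k.val ≤ s) (hk' : s < clauseCut κ (k.val + 1))
    (hl : clauseCut κ l.val ≤ s) (hl' : s < clauseCut κ (l.val + 1)) : k = l := by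
  have h₁ := (clauseCut_mono κ).reflect_lt (hk.trans_lt hl')
  have h₂ := (clauseCut_mono κ).reflect_lt (hl.trans_lt hk')
  exact Fin.ext (by omega)

section Allocation

variable {m n : ℕ} {κ : Fin m → Fin 3} {α : Fin n → Bool}

theorem SatBundle.convex {a : SatAgent m n} {x y z : ℕ} (hx : SatBundle κ α a x)
    (hz : SatBundle κ α a z) (hxy : x ≤ y) (hyz : y ≤ z) : SatBundle κ α a y := by
  rcases a with ⟨i, k⟩ | ⟨j, _ | _⟩ | ⟨g, k⟩ <;> simp only [SatBundle] at hx hz ⊢ <;> omega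

theorem exists_satBundle (κ : Fin m → Fin 3) (α : Fin n → Bool) {t : ℕ}
    (ht : t < 40 * m + 47 * n - 13) : ∃ a, SatBundle κ α a t := by
  rcases lt_or_ge (t + 1) (40 * m) with h | h
  · rcases lt_or_ge ((t + 1) % 40) 30 with hr | hr
    · obtain ⟨k, hk, hk'⟩ := exists_clauseCut (κ ⟨(t + 1) / 40, by omega⟩) hr
      refine ⟨.inl (⟨(t + 1) / 40, by omega⟩, k), ?_⟩
      simp only [SatBundle]
      omega
    · have hi : (t + 1) / 40 < m := by omega
      refine ⟨.inr (.inr (⟨(t + 1) / 40, by omega⟩, ⟨((t + 1) % 40 - 30) / 2, by omega⟩)), ?_⟩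
      simp only [SatBundle, isoGadgetStart, hi, if_true]
      omega
  · rcases lt_or_ge ((t + 1 - 40 * m) % 47) 37 with hr | hr
    · let j : Fin n := ⟨(t + 1 - 40 * m) / 47, by omega⟩
      rcases lt_or_ge t (varGadgetStart m j.val + (if α j then 15 else 19)) with h' | h'
      · refine ⟨.inr (.inl (j, true)), ?_, h'⟩
        simp only [varGadgetStart, j]
        omega
      · refine ⟨.inr (.inl (j, false)), h', ?_⟩
        simp only [varGadgetStart, j]
        omega
    · have hi : ¬ m + (t + 1 - 40 * m) / 47 < m := by omega
      refine ⟨.inr (.inr (⟨m + (t + 1 - 40 * m) / 47, by omega⟩,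
        ⟨((t + 1 - 40 * m) % 47 - 37) / 2, by omega⟩)), ?_⟩
      simp only [SatBundle, isoGadgetStart, hi, if_false]
      omega

theorem SatBundle.unique {a b : SatAgent m n} {t : ℕ} (ha : SatBundle κ α a t)
    (hb : SatBundle κ α b t) : a = b := by
  rcases a with ⟨i, k⟩ | ⟨j, c⟩ | ⟨g, k⟩ <;> rcases b with ⟨i', k'⟩ | ⟨j', c'⟩ | ⟨g', k'⟩
  · have h₁ := clauseCut_succ_le (κ i) k
    have h₂ := clauseCut_succ_le (κ i') k'
    simp only [SatBundle] at ha hb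
    obtain rfl : i = i' := Fin.ext (by omega)
    have := clauseCut_unique (κ := κ i) (k := k) (l := k') (s := t + 1 - 40 * i.val)
      (by omega) (by omega) (by omega) (by omega)
    rw [this]
  · exfalso
    have := clauseCut_succ_le (κ i) k
    cases c' <;> simp only [SatBundle, varGadgetStart] at ha hb <;> omega
  · exfalso
    have := clauseCut_succ_le (κ i) k
    simp only [SatBundle, isoGadgetStart] at ha hb
    split_ifs at hb <;> omega
  · exfalso
    have := clauseCut_succ_le (κ i') k'
    cases c <;> simp only [SatBundle, varGadgetStart] at ha hb <;> omega
  · have hj : j = j' := by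
      apply Fin.ext
      cases c <;> cases c' <;> simp only [SatBundle, varGadgetStart] at ha hb <;>
        split_ifs at ha hb <;> omega
    subst hj
    cases c <;> cases c' <;> simp only [SatBundle] at ha hb <;> first | rfl | omega
  · exfalso
    simp only [SatBundle, isoGadgetStart] at hb
    rcases lt_or_ge (g'.val - m) j.val with h | h <;> cases c <;>
      simp only [SatBundle, varGadgetStart] at ha <;> split_ifs at ha hb <;> omega
  · exfalso
    have := clauseCut_succ_le (κ i') k'
    simp only [SatBundle, isoGadgetStart] at ha hb
    split_ifs at ha <;> omega
  · exfalso
    simp only [SatBundle, isoGadgetStart] at ha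
    rcases lt_or_ge (g.val - m) j'.val with h | h <;> cases c' <;>
      simp only [SatBundle, varGadgetStart] at hb <;> split_ifs at ha hb <;> omega
  · have hg : g = g' := by
      apply Fin.ext
      simp only [SatBundle, isoGadgetStart] at ha hb
      split_ifs at ha hb <;> omega
    subst hg
    simp only [SatBundle] at ha hb
    have hk : k = k' := Fin.ext (by omega)
    rw [hk]

/-- No bundle contains more than two items of an Isolation-Gadget. -/
theorem exists_iso_window (κ : Fin m → Fin 3) (α : Fin n → Bool) (g : Fin (m + n - 1))
    (b : SatAgent m n) :
    ∃ p, ∀ t, isoGadgetStart m g.val ≤ t → t < isoGadgetStart m g.val + 13 →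
      SatBundle κ α b t → t ∈ Ico p (p + 2) := by
  simp only [mem_Ico]
  rcases b with ⟨i, k⟩ | ⟨j, _ | _⟩ | ⟨g', k⟩
  · have := clauseCut_succ_le (κ i) k
    refine ⟨if g.val = i.val then isoGadgetStart m g.val else isoGadgetStart m g.val + 12,
      fun t h₁ h₂ hb => ?_⟩
    simp only [SatBundle] at hb
    simp only [isoGadgetStart] at h₁ h₂ ⊢
    split_ifs at h₁ h₂ ⊢ <;> omega
  · refine ⟨isoGadgetStart m g.val, fun t h₁ h₂ hb => ?_⟩
    simp only [SatBundle, varGadgetStart] at hb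
    simp only [isoGadgetStart] at h₁ h₂ ⊢
    split_ifs at hb h₁ h₂ ⊢ <;> omega
  · refine ⟨isoGadgetStart m g.val + 12, fun t h₁ h₂ hb => ?_⟩
    simp only [SatBundle, varGadgetStart] at hb
    simp only [isoGadgetStart] at h₁ h₂ ⊢
    split_ifs at hb h₁ h₂ ⊢ <;> omega
  · refine ⟨isoGadgetStart m g'.val + 2 + 2 * k.val, fun t h₁ h₂ hb => ?_⟩
    simp only [SatBundle] at hb
    omega

/-- The offsets in a Clause-Gadget of the items valued by agent `k` in the bundle of agent
`l`. -/
def clauseShare (κ k l : Fin 3) : Finset ℕ :=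
  {r ∈ range 27 | r % 9 / 3 = k.val ∧ clauseCut κ l.val ≤ r + 1 ∧
    r + 1 < clauseCut κ (l.val + 1)}

theorem card_clauseShare_le (κ k l : Fin 3) : #(clauseShare κ k l) ≤ #(clauseShare κ k k) := by
  revert κ k l
  decide

theorem three_le_card_clauseShare (κ k : Fin 3) : 3 ≤ #(clauseShare κ k k) := by
  revert κ k
  decide

theorem four_le_card_clauseShare {κ k : Fin 3} (h : k ≠ κ) : 4 ≤ #(clauseShare κ k k) := by
  revert κ k
  decide

variable {φ : Fin m → Fin 3 → Fin n × Bool} {o : ℕ → SatAgent m n}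

theorem card_clauseShare_le_bundleCount
    (ho : ∀ t < 40 * m + 47 * n - 13, ∀ a, o t = a ↔ SatBundle κ α a t) (i : Fin m)
    (k : Fin 3) :
    #(clauseShare (κ i) k k) ≤ bundleCount φ o (.inl (i, k)) (.inl (i, k)) := by
  rw [← card_image_of_injective _ (add_right_injective (40 * i.val))]
  refine le_bundleCount _ fun t ht => ?_
  obtain ⟨r, hr, rfl⟩ := mem_image.1 ht
  simp only [clauseShare, mem_filter, mem_range] at hr
  have hv : SatValues φ (.inl (i, k)) (40 * i.val + r) := by
    refine Or.inl ?_
    rw [Nat.add_sub_cancel_left]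
    omega
  refine ⟨hv, (ho _ hv.lt _).2 ?_⟩
  simp only [SatBundle]
  omega

theorem clause_envy_free
    (ho : ∀ t < 40 * m + 47 * n - 13, ∀ a, o t = a ↔ SatBundle κ α a t)
    (hκ : ∀ i, α (φ i (κ i)).1 = (φ i (κ i)).2) (i : Fin m) (k : Fin 3)
    (b : SatAgent m n) :
    bundleCount φ o (.inl (i, k)) b ≤ bundleCount φ o (.inl (i, k)) (.inl (i, k)) := by
  refine le_trans ?_ (card_clauseShare_le_bundleCount ho i k)
  rcases b with ⟨i', l⟩ | ⟨j, c⟩ | ⟨g, l⟩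
  · refine le_trans ?_ (card_clauseShare_le (κ i) k l)
    rw [← card_image_of_injective _ (add_right_injective (40 * i.val))]
    refine bundleCount_le _ fun t htN hv hot => ?_
    have hb := (ho t htN _).1 hot
    have := clauseCut_succ_le (κ i') l
    simp only [SatBundle] at hb
    rcases hv with hv | hv
    · obtain rfl : i' = i := Fin.ext (by omega)
      refine mem_image.2 ⟨t - 40 * i'.val, ?_, by omega⟩
      simp only [clauseShare, mem_filter, mem_range]
      omega
    · unfold varGadgetStart at hv
      omega
  · by_cases hk : k = κ i
    · refine le_trans ?_ (three_le_card_clauseShare (κ i) k)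
      have hα := hκ i
      rw [← hk] at hα
      let p := varGadgetStart m (φ i k).1.val + (if (φ i k).2 then 13 else 17) +
        (if c then 0 else 2)
      refine (bundleCount_le (Ico p (p + 2)) fun t htN hv hot => ?_).trans
        (by rw [Nat.card_Ico]; omega)
      have hb := (ho t htN _).1 hot
      have hj : j = (φ i k).1 := by
        apply Fin.ext
        cases c <;> simp only [SatBundle, SatValues, varGadgetStart] at hb hv <;>
          split_ifs at hb hv <;> omega
      subst hj
      rw [mem_Ico]
      simp only [p]
      cases c <;> simp only [SatBundle, SatValues, varGadgetStart, hα] at hb hv ⊢ <;>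
        split_ifs at hb hv ⊢ <;> first | omega | simp_all
    · refine le_trans ?_ (four_le_card_clauseShare hk)
      let p := varGadgetStart m (φ i k).1.val + (if (φ i k).2 then 13 else 17)
      refine (bundleCount_le (Ico p (p + 4)) fun t htN hv hot => ?_).trans
        (by rw [Nat.card_Ico]; omega)
      have hb := (ho t htN _).1 hot
      rw [mem_Ico]
      simp only [p]
      cases c <;> simp only [SatBundle, SatValues, varGadgetStart] at hb hv ⊢ <;>
        split_ifs at hb hv ⊢ <;> omega
  · refine (bundleCount_le ∅ fun t htN hv hot => ?_).trans (Nat.zero_le _)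
    exfalso
    have hb := (ho t htN _).1 hot
    have hl := l.isLt
    simp only [SatBundle] at hb
    obtain ⟨_, h⟩ := hv.eq_iso g (by omega) (by omega)
    simp at h

theorem isEnvyFreeAlloc_of_satBundle
    (ho : ∀ t < 40 * m + 47 * n - 13, ∀ a, o t = a ↔ SatBundle κ α a t)
    (hκ : ∀ i, α (φ i (κ i)).1 = (φ i (κ i)).2) : IsEnvyFreeAlloc φ o where
  contig x y z hxy hyz hz h :=
    (ho y (by omega) _).2
      (((ho x (by omega) _).1 h).convex ((ho z hz _).1 rfl) hxy hyz)
  envy_free a b := by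
    classical
    have hall : (∀ t, SatValues φ a t → SatBundle κ α a t) →
        bundleCount φ o a b ≤ bundleCount φ o a a := by
      intro h
      refine bundleCount_le _ fun t htN hv _ => ?_
      rw [mem_filter, mem_range]
      exact ⟨htN, hv, (ho t htN _).2 (h t hv)⟩
    rcases a with ⟨i, k⟩ | ⟨j, _ | _⟩ | ⟨g, k⟩
    · exact clause_envy_free ho hκ i k b
    · refine hall fun t hv => ?_
      simp only [SatValues, SatBundle] at hv ⊢
      split_ifs <;> omega
    · refine hall fun t hv => ?_
      simp only [SatValues, SatBundle] at hv ⊢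
      split_ifs <;> omega
    · obtain ⟨p, hp⟩ := exists_iso_window κ α g b
      have hle := bundleCount_le (φ := φ) (o := o) (a := .inr (.inr (g, k))) (b := b)
        (Ico p (p + 2)) fun t htN hv hot => hp t hv.1 hv.2 ((ho t htN _).1 hot)
      have hge := le_bundleCount (φ := φ) (o := o) (a := .inr (.inr (g, k)))
        (b := .inr (.inr (g, k)))
        (Ico (isoGadgetStart m g.val + 2 + 2 * k.val) (isoGadgetStart m g.val + 4 + 2 * k.val))
        fun t ht => by
          rw [mem_Ico] at ht
          have hv : SatValues φ (.inr (.inr (g, k))) t := by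
            simp only [SatValues]
            omega
          exact ⟨hv, (ho t hv.lt _).2 ht⟩
      rw [Nat.card_Ico] at hle hge
      omega

end Allocation

/-- For every `0 ≤ ε < 1/13`, the discrete instance constructed from
the 3-SAT formula `φ` admits a contiguous `ε`-envy-free allocation if and only if `φ`
is satisfiable. -/
theorem approx_envy_free_iff_satisfiable
    (m n : ℕ) (hm : 0 < m) (hn : 0 < n)
    (φ : Fin m → Fin 3 → Fin n × Bool)
    (ε : ℝ) (hε0 : 0 ≤ ε) (hε : ε < 1 / 13) :
    (∃ owner : Fin (40 * m + 47 * n - 13) →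
        ((Fin m × Fin 3) ⊕ (Fin n × Bool) ⊕ (Fin (m + n - 1) × Fin 5)),
      ContigAlloc owner ∧
      ∀ a b, discVal (satV m n φ) owner a a ≥ discVal (satV m n φ) owner a b - ε) ↔
    SatFormula m n φ := by
  constructor
  · rintro ⟨owner, hcontig, hef⟩
    let o : ℕ → SatAgent m n := fun t =>
      if h : t < 40 * m + 47 * n - 13 then owner ⟨t, h⟩ else .inl (⟨0, hm⟩, 0)
    have ho : ∀ t, owner t = o t.val := fun t => by simp [o]
    refine IsEnvyFreeAlloc.satFormula (o := o) ⟨fun x y z hxy hyz hz h => ?_, fun a b =>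
      bundleCount_le_of_discVal φ hε ho (hef a b)⟩ hm hn
    have hx : x < 40 * m + 47 * n - 13 := by omega
    have hy : y < 40 * m + 47 * n - 13 := by omega
    have := hcontig (o z) ⟨x, hx⟩ ⟨y, hy⟩ ⟨z, hz⟩ hxy hyz ((ho _).trans h) (ho _)
    exact (ho ⟨y, hy⟩).symm.trans this
  · rintro ⟨α, hα⟩
    choose κ hκ using hα
    have hex : ∀ t, ∃ a, t < 40 * m + 47 * n - 13 → SatBundle κ α a t := by
      intro t
      by_cases ht : t < 40 * m + 47 * n - 13
      · obtain ⟨a, ha⟩ := exists_satBundle κ α ht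
        exact ⟨a, fun _ => ha⟩
      · exact ⟨.inl (⟨0, hm⟩, 0), fun h => absurd h ht⟩
    choose o hmem using hex
    have H : IsEnvyFreeAlloc φ o := isEnvyFreeAlloc_of_satBundle
      (fun t ht a => ⟨fun h => h ▸ hmem t ht, fun h => (hmem t ht).unique h⟩) hκ
    refine ⟨fun t => o t.val, fun a x y z hxy hyz hx hz => ?_, fun a b => ?_⟩
    · exact (H.contig x y z hxy hyz z.isLt (hx.trans hz.symm)).trans hz
    · rw [discVal_satV_eq φ _ o (fun _ => rfl), discVal_satV_eq φ _ o (fun _ => rfl)]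
      have h : (bundleCount φ o a b : ℝ) ≤ bundleCount φ o a a := by
        exact_mod_cast H.envy_free a b
      have := div_le_div_of_nonneg_right h (Nat.cast_nonneg (α := ℝ) #(satV m n φ a))
      linarith
end

section
/- Let φ be a 3-SAT formula with m clauses and n variables, let R be the discrete instance constructed from φ as described, and let R' be obtained from R by appending on the right 6m+4n+14 new items and introducing 3m+2n+7 new agents, each new agent valuing exactly the 6m+4n+14 new items, where in addition every clause agent C_i^k also values all the new items except the rightmost six, and every agent X_j and X̄_j also values all the new items except the rightmost four (so in R' there are 6m+4n+7 agents and every agent values exactly 6m+4n+14 items). Then the following are equivalent: (i) φ is satisfiable; (ii) R' admits a contiguous envy-free allocation; (iii) R' admits a contiguous proportional allocation; (iv) R' admits a contiguous equitable allocation. -/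
/-- Agents of the discrete instance `R` built from `φ`: clause agents `C_i^k = Sum.inl (i,k)`
and variable agents `X_j = Sum.inr (j, true)`, `X̄_j = Sum.inr (j, false)`. -/
abbrev RAgent (m n : ℕ) := (Fin m × Fin 3) ⊕ (Fin n × Bool)

/-- Number of clause-literal occurrences of the positive literal `x_j` in `φ`. -/
def posOcc (m n : ℕ) (φ : Fin m → Fin 3 → Fin n × Bool) (j : Fin n) : ℕ :=
  (Finset.univ.filter fun p : Fin m × Fin 3 => φ p.1 p.2 = (j, true)).card

/-- Number of clause-literal occurrences of the variable `x_j` (positive or negative). -/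
def occCount (m n : ℕ) (φ : Fin m → Fin 3 → Fin n × Bool) (j : Fin n) : ℕ :=
  (Finset.univ.filter fun p : Fin m × Fin 3 => (φ p.1 p.2).1 = j).card

/-- Item index at which the Variable-Gadget of variable `x_j` starts (the Variable-Gadget
of `x_j` has `5 + 2 * occCount` items and the gadgets follow the `4m` clause items). -/
def varStartR (m n : ℕ) (φ : Fin m → Fin 3 → Fin n × Bool) (j : Fin n) : ℕ :=
  4 * m + ∑ j' ∈ Finset.univ.filter (fun j' : Fin n => j' < j), (5 + 2 * occCount m n φ j')

/-- Rank (from the left) of the clause-literal occurrence `p` among the occurrences of the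
same literal, ordering occurrences by clause index and then literal position. -/
def litRank (m n : ℕ) (φ : Fin m → Fin 3 → Fin n × Bool) (p : Fin m × Fin 3) : ℕ :=
  (Finset.univ.filter fun p' : Fin m × Fin 3 =>
    φ p'.1 p'.2 = φ p.1 p.2 ∧ 3 * p'.1.val + p'.2.val < 3 * p.1.val + p.2.val).card

/-- Index of the first of the two items valued only by the clause agent `p` inside the
Variable-Gadget of its literal's variable. -/
def pairStart (m n : ℕ) (φ : Fin m → Fin 3 → Fin n × Bool) (p : Fin m × Fin 3) : ℕ :=
  if (φ p.1 p.2).2 then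
    varStartR m n φ (φ p.1 p.2).1 + 3 + 2 * litRank m n φ p
  else
    varStartR m n φ (φ p.1 p.2).1 + 4 + 2 * posOcc m n φ (φ p.1 p.2).1 + 2 * litRank m n φ p

/-- Valued sets of the instance `R` built from `φ` (with `4m` clause items followed by the
Variable-Gadgets, `10m + 5n` items in total): clause agent `C_i^k` values the 4 items of the
Clause-Gadget of `C_i` and its 2 items inside the Variable-Gadget of its literal's variable;
`X_j` values the items at offsets `0, 1, 2, 3 + 2·posOcc` of the Variable-Gadget of `x_j`,
and `X̄_j` those at offsets `0, 1, 3 + 2·posOcc, 4 + 2·occCount`. -/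
def RV (m n : ℕ) (φ : Fin m → Fin 3 → Fin n × Bool) :
    RAgent m n → Finset (Fin (10 * m + 5 * n))
  | .inl p => Finset.univ.filter fun t =>
      (4 * p.1.val ≤ t.val ∧ t.val < 4 * p.1.val + 4) ∨
      t.val = pairStart m n φ p ∨ t.val = pairStart m n φ p + 1
  | .inr (j, true) => Finset.univ.filter fun t =>
      t.val = varStartR m n φ j ∨ t.val = varStartR m n φ j + 1 ∨
      t.val = varStartR m n φ j + 2 ∨
      t.val = varStartR m n φ j + 3 + 2 * posOcc m n φ j
  | .inr (j, false) => Finset.univ.filter fun t =>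
      t.val = varStartR m n φ j ∨ t.val = varStartR m n φ j + 1 ∨
      t.val = varStartR m n φ j + 3 + 2 * posOcc m n φ j ∨
      t.val = varStartR m n φ j + 4 + 2 * occCount m n φ j

/-- Agents of the extended instance `R'`: the agents of `R` together with the
`3m + 2n + 7` agents of the Special-Gadget. -/
abbrev RAgent' (m n : ℕ) := RAgent m n ⊕ Fin (3 * m + 2 * n + 7)

/-- Valued sets of the extended instance `R'`: `6m + 4n + 14` new items are appended on
the right of the `10m + 5n` items of `R`; every Special-Gadget agent values exactly the
new items, every clause agent additionally values all new items except the rightmost six,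
and every variable agent additionally values all new items except the rightmost four. -/
def RV' (m n : ℕ) (φ : Fin m → Fin 3 → Fin n × Bool) :
    RAgent' m n → Finset (Fin (10 * m + 5 * n + (6 * m + 4 * n + 14)))
  | .inl (.inl p) => Finset.univ.filter fun t =>
      (4 * p.1.val ≤ t.val ∧ t.val < 4 * p.1.val + 4) ∨
      t.val = pairStart m n φ p ∨ t.val = pairStart m n φ p + 1 ∨
      (10 * m + 5 * n ≤ t.val ∧ t.val < 10 * m + 5 * n + (6 * m + 4 * n + 8))
  | .inl (.inr (j, true)) => Finset.univ.filter fun t =>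
      t.val = varStartR m n φ j ∨ t.val = varStartR m n φ j + 1 ∨
      t.val = varStartR m n φ j + 2 ∨
      t.val = varStartR m n φ j + 3 + 2 * posOcc m n φ j ∨
      (10 * m + 5 * n ≤ t.val ∧ t.val < 10 * m + 5 * n + (6 * m + 4 * n + 10))
  | .inl (.inr (j, false)) => Finset.univ.filter fun t =>
      t.val = varStartR m n φ j ∨ t.val = varStartR m n φ j + 1 ∨
      t.val = varStartR m n φ j + 3 + 2 * posOcc m n φ j ∨
      t.val = varStartR m n φ j + 4 + 2 * occCount m n φ j ∨
      (10 * m + 5 * n ≤ t.val ∧ t.val < 10 * m + 5 * n + (6 * m + 4 * n + 10))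
  | .inr _ => Finset.univ.filter fun t => 10 * m + 5 * n ≤ t.val

section Gadgets

variable {m n : ℕ} (φ : Fin m → Fin 3 → Fin n × Bool)

lemma sum_occCount : ∑ j, occCount m n φ j = 3 * m := by
  have h := Finset.card_eq_sum_card_fiberwise (s := (Finset.univ : Finset (Fin m × Fin 3)))
    (t := (Finset.univ : Finset (Fin n))) (f := fun p => (φ p.1 p.2).1) (by simp)
  simp only [Finset.card_univ, Fintype.card_prod, Fintype.card_fin] at h
  simp only [occCount]
  omega

lemma occCount_eq (j : Fin n) :
    occCount m n φ j = posOcc m n φ j +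
      (Finset.univ.filter fun p : Fin m × Fin 3 => φ p.1 p.2 = (j, false)).card := by
  unfold occCount posOcc
  rw [← Finset.card_union_of_disjoint]
  · congr 1
    ext p
    rcases h : φ p.1 p.2 with ⟨j', _ | _⟩ <;> simp [h]
  · rw [Finset.disjoint_left]
    intro p hp hp'
    simp_all

lemma litRank_lt (p : Fin m × Fin 3) :
    litRank m n φ p <
      (Finset.univ.filter fun p' : Fin m × Fin 3 => φ p'.1 p'.2 = φ p.1 p.2).card := by
  apply Finset.card_lt_card
  rw [Finset.ssubset_iff_of_subset]
  · exact ⟨p, by simp, by simp⟩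
  · intro p' hp'
    simp_all

lemma litRank_lt_litRank {p p' : Fin m × Fin 3} (hφ : φ p.1 p.2 = φ p'.1 p'.2)
    (h : 3 * p.1.val + p.2.val < 3 * p'.1.val + p'.2.val) :
    litRank m n φ p < litRank m n φ p' := by
  apply Finset.card_lt_card
  rw [Finset.ssubset_iff_of_subset]
  · exact ⟨p, by simp [hφ, h], by simp⟩
  · intro q hq
    simp only [Finset.mem_filter, Finset.mem_univ, true_and] at hq ⊢
    exact ⟨hq.1.trans hφ, hq.2.trans h⟩

lemma litRank_ne {p p' : Fin m × Fin 3} (hφ : φ p.1 p.2 = φ p'.1 p'.2) (h : p ≠ p') :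
    litRank m n φ p ≠ litRank m n φ p' := by
  rcases lt_trichotomy (3 * p.1.val + p.2.val) (3 * p'.1.val + p'.2.val) with hlt | heq | hlt
  · exact (litRank_lt_litRank φ hφ hlt).ne
  · exact absurd (Prod.ext (Fin.ext (by omega)) (Fin.ext (by omega))) h
  · exact (litRank_lt_litRank φ hφ.symm hlt).ne'

lemma le_varStartR (j : Fin n) : 4 * m ≤ varStartR m n φ j :=
  Nat.le_add_right _ _

lemma varStartR_add_le {j j' : Fin n} (h : j < j') :
    varStartR m n φ j + 5 + 2 * occCount m n φ j ≤ varStartR m n φ j' := by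
  have hs : ∑ i ∈ insert j (Finset.univ.filter (fun i : Fin n => i < j)),
      (5 + 2 * occCount m n φ i) ≤
      ∑ i ∈ Finset.univ.filter (fun i : Fin n => i < j'), (5 + 2 * occCount m n φ i) := by
    apply Finset.sum_le_sum_of_subset
    intro i hi
    simp only [Finset.mem_insert, Finset.mem_filter, Finset.mem_univ, true_and] at hi ⊢
    rcases hi with rfl | hi
    · exact h
    · exact hi.trans h
  rw [Finset.sum_insert (by simp)] at hs
  unfold varStartR
  omega

lemma varStartR_add_le_total (j : Fin n) :
    varStartR m n φ j + 5 + 2 * occCount m n φ j ≤ 10 * m + 5 * n := by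
  have hs : ∑ i ∈ insert j (Finset.univ.filter (fun i : Fin n => i < j)),
      (5 + 2 * occCount m n φ i) ≤ ∑ i, (5 + 2 * occCount m n φ i) :=
    Finset.sum_le_sum_of_subset (Finset.subset_univ _)
  have htotal : ∑ i, (5 + 2 * occCount m n φ i) = n * 5 + 2 * (3 * m) := by
    rw [Finset.sum_add_distrib, ← Finset.mul_sum, sum_occCount]
    simp
  rw [Finset.sum_insert (by simp), htotal] at hs
  unfold varStartR
  omega

lemma posOcc_le_occCount (j : Fin n) : posOcc m n φ j ≤ occCount m n φ j := by
  rw [occCount_eq]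
  omega

lemma pairStart_bounds_pos {p : Fin m × Fin 3} {j : Fin n} (h : φ p.1 p.2 = (j, true)) :
    varStartR m n φ j + 3 ≤ pairStart m n φ p ∧
      pairStart m n φ p + 2 ≤ varStartR m n φ j + 3 + 2 * posOcc m n φ j := by
  have hr := litRank_lt φ p
  simp only [h] at hr
  simp only [pairStart, h, if_true, posOcc]
  omega

lemma pairStart_bounds_neg {p : Fin m × Fin 3} {j : Fin n} (h : φ p.1 p.2 = (j, false)) :
    varStartR m n φ j + 4 + 2 * posOcc m n φ j ≤ pairStart m n φ p ∧
      pairStart m n φ p + 2 ≤ varStartR m n φ j + 4 + 2 * occCount m n φ j := by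
  have hr := litRank_lt φ p
  simp only [h] at hr
  rw [occCount_eq]
  simp only [pairStart, h, Bool.false_eq_true, if_false]
  omega

lemma pairStart_bounds (p : Fin m × Fin 3) :
    varStartR m n φ (φ p.1 p.2).1 + 3 ≤ pairStart m n φ p ∧
      pairStart m n φ p + 2 ≤
        varStartR m n φ (φ p.1 p.2).1 + 4 + 2 * occCount m n φ (φ p.1 p.2).1 := by
  rcases h : φ p.1 p.2 with ⟨j, _ | _⟩
  · have := pairStart_bounds_neg φ h
    dsimp only
    omega
  · have := pairStart_bounds_pos φ h
    have := posOcc_le_occCount φ j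
    dsimp only
    omega

lemma pairStart_disjoint {p p' : Fin m × Fin 3} (h : p ≠ p') :
    pairStart m n φ p + 1 < pairStart m n φ p' ∨ pairStart m n φ p' + 1 < pairStart m n φ p := by
  by_cases hφ : φ p.1 p.2 = φ p'.1 p'.2
  · have hr := litRank_ne φ hφ h
    simp only [pairStart, hφ]
    split_ifs <;> omega
  · rcases lt_trichotomy (φ p.1 p.2).1 (φ p'.1 p'.2).1 with hlt | heq | hlt
    · have := varStartR_add_le φ hlt
      have := pairStart_bounds φ p
      have := pairStart_bounds φ p'
      omega
    · rcases h₁ : φ p.1 p.2 with ⟨j, b⟩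
      rcases h₂ : φ p'.1 p'.2 with ⟨j', b'⟩
      obtain rfl : j = j' := by simpa [h₁, h₂] using heq
      cases b <;> cases b'
      · exact absurd (h₁.trans h₂.symm) hφ
      · have := pairStart_bounds_neg φ h₁
        have := pairStart_bounds_pos φ h₂
        omega
      · have := pairStart_bounds_pos φ h₁
        have := pairStart_bounds_neg φ h₂
        omega
      · exact absurd (h₁.trans h₂.symm) hφ
    · have := varStartR_add_le φ hlt
      have := pairStart_bounds φ p
      have := pairStart_bounds φ p'
      omega

lemma card_filter_fin_eq {M : ℕ} (P : ℕ → Prop) [DecidablePred P] (S : Finset ℕ)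
    (h : ∀ t, t ∈ S ↔ t < M ∧ P t) :
    (Finset.univ.filter fun t : Fin M => P t.val).card = S.card := by
  rw [← Finset.card_map Fin.valEmbedding]
  congr 1
  ext t
  simp only [Finset.mem_map, Finset.mem_filter, Finset.mem_univ, true_and, h,
    Fin.valEmbedding_apply]
  constructor
  · rintro ⟨s, hs, rfl⟩
    exact ⟨s.2, hs⟩
  · rintro ⟨ht, hP⟩
    exact ⟨⟨t, ht⟩, hP, rfl⟩

/-- The size of a union of three consecutive disjoint integer intervals. -/
lemma card_Ico_union₃ {a b c d e f : ℕ} (h₁ : b ≤ c) (h₂ : d ≤ e) (h₃ : c ≤ d) :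
    (Finset.Ico a b ∪ (Finset.Ico c d ∪ Finset.Ico e f)).card =
      (b - a) + ((d - c) + (f - e)) := by
  rw [Finset.card_union_of_disjoint, Finset.card_union_of_disjoint]
  · simp
  · rw [Finset.disjoint_left]
    intro t ht ht'
    simp only [Finset.mem_Ico] at ht ht'
    omega
  · rw [Finset.disjoint_left]
    intro t ht ht'
    simp only [Finset.mem_union, Finset.mem_Ico] at ht ht'
    omega

lemma card_Ico_union₄ {a b c d e f g h : ℕ} (h₁ : b ≤ c) (h₂ : c ≤ d) (h₃ : d ≤ e)
    (h₄ : e ≤ f) (h₅ : f ≤ g) :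
    (Finset.Ico a b ∪ (Finset.Ico c d ∪ (Finset.Ico e f ∪ Finset.Ico g h))).card =
      (b - a) + ((d - c) + ((f - e) + (h - g))) := by
  rw [Finset.card_union_of_disjoint, card_Ico_union₃ h₃ h₅ h₄]
  · simp
  · rw [Finset.disjoint_left]
    intro t ht ht'
    simp only [Finset.mem_union, Finset.mem_Ico] at ht ht'
    omega

lemma card_RV' (a : RAgent' m n) : (RV' m n φ a).card = 6 * m + 4 * n + 14 := by
  rcases a with (p | ⟨j, _ | _⟩) | s
  · have h₁ := pairStart_bounds φ p
    have h₂ := le_varStartR φ (φ p.1 p.2).1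
    have h₃ := varStartR_add_le_total φ (φ p.1 p.2).1
    have h₄ := p.1.isLt
    simp only [RV']
    rw [card_filter_fin_eq (fun t => (4 * p.1.val ≤ t ∧ t < 4 * p.1.val + 4) ∨
      t = pairStart m n φ p ∨ t = pairStart m n φ p + 1 ∨
      (10 * m + 5 * n ≤ t ∧ t < 10 * m + 5 * n + (6 * m + 4 * n + 8)))
      (Finset.Ico (4 * p.1.val) (4 * p.1.val + 4) ∪
        (Finset.Ico (pairStart m n φ p) (pairStart m n φ p + 2) ∪
          Finset.Ico (10 * m + 5 * n) (10 * m + 5 * n + (6 * m + 4 * n + 8)))),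
      card_Ico_union₃ (by omega) (by omega) (by omega)]
    · omega
    · intro t
      simp only [Finset.mem_union, Finset.mem_Ico]
      omega
  · have h₁ := posOcc_le_occCount φ j
    have h₃ := varStartR_add_le_total φ j
    simp only [RV']
    rw [card_filter_fin_eq (fun t => t = varStartR m n φ j ∨ t = varStartR m n φ j + 1 ∨
      t = varStartR m n φ j + 3 + 2 * posOcc m n φ j ∨
      t = varStartR m n φ j + 4 + 2 * occCount m n φ j ∨
      (10 * m + 5 * n ≤ t ∧ t < 10 * m + 5 * n + (6 * m + 4 * n + 10)))
      (Finset.Ico (varStartR m n φ j) (varStartR m n φ j + 2) ∪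
        (Finset.Ico (varStartR m n φ j + 3 + 2 * posOcc m n φ j)
            (varStartR m n φ j + 4 + 2 * posOcc m n φ j) ∪
          (Finset.Ico (varStartR m n φ j + 4 + 2 * occCount m n φ j)
            (varStartR m n φ j + 5 + 2 * occCount m n φ j) ∪
          Finset.Ico (10 * m + 5 * n) (10 * m + 5 * n + (6 * m + 4 * n + 10))))),
      card_Ico_union₄ (by omega) (by omega) (by omega) (by omega) (by omega)]
    · omega
    · intro t
      simp only [Finset.mem_union, Finset.mem_Ico]
      omega
  · have h₁ := posOcc_le_occCount φ j
    have h₃ := varStartR_add_le_total φ j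
    simp only [RV']
    rw [card_filter_fin_eq (fun t => t = varStartR m n φ j ∨ t = varStartR m n φ j + 1 ∨
      t = varStartR m n φ j + 2 ∨
      t = varStartR m n φ j + 3 + 2 * posOcc m n φ j ∨
      (10 * m + 5 * n ≤ t ∧ t < 10 * m + 5 * n + (6 * m + 4 * n + 10)))
      (Finset.Ico (varStartR m n φ j) (varStartR m n φ j + 3) ∪
        (Finset.Ico (varStartR m n φ j + 3 + 2 * posOcc m n φ j)
            (varStartR m n φ j + 4 + 2 * posOcc m n φ j) ∪
          Finset.Ico (10 * m + 5 * n) (10 * m + 5 * n + (6 * m + 4 * n + 10)))),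
      card_Ico_union₃ (by omega) (by omega) (by omega)]
    · omega
    · intro t
      simp only [Finset.mem_union, Finset.mem_Ico]
      omega
  · simp only [RV']
    rw [card_filter_fin_eq (fun t => 10 * m + 5 * n ≤ t)
      (Finset.Ico (10 * m + 5 * n) (10 * m + 5 * n + (6 * m + 4 * n + 14)))]
    · simp
    · intro t
      simp only [Finset.mem_Ico]
      omega

end Gadgets

section Allocation

/-- Cutting the line at the positions `st a`, and giving to `a` the items from `st a` up to the
next cut, yields a contiguous allocation. It gives every agent exactly two items she values, and
no bundle contains more than two of them, provided that any three items valued by one agent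
are separated by a cut and that two of her items follow her cut before the next one. -/
lemma exists_contigAlloc_of_starts {M : ℕ} {A : Type*} [Finite A] [DecidableEq A]
    (V : A → Finset (Fin M))
    (st : A → ℕ) (h₀ : ∃ a, st a = 0)
    (hsep : ∀ a, ∀ t₁ ∈ V a, ∀ t₂ ∈ V a, ∀ t₃ ∈ V a, t₁ < t₂ → t₂ < t₃ →
      ∃ c, t₁.val < st c ∧ st c ≤ t₃.val)
    (hcore : ∀ a, ∃ s ∈ V a, ∃ e ∈ V a, s.val = st a ∧ s < e ∧
      ∀ c, c ≠ a → st c < s.val ∨ e.val < st c) :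
    ∃ owner : Fin M → A, ContigAlloc owner ∧
      ∀ a, ((V a).filter fun t => owner t = a).card = 2 ∧
        ∀ b, ((V a).filter fun t => owner t = b).card ≤ 2 := by
  have := Fintype.ofFinite A
  have hmax : ∀ t : Fin M, ∃ a, st a ≤ t.val ∧ ∀ c, st c ≤ t.val → st c ≤ st a := by
    intro t
    obtain ⟨a₀, ha₀⟩ := h₀
    obtain ⟨a, ha, hmax⟩ := (Finset.univ.filter fun a => st a ≤ t.val).exists_max_image st
      ⟨a₀, by simp [ha₀]⟩
    simp only [Finset.mem_filter, Finset.mem_univ, true_and] at ha hmax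
    exact ⟨a, ha, hmax⟩
  choose owner hle howner using hmax
  have hinj : ∀ a b, st a = st b → a = b := by
    intro a b hab
    by_contra hne
    obtain ⟨s, _, e, _, hs, hse, h⟩ := hcore a
    have := h b (Ne.symm hne)
    have : s.val < e.val := hse
    omega
  have hgap : ∀ t₁ t₃ : Fin M, owner t₁ = owner t₃ → ∀ c, t₁.val < st c → ¬ st c ≤ t₃.val := by
    intro t₁ t₃ h c h₁ h₃
    have h₄ := howner t₃ c h₃
    have h₅ := hle t₁
    rw [h] at h₅
    omega
  have hupper : ∀ a b, ((V a).filter fun t => owner t = b).card ≤ 2 := by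
    intro a b
    by_contra! hcard
    obtain ⟨f, hf⟩ : ∃ f : Fin 3 ↪o Fin M, ∀ i, f i ∈ (V a).filter fun t => owner t = b :=
      ⟨Finset.orderEmbOfCardLe _ hcard, fun i => Finset.orderEmbOfCardLe_mem _ hcard i⟩
    simp only [Finset.mem_filter] at hf
    obtain ⟨c, hc₁, hc₃⟩ := hsep a _ (hf 0).1 _ (hf 1).1 _ (hf 2).1
      (f.strictMono (by decide)) (f.strictMono (by decide))
    exact hgap _ _ ((hf 0).2.trans (hf 2).2.symm) c hc₁ hc₃
  refine ⟨owner, ?_, fun a => ⟨le_antisymm (hupper a a) ?_, hupper a⟩⟩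
  · intro a t₁ t₂ t₃ h₁₂ h₂₃ h₁ h₃
    have h₁₂' : t₁.val ≤ t₂.val := h₁₂
    have h₂₃' : t₂.val ≤ t₃.val := h₂₃
    apply hinj
    have l₁ := hle t₁
    have l₂ := hle t₂
    have m₂ := howner t₂ a (by rw [h₁] at l₁; omega)
    have m₃ := howner t₃ (owner t₂) (by omega)
    rw [h₃] at m₃
    omega
  · obtain ⟨s, hs, e, he, hst, hse, h⟩ := hcore a
    have hse' : s.val < e.val := hse
    have hown : ∀ t : Fin M, s ≤ t → t ≤ e → owner t = a := by
      intro t ht₁ ht₂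
      have ht₁' : s.val ≤ t.val := ht₁
      have ht₂' : t.val ≤ e.val := ht₂
      by_contra hne
      have h₁ := hle t
      have h₂ := howner t a (by omega)
      have h₃ := h _ hne
      omega
    have : ({s, e} : Finset (Fin M)) ⊆ (V a).filter fun t => owner t = a := by
      intro t ht
      simp only [Finset.mem_insert, Finset.mem_singleton] at ht
      rw [Finset.mem_filter]
      rcases ht with rfl | rfl
      · exact ⟨hs, hown _ le_rfl hse.le⟩
      · exact ⟨he, hown _ hse.le le_rfl⟩
    simpa [Finset.card_pair hse.ne] using Finset.card_le_card this

variable {m n : ℕ} (φ : Fin m → Fin 3 → Fin n × Bool) (x : Fin n → Bool) (pick : Fin m → Fin 3)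

/-- Position, inside a Clause-Gadget whose `k₀`-th agent is served elsewhere, of the first item
given to the `k`-th agent. -/
def clauseOffset (k₀ k : Fin 3) : ℕ :=
  if k = 0 ∨ (k = 1 ∧ k₀ = 0) then 0 else 2

lemma clauseOffset_eq (k₀ k : Fin 3) : clauseOffset k₀ k = 0 ∨ clauseOffset k₀ k = 2 := by
  unfold clauseOffset
  split_ifs <;> simp

lemma clauseOffset_ne {k₀ k k' : Fin 3} (h : k ≠ k₀) (h' : k' ≠ k₀) (hk : k ≠ k') :
    clauseOffset k₀ k ≠ clauseOffset k₀ k' := by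
  revert k₀ k k'
  decide

lemma exists_clauseOffset_zero (k₀ : Fin 3) : ∃ k, k ≠ k₀ ∧ clauseOffset k₀ k = 0 := by
  revert k₀
  decide

lemma exists_clauseOffset_two (k₀ : Fin 3) : ∃ k, k ≠ k₀ ∧ clauseOffset k₀ k = 2 := by
  revert k₀
  decide

/-- First item of the bundle of an agent in the allocation built from the assignment `x` and the
choice `pick` of a true literal in each clause. -/
def bundleStart : RAgent' m n → ℕ
  | .inl (.inl p) =>
      if p.2 = pick p.1 then pairStart m n φ p else 4 * p.1.val + clauseOffset (pick p.1) p.2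
  | .inl (.inr (j, true)) => if x j then varStartR m n φ j + 1 else varStartR m n φ j + 2
  | .inl (.inr (j, false)) =>
      if x j then varStartR m n φ j + 3 + 2 * posOcc m n φ j else varStartR m n φ j
  | .inr s => 10 * m + 5 * n + 2 * s.val

/-- Last item of the bundle of an agent that this agent values, in the same allocation. -/
def bundleEnd : RAgent' m n → ℕ
  | .inl (.inl p) =>
      if p.2 = pick p.1 then pairStart m n φ p + 1
      else 4 * p.1.val + clauseOffset (pick p.1) p.2 + 1
  | .inl (.inr (j, true)) =>
      if x j then varStartR m n φ j + 2 else varStartR m n φ j + 3 + 2 * posOcc m n φ j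
  | .inl (.inr (j, false)) =>
      if x j then varStartR m n φ j + 4 + 2 * occCount m n φ j else varStartR m n φ j + 1
  | .inr s => 10 * m + 5 * n + 2 * s.val + 1

lemma bundle_var_bounds (v : Fin n × Bool) :
    varStartR m n φ v.1 ≤ bundleStart φ x pick (.inl (.inr v)) ∧
      bundleEnd φ x pick (.inl (.inr v)) < varStartR m n φ v.1 + 5 + 2 * occCount m n φ v.1 := by
  have h := posOcc_le_occCount φ v.1
  rcases v with ⟨j, _ | _⟩ <;> simp only [bundleStart, bundleEnd] at h ⊢ <;> split_ifs <;> omega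

lemma bundle_clause_disjoint {p p' : Fin m × Fin 3} (hne : p ≠ p') :
    bundleEnd φ x pick (.inl (.inl p)) < bundleStart φ x pick (.inl (.inl p')) ∨
      bundleEnd φ x pick (.inl (.inl p')) < bundleStart φ x pick (.inl (.inl p)) := by
  have h₁ := pairStart_bounds φ p
  have h₂ := le_varStartR φ (φ p.1 p.2).1
  have h₁' := pairStart_bounds φ p'
  have h₂' := le_varStartR φ (φ p'.1 p'.2).1
  have h₃ := clauseOffset_eq (pick p.1) p.2
  have h₃' := clauseOffset_eq (pick p'.1) p'.2
  have h₄ := p.1.isLt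
  have h₄' := p'.1.isLt
  simp only [bundleStart, bundleEnd]
  split_ifs with hp hp' hp'
  · exact pairStart_disjoint φ hne
  · omega
  · omega
  · by_cases hi : p.1 = p'.1
    · have hk : p.2 ≠ p'.2 := fun hk => hne (Prod.ext hi hk)
      rw [← hi] at hp' h₃' ⊢
      have := clauseOffset_ne hp hp' hk
      omega
    · have : p.1.val ≠ p'.1.val := fun h => hi (Fin.ext h)
      omega

variable {x pick}

lemma bundle_clause_var_disjoint (hx : ∀ i, x (φ i (pick i)).1 = (φ i (pick i)).2)
    (p : Fin m × Fin 3) (v : Fin n × Bool) :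
    bundleEnd φ x pick (.inl (.inl p)) < bundleStart φ x pick (.inl (.inr v)) ∨
      bundleEnd φ x pick (.inl (.inr v)) < bundleStart φ x pick (.inl (.inl p)) := by
  have hv := bundle_var_bounds φ x pick v
  have h₀ := le_varStartR φ v.1
  by_cases hp : p.2 = pick p.1
  · have hs : bundleStart φ x pick (.inl (.inl p)) = pairStart m n φ p := by
      simp [bundleStart, hp]
    have he : bundleEnd φ x pick (.inl (.inl p)) = pairStart m n φ p + 1 := by
      simp [bundleEnd, hp]
    rw [hs, he]
    have hb := pairStart_bounds φ p
    rcases lt_trichotomy (φ p.1 p.2).1 v.1 with hlt | heq | hlt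
    · have := varStartR_add_le φ hlt
      omega
    · have hxp := hx p.1
      rw [← hp, heq] at hxp
      have hlit : φ p.1 p.2 = (v.1, x v.1) := Prod.ext heq hxp.symm
      rcases v with ⟨j, b⟩
      dsimp only at hlit
      have hocc := posOcc_le_occCount φ j
      cases hxj : x j <;> rw [hxj] at hlit
      · have := pairStart_bounds_neg φ hlit
        cases b <;> simp only [bundleStart, bundleEnd, hxj, Bool.false_eq_true, if_false] <;> omega
      · have := pairStart_bounds_pos φ hlit
        cases b <;> simp only [bundleStart, bundleEnd, hxj, if_true] <;> omega
    · have := varStartR_add_le φ hlt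
      omega
  · have h₃ := clauseOffset_eq (pick p.1) p.2
    have h₄ := p.1.isLt
    have he : bundleEnd φ x pick (.inl (.inl p)) =
        4 * p.1.val + clauseOffset (pick p.1) p.2 + 1 := by
      simp [bundleEnd, hp]
    omega

lemma bundle_var_disjoint {v w : Fin n × Bool} (hne : v ≠ w) :
    bundleEnd φ x pick (.inl (.inr v)) < bundleStart φ x pick (.inl (.inr w)) ∨
      bundleEnd φ x pick (.inl (.inr w)) < bundleStart φ x pick (.inl (.inr v)) := by
  have hv := bundle_var_bounds φ x pick v
  have hw := bundle_var_bounds φ x pick w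
  rcases lt_trichotomy v.1 w.1 with hlt | heq | hlt
  · have := varStartR_add_le φ hlt
    omega
  · rcases v with ⟨j, b⟩
    rcases w with ⟨j', b'⟩
    obtain rfl : j = j' := heq
    have hocc := posOcc_le_occCount φ j
    cases b <;> cases b'
    · exact absurd rfl hne
    · simp only [bundleStart, bundleEnd]
      split_ifs <;> omega
    · simp only [bundleStart, bundleEnd]
      split_ifs <;> omega
    · exact absurd rfl hne
  · have := varStartR_add_le φ hlt
    omega

lemma bundleEnd_inl_lt (r : RAgent m n) : bundleEnd φ x pick (.inl r) < 10 * m + 5 * n := by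
  rcases r with p | v
  · have h₁ := pairStart_bounds φ p
    have h₂ := varStartR_add_le_total φ (φ p.1 p.2).1
    have h₃ := clauseOffset_eq (pick p.1) p.2
    have h₄ := p.1.isLt
    simp only [bundleEnd]
    split_ifs <;> omega
  · have h₁ := bundle_var_bounds φ x pick v
    have h₂ := varStartR_add_le_total φ v.1
    omega

lemma bundle_disjoint (hx : ∀ i, x (φ i (pick i)).1 = (φ i (pick i)).2)
    {a b : RAgent' m n} (hne : a ≠ b) :
    bundleEnd φ x pick a < bundleStart φ x pick b ∨
      bundleEnd φ x pick b < bundleStart φ x pick a := by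
  rcases a with (p | v) | s <;> rcases b with (p' | v') | s'
  · exact bundle_clause_disjoint φ x pick (by simpa using hne)
  · exact bundle_clause_var_disjoint φ hx p v'
  · have := bundleEnd_inl_lt (x := x) (pick := pick) φ (.inl p)
    simp only [bundleStart]
    omega
  · exact (bundle_clause_var_disjoint φ hx p' v).symm
  · exact bundle_var_disjoint φ (by simpa using hne)
  · have := bundleEnd_inl_lt (x := x) (pick := pick) φ (.inr v)
    simp only [bundleStart]
    omega
  · have := bundleEnd_inl_lt (x := x) (pick := pick) φ (.inl p')
    simp only [bundleStart]
    omega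
  · have := bundleEnd_inl_lt (x := x) (pick := pick) φ (.inr v')
    simp only [bundleStart]
    omega
  · have : s.val ≠ s'.val := fun h => hne (by rw [Fin.ext h])
    simp only [bundleStart, bundleEnd]
    omega

lemma exists_bundleStart_between (x : Fin n → Bool) (pick : Fin m → Fin 3) (a : RAgent' m n)
    {t₁ t₂ t₃ : Fin (10 * m + 5 * n + (6 * m + 4 * n + 14))}
    (h₁ : t₁ ∈ RV' m n φ a) (h₂ : t₂ ∈ RV' m n φ a) (h₃ : t₃ ∈ RV' m n φ a)
    (h₁₂ : t₁ < t₂) (h₂₃ : t₂ < t₃) :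
    ∃ c, t₁.val < bundleStart φ x pick c ∧ bundleStart φ x pick c ≤ t₃.val := by
  have h₁₂' : t₁.val < t₂.val := h₁₂
  have h₂₃' : t₂.val < t₃.val := h₂₃
  have hlt := t₃.isLt
  by_cases hnew : 10 * m + 5 * n ≤ t₃.val
  · by_cases hold : t₁.val < 10 * m + 5 * n
    · exact ⟨.inr ⟨0, by omega⟩, by simpa [bundleStart] using hold,
        by simpa [bundleStart] using hnew⟩
    · refine ⟨.inr ⟨(t₁.val - (10 * m + 5 * n)) / 2 + 1, by omega⟩, ?_, ?_⟩ <;>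
        simp only [bundleStart] <;> omega
  rcases a with (p | ⟨j, _ | _⟩) | s
  · have hb := pairStart_bounds φ p
    have hs := le_varStartR φ (φ p.1 p.2).1
    have hi := p.1.isLt
    simp only [RV', Finset.mem_filter, Finset.mem_univ, true_and] at h₁ h₂ h₃
    by_cases hleft : t₁.val < 4 * p.1.val + 2
    · obtain ⟨k, hk, hk'⟩ := exists_clauseOffset_two (pick p.1)
      refine ⟨.inl (.inl (p.1, k)), ?_, ?_⟩ <;>
        simp only [bundleStart, if_neg hk, hk'] <;> omega
    · refine ⟨.inl (.inr ((φ p.1 p.2).1, true)), ?_, ?_⟩ <;>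
        simp only [bundleStart] <;> split_ifs <;> omega
  · have hocc := posOcc_le_occCount φ j
    simp only [RV', Finset.mem_filter, Finset.mem_univ, true_and] at h₁ h₂ h₃
    by_cases hleft : t₁.val = varStartR m n φ j ∨ x j = false
    · refine ⟨.inl (.inr (j, true)), ?_, ?_⟩ <;> simp only [bundleStart] <;>
        split_ifs with hxj <;> simp [hxj] at hleft <;> omega
    · simp only [not_or, Bool.not_eq_false] at hleft
      refine ⟨.inl (.inr (j, false)), ?_, ?_⟩ <;> simp only [bundleStart, hleft.2, if_true] <;>
        omega
  · have hocc := posOcc_le_occCount φ j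
    simp only [RV', Finset.mem_filter, Finset.mem_univ, true_and] at h₁ h₂ h₃
    by_cases hleft : t₁.val = varStartR m n φ j ∨ x j = false
    · refine ⟨.inl (.inr (j, true)), ?_, ?_⟩ <;> simp only [bundleStart] <;>
        split_ifs with hxj <;> simp [hxj] at hleft <;> omega
    · simp only [not_or, Bool.not_eq_false] at hleft
      refine ⟨.inl (.inr (j, false)), ?_, ?_⟩ <;> simp only [bundleStart, hleft.2, if_true] <;>
        omega
  · simp only [RV', Finset.mem_filter, Finset.mem_univ, true_and] at h₃
    omega

lemma bundleStart_lt_bundleEnd (a : RAgent' m n) :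
    bundleStart φ x pick a < bundleEnd φ x pick a := by
  rcases a with (p | ⟨j, _ | _⟩) | s
  · simp only [bundleStart, bundleEnd]
    split_ifs <;> omega
  · have := posOcc_le_occCount φ j
    simp only [bundleStart, bundleEnd]
    split_ifs <;> omega
  · simp only [bundleStart, bundleEnd]
    split_ifs <;> omega
  · simp only [bundleStart, bundleEnd]
    omega

lemma bundleEnd_lt (a : RAgent' m n) :
    bundleEnd φ x pick a < 10 * m + 5 * n + (6 * m + 4 * n + 14) := by
  rcases a with r | s
  · have := bundleEnd_inl_lt (x := x) (pick := pick) φ r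
    omega
  · simp only [bundleEnd]
    omega

lemma mem_RV'_of_eq_bundle (a : RAgent' m n)
    (t : Fin (10 * m + 5 * n + (6 * m + 4 * n + 14)))
    (ht : t.val = bundleStart φ x pick a ∨ t.val = bundleEnd φ x pick a) :
    t ∈ RV' m n φ a := by
  rcases a with (p | ⟨j, _ | _⟩) | s
  · have h₃ := clauseOffset_eq (pick p.1) p.2
    simp only [RV', bundleStart, bundleEnd, Finset.mem_filter, Finset.mem_univ, true_and] at ht ⊢
    split_ifs at ht <;> omega
  · simp only [RV', bundleStart, bundleEnd, Finset.mem_filter, Finset.mem_univ, true_and] at ht ⊢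
    split_ifs at ht <;> omega
  · simp only [RV', bundleStart, bundleEnd, Finset.mem_filter, Finset.mem_univ, true_and] at ht ⊢
    split_ifs at ht <;> omega
  · simp only [RV', bundleStart, bundleEnd, Finset.mem_filter, Finset.mem_univ, true_and] at ht ⊢
    omega

lemma exists_contigAlloc_of_satFormula (hm : 0 < m) (h : SatFormula m n φ) :
    ∃ owner : Fin (10 * m + 5 * n + (6 * m + 4 * n + 14)) → RAgent' m n, ContigAlloc owner ∧
      ∀ a, ((RV' m n φ a).filter fun t => owner t = a).card = 2 ∧
        ∀ b, ((RV' m n φ a).filter fun t => owner t = b).card ≤ 2 := by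
  obtain ⟨x, hx⟩ := h
  choose pick hx using hx
  apply exists_contigAlloc_of_starts (RV' m n φ) (bundleStart φ x pick)
  · obtain ⟨k, hk, hk'⟩ := exists_clauseOffset_zero (pick ⟨0, hm⟩)
    exact ⟨.inl (.inl (⟨0, hm⟩, k)), by simp only [bundleStart, if_neg hk, hk']⟩
  · intro a t₁ h₁ t₂ h₂ t₃ h₃ h₁₂ h₂₃
    exact exists_bundleStart_between φ x pick a h₁ h₂ h₃ h₁₂ h₂₃
  · intro a
    have hlt := bundleStart_lt_bundleEnd (x := x) (pick := pick) φ a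
    have hend := bundleEnd_lt (x := x) (pick := pick) φ a
    refine ⟨⟨bundleStart φ x pick a, hlt.trans hend⟩, mem_RV'_of_eq_bundle φ a _ (.inl rfl),
      ⟨bundleEnd φ x pick a, hend⟩, mem_RV'_of_eq_bundle φ a _ (.inr rfl), rfl, hlt, ?_⟩
    intro c hc
    have hdisj := bundle_disjoint φ hx hc
    have hlt' := bundleStart_lt_bundleEnd (x := x) (pick := pick) φ c
    dsimp only
    omega

end Allocation

section Satisfiability

variable {m n : ℕ} (φ : Fin m → Fin 3 → Fin n × Bool)

/-- If all the agents of `R` own, contiguously, two items they value among the items of `R`, then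
the formula is satisfiable. Here `own a t` says that `a` owns the item at position `t`. -/
lemma satFormula_of_own {own : RAgent m n → ℕ → Prop}
    (huniq : ∀ a b t, own a t → own b t → a = b)
    (hcontig : ∀ a t₁ t₂ t₃, t₁ ≤ t₂ → t₂ ≤ t₃ → own a t₁ → own a t₃ → own a t₂)
    (hclause : ∀ p, ∃ t₁ t₂, t₁ < t₂ ∧ own (.inl p) t₁ ∧ own (.inl p) t₂ ∧
      ∀ t, t = t₁ ∨ t = t₂ → (4 * p.1.val ≤ t ∧ t < 4 * p.1.val + 4) ∨
        t = pairStart m n φ p ∨ t = pairStart m n φ p + 1)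
    (hpos : ∀ j, ∃ t₁ t₂, t₁ < t₂ ∧ own (.inr (j, true)) t₁ ∧ own (.inr (j, true)) t₂ ∧
      ∀ t, t = t₁ ∨ t = t₂ → t = varStartR m n φ j ∨ t = varStartR m n φ j + 1 ∨
        t = varStartR m n φ j + 2 ∨ t = varStartR m n φ j + 3 + 2 * posOcc m n φ j)
    (hneg : ∀ j, ∃ t₁ t₂, t₁ < t₂ ∧ own (.inr (j, false)) t₁ ∧ own (.inr (j, false)) t₂ ∧
      ∀ t, t = t₁ ∨ t = t₂ → t = varStartR m n φ j ∨ t = varStartR m n φ j + 1 ∨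
        t = varStartR m n φ j + 3 + 2 * posOcc m n φ j ∨
        t = varStartR m n φ j + 4 + 2 * occCount m n φ j) :
    SatFormula m n φ := by
  classical
  have hX : ∀ j, own (.inr (j, true)) (varStartR m n φ j + 1) ∨
      own (.inr (j, true)) (varStartR m n φ j + 2) := by
    intro j
    obtain ⟨t₁, t₂, hlt, o₁, o₂, hV⟩ := hpos j
    have v₁ := hV t₁ (.inl rfl)
    have v₂ := hV t₂ (.inr rfl)
    by_cases h : t₁ ≤ varStartR m n φ j + 1
    · exact .inl (hcontig _ t₁ _ t₂ h (by omega) o₁ o₂)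
    · exact .inr (hcontig _ t₁ _ t₂ (by omega) (by omega) o₁ o₂)
  have hXp : ∀ j, own (.inr (j, true)) (varStartR m n φ j + 3 + 2 * posOcc m n φ j) →
      own (.inr (j, true)) (varStartR m n φ j + 2) := by
    intro j hj
    rcases hX j with h | h
    · exact hcontig _ _ _ _ (by omega) (by omega) h hj
    · exact h
  have hXn : ∀ j, ¬ own (.inr (j, true)) (varStartR m n φ j + 3 + 2 * posOcc m n φ j) →
      own (.inr (j, false)) (varStartR m n φ j + 3 + 2 * posOcc m n φ j) ∧
        own (.inr (j, false)) (varStartR m n φ j + 4 + 2 * occCount m n φ j) := by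
    intro j hj
    have hmid : own (.inr (j, true)) (varStartR m n φ j + 1) := by
      obtain ⟨t₁, t₂, hlt, o₁, o₂, hV⟩ := hpos j
      have v₁ := hV t₁ (.inl rfl)
      have v₂ := hV t₂ (.inr rfl)
      have n₂ : t₂ ≠ varStartR m n φ j + 3 + 2 * posOcc m n φ j := by
        rintro rfl
        exact hj o₂
      exact hcontig _ t₁ _ t₂ (by omega) (by omega) o₁ o₂
    obtain ⟨t₁, t₂, hlt, o₁, o₂, hV⟩ := hneg j
    have v₁ := hV t₁ (.inl rfl)
    have v₂ := hV t₂ (.inr rfl)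
    have hocc := posOcc_le_occCount φ j
    have n₁ : ¬ t₁ ≤ varStartR m n φ j + 1 := fun h => by
      simpa using huniq _ _ _ hmid (hcontig _ t₁ _ t₂ h (by omega) o₁ o₂)
    have e₁ : t₁ = varStartR m n φ j + 3 + 2 * posOcc m n φ j := by omega
    have e₂ : t₂ = varStartR m n φ j + 4 + 2 * occCount m n φ j := by omega
    exact ⟨e₁ ▸ o₁, e₂ ▸ o₂⟩
  have hC : ∀ p, own (.inl p) (4 * p.1.val + 1) ∨ own (.inl p) (4 * p.1.val + 2) ∨
      own (.inl p) (pairStart m n φ p) := by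
    intro p
    obtain ⟨t₁, t₂, hlt, o₁, o₂, hV⟩ := hclause p
    have v₁ := hV t₁ (.inl rfl)
    have v₂ := hV t₂ (.inr rfl)
    have hb := pairStart_bounds φ p
    have hs := le_varStartR φ (φ p.1 p.2).1
    have hi := p.1.isLt
    by_cases hpair : t₁ < 4 * p.1.val + 4
    · by_cases h₁ : t₁ ≤ 4 * p.1.val + 1
      · exact .inl (hcontig _ t₁ _ t₂ h₁ (by omega) o₁ o₂)
      by_cases h₂ : t₁ = 4 * p.1.val + 2
      · exact .inr (.inl (h₂ ▸ o₁))
      exfalso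
      rcases hX (φ p.1 p.2).1 with h | h
      · simpa using huniq _ _ _ h (hcontig _ t₁ _ t₂ (by omega) (by omega) o₁ o₂)
      · simpa using huniq _ _ _ h (hcontig _ t₁ _ t₂ (by omega) (by omega) o₁ o₂)
    · exact .inr (.inr (hcontig _ t₁ _ t₂ (by omega) (by omega) o₁ o₂))
  refine ⟨fun j => !decide (own (.inr (j, true)) (varStartR m n φ j + 3 + 2 * posOcc m n φ j)),
    fun i => ?_⟩
  obtain ⟨k, hk⟩ : ∃ k, own (.inl (i, k)) (pairStart m n φ (i, k)) := by
    by_contra! hno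
    have key : ∀ k, own (.inl (i, k)) (4 * i.val + 1) ∨ own (.inl (i, k)) (4 * i.val + 2) := by
      intro k
      rcases hC (i, k) with h | h | h
      · exact .inl h
      · exact .inr h
      · exact absurd h (hno k)
    have hne : ∀ k k' t, k ≠ k' → own (.inl (i, k)) t → ¬ own (.inl (i, k')) t := by
      intro k k' t hkk h h'
      exact hkk (by simpa using huniq _ _ _ h h')
    have h01 := fun t => hne 0 1 t (by decide)
    have h02 := fun t => hne 0 2 t (by decide)
    have h12 := fun t => hne 1 2 t (by decide)
    rcases key 0 with h0 | h0 <;> rcases key 1 with h1 | h1 <;> rcases key 2 with h2 | h2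
    · exact h01 _ h0 h1
    · exact h01 _ h0 h1
    · exact h02 _ h0 h2
    · exact h12 _ h1 h2
    · exact h12 _ h1 h2
    · exact h02 _ h0 h2
    · exact h01 _ h0 h1
    · exact h01 _ h0 h1
  refine ⟨k, ?_⟩
  rcases hφ : φ i k with ⟨j, _ | _⟩
  · by_contra hval
    have hj : ¬ own (.inr (j, true)) (varStartR m n φ j + 3 + 2 * posOcc m n φ j) := by
      simpa using hval
    have hb := pairStart_bounds_neg (p := (i, k)) φ hφ
    have := hcontig _ _ (pairStart m n φ (i, k)) _ (by omega) (by omega) (hXn j hj).1 (hXn j hj).2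
    simpa using huniq _ _ _ hk this
  · by_contra hval
    have hj : own (.inr (j, true)) (varStartR m n φ j + 3 + 2 * posOcc m n φ j) := by
      simpa using hval
    have hb := pairStart_bounds_pos (p := (i, k)) φ hφ
    have := hcontig _ _ (pairStart m n φ (i, k)) _ (by omega) (by omega) (hXp j hj) hj
    simpa using huniq _ _ _ hk this

/-- If every Special-Gadget agent values two items of her bundle, then these agents own all the
new items. -/
lemma owner_new_of_two_le {owner : Fin (10 * m + 5 * n + (6 * m + 4 * n + 14)) → RAgent' m n}
    (h : ∀ a, 2 ≤ ((RV' m n φ a).filter fun t => owner t = a).card)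
    (t : Fin (10 * m + 5 * n + (6 * m + 4 * n + 14))) (ht : 10 * m + 5 * n ≤ t.val) :
    ∃ s, owner t = .inr s := by
  set N := Finset.univ.filter
    fun t : Fin (10 * m + 5 * n + (6 * m + 4 * n + 14)) => 10 * m + 5 * n ≤ t.val with hN
  have hcard : N.card = 6 * m + 4 * n + 14 :=
    card_RV' φ (.inr (⟨0, by omega⟩ : Fin (3 * m + 2 * n + 7)))
  have hsum := Finset.card_biUnion (s := (Finset.univ : Finset (Fin (3 * m + 2 * n + 7))))
    (t := fun s => N.filter fun t => owner t = .inr s) (by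
      intro s _ s' _ hne
      rw [Function.onFun_apply, Finset.disjoint_left]
      intro t ht ht'
      rw [Finset.mem_filter] at ht ht'
      exact hne (by simpa using ht.2.symm.trans ht'.2))
  have hge : ∑ _s : Fin (3 * m + 2 * n + 7), 2 ≤
      ∑ s : Fin (3 * m + 2 * n + 7), (N.filter fun t => owner t = .inr s).card :=
    Finset.sum_le_sum fun s _ => h (.inr s)
  simp only [Finset.sum_const, Finset.card_univ, Fintype.card_fin, smul_eq_mul] at hge
  have heq := Finset.eq_of_subset_of_card_le
    (s := Finset.univ.biUnion fun s : Fin (3 * m + 2 * n + 7) =>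
      N.filter fun t => owner t = .inr s) (t := N)
    (Finset.biUnion_subset.2 fun s _ => Finset.filter_subset _ _) (by omega)
  have hmem : t ∈ N := by simpa [hN] using ht
  rw [← heq] at hmem
  simp only [Finset.mem_biUnion, Finset.mem_filter, Finset.mem_univ, true_and] at hmem
  exact hmem.imp fun s hs => hs.2

lemma satFormula_of_two_le {owner : Fin (10 * m + 5 * n + (6 * m + 4 * n + 14)) → RAgent' m n}
    (hc : ContigAlloc owner)
    (h : ∀ a, 2 ≤ ((RV' m n φ a).filter fun t => owner t = a).card) : SatFormula m n φ := by
  have hnew := owner_new_of_two_le φ h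
  have hpair : ∀ r : RAgent m n, ∃ t₁ t₂, t₁ < t₂ ∧ owner t₁ = .inl r ∧ owner t₂ = .inl r ∧
      ∀ t, t = t₁ ∨ t = t₂ → t ∈ RV' m n φ (.inl r) ∧ ¬ 10 * m + 5 * n ≤ t.val := by
    intro r
    have hmem := fun i => Finset.orderEmbOfCardLe_mem _ (h (.inl r)) i
    have hlt := (Finset.orderEmbOfCardLe _ (h (.inl r))).strictMono
      (show (0 : Fin 2) < 1 by decide)
    have h0 := Finset.mem_filter.1 (hmem 0)
    have h1 := Finset.mem_filter.1 (hmem 1)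
    refine ⟨_, _, hlt, h0.2, h1.2, ?_⟩
    have hold : ∀ t, owner t = .inl r → ¬ 10 * m + 5 * n ≤ t.val := by
      intro t ht hle
      obtain ⟨s, hs⟩ := hnew t hle
      rw [ht] at hs
      exact Sum.inl_ne_inr hs
    rintro t (rfl | rfl)
    · exact ⟨h0.1, hold _ h0.2⟩
    · exact ⟨h1.1, hold _ h1.2⟩
  apply satFormula_of_own φ (own := fun r t => ∃ ht, owner ⟨t, ht⟩ = .inl r)
  · rintro a b t ⟨_, ha⟩ ⟨_, hb⟩
    simpa using ha.symm.trans hb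
  · rintro a t₁ t₂ t₃ h₁₂ h₂₃ ⟨_, h₁⟩ ⟨ht₃, h₃⟩
    exact ⟨h₂₃.trans_lt ht₃, hc _ _ _ _ (Fin.mk_le_mk.2 h₁₂) (Fin.mk_le_mk.2 h₂₃) h₁ h₃⟩
  · intro p
    obtain ⟨t₁, t₂, hlt, o₁, o₂, hV⟩ := hpair (.inl p)
    refine ⟨t₁.val, t₂.val, hlt, ⟨t₁.2, o₁⟩, ⟨t₂.2, o₂⟩, ?_⟩
    have v₁ := hV t₁ (.inl rfl)
    have v₂ := hV t₂ (.inr rfl)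
    simp only [RV', Finset.mem_filter, Finset.mem_univ, true_and] at v₁ v₂
    omega
  · intro j
    obtain ⟨t₁, t₂, hlt, o₁, o₂, hV⟩ := hpair (.inr (j, true))
    refine ⟨t₁.val, t₂.val, hlt, ⟨t₁.2, o₁⟩, ⟨t₂.2, o₂⟩, ?_⟩
    have v₁ := hV t₁ (.inl rfl)
    have v₂ := hV t₂ (.inr rfl)
    simp only [RV', Finset.mem_filter, Finset.mem_univ, true_and] at v₁ v₂
    omega
  · intro j
    obtain ⟨t₁, t₂, hlt, o₁, o₂, hV⟩ := hpair (.inr (j, false))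
    refine ⟨t₁.val, t₂.val, hlt, ⟨t₁.2, o₁⟩, ⟨t₂.2, o₂⟩, ?_⟩
    have v₁ := hV t₁ (.inl rfl)
    have v₂ := hV t₂ (.inr rfl)
    simp only [RV', Finset.mem_filter, Finset.mem_univ, true_and] at v₁ v₂
    omega

end Satisfiability

section Fairness

variable {m n : ℕ} (φ : Fin m → Fin 3 → Fin n × Bool)

lemma card_RAgent' : Fintype.card (RAgent' m n) = 6 * m + 4 * n + 7 := by
  simp only [Fintype.card_sum, Fintype.card_prod, Fintype.card_fin, Fintype.card_bool]
  omega

lemma discVal_RV' (owner : Fin (10 * m + 5 * n + (6 * m + 4 * n + 14)) → RAgent' m n)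
    (a b : RAgent' m n) :
    discVal (RV' m n φ) owner a b =
      (((RV' m n φ a).filter fun t => owner t = b).card : ℝ) /
        ((6 * m + 4 * n + 14 : ℕ) : ℝ) := by
  simp only [discVal, card_RV']
  congr!

lemma discVal_RV'_le_iff (owner : Fin (10 * m + 5 * n + (6 * m + 4 * n + 14)) → RAgent' m n)
    (a b a' b' : RAgent' m n) :
    discVal (RV' m n φ) owner a b ≤ discVal (RV' m n φ) owner a' b' ↔
      ((RV' m n φ a).filter fun t => owner t = b).card ≤
        ((RV' m n φ a').filter fun t => owner t = b').card := by
  rw [discVal_RV', discVal_RV', div_le_div_iff_of_pos_right (by positivity), Nat.cast_le]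

/-- An agent has her proportional share exactly when she values two items of her bundle. -/
lemma one_div_card_le_discVal_iff
    (owner : Fin (10 * m + 5 * n + (6 * m + 4 * n + 14)) → RAgent' m n) (a : RAgent' m n) :
    1 / (Fintype.card (RAgent' m n) : ℝ) ≤ discVal (RV' m n φ) owner a a ↔
      2 ≤ ((RV' m n φ a).filter fun t => owner t = a).card := by
  rw [discVal_RV', card_RAgent', div_le_div_iff₀ (by positivity) (by positivity), one_mul]
  norm_cast
  constructor
  · intro h
    by_contra! hlt
    have := Nat.mul_le_mul_right (6 * m + 4 * n + 7) (Nat.le_of_lt_succ hlt)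
    omega
  · intro h
    have := Nat.mul_le_mul_right (6 * m + 4 * n + 7) h
    omega

lemma two_le_of_envyFree {owner : Fin (10 * m + 5 * n + (6 * m + 4 * n + 14)) → RAgent' m n}
    (h : ∀ a b, discVal (RV' m n φ) owner a a ≥ discVal (RV' m n φ) owner a b)
    (a : RAgent' m n) : 2 ≤ ((RV' m n φ a).filter fun t => owner t = a).card := by
  have hsum := Finset.card_eq_sum_card_fiberwise (s := RV' m n φ a)
    (t := (Finset.univ : Finset (RAgent' m n))) (f := owner) (by simp)
  have hle := Finset.sum_le_card_nsmul (Finset.univ : Finset (RAgent' m n))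
    (fun b => ((RV' m n φ a).filter fun t => owner t = b).card) _
    fun b _ => (discVal_RV'_le_iff φ owner a b a a).1 (h a b)
  rw [Finset.card_univ, card_RAgent', smul_eq_mul] at hle
  rw [card_RV'] at hsum
  by_contra! hlt
  have := Nat.mul_le_mul_left (6 * m + 4 * n + 7) (Nat.le_of_lt_succ hlt)
  omega

lemma two_le_of_equitable {owner : Fin (10 * m + 5 * n + (6 * m + 4 * n + 14)) → RAgent' m n}
    (h : ∀ a b, discVal (RV' m n φ) owner a a = discVal (RV' m n φ) owner b b)
    (a : RAgent' m n) : 2 ≤ ((RV' m n φ a).filter fun t => owner t = a).card := by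
  by_contra! hlt
  set S := Finset.univ.filter fun t : Fin (10 * m + 5 * n + (6 * m + 4 * n + 14)) =>
    10 * m + 5 * n ≤ t.val ∧ t.val < 10 * m + 5 * n + (6 * m + 4 * n + 8) with hS
  have hcard : S.card = 6 * m + 4 * n + 8 := by
    rw [hS, card_filter_fin_eq (fun t => 10 * m + 5 * n ≤ t ∧
      t < 10 * m + 5 * n + (6 * m + 4 * n + 8))
      (Finset.Ico (10 * m + 5 * n) (10 * m + 5 * n + (6 * m + 4 * n + 8)))]
    · simp
    · intro t
      simp only [Finset.mem_Ico]
      omega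
  have hsub : ∀ b, S ⊆ RV' m n φ b := by
    intro b t ht
    rcases b with (p | ⟨j, _ | _⟩) | s <;>
      simp only [hS, RV', Finset.mem_filter, Finset.mem_univ, true_and] at ht ⊢ <;> omega
  have hsum := Finset.card_eq_sum_card_fiberwise (s := S)
    (t := (Finset.univ : Finset (RAgent' m n))) (f := owner) (by simp)
  have hle := Finset.sum_le_card_nsmul (Finset.univ : Finset (RAgent' m n))
    (fun b => (S.filter fun t => owner t = b).card) 1 fun b _ =>
      (Finset.card_le_card (Finset.filter_subset_filter _ (hsub b))).trans
        (((discVal_RV'_le_iff φ owner b b a a).1 (h b a).le).trans (Nat.le_of_lt_succ hlt))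
  rw [Finset.card_univ, card_RAgent', smul_eq_mul] at hle
  omega

end Fairness

/-- For the extended instance `R'` built from the 3-SAT formula `φ`
(with `6m + 4n + 7` agents, every agent valuing exactly `6m + 4n + 14` items), the
following are equivalent: (i) `φ` is satisfiable; (ii) `R'` admits a contiguous envy-free
allocation; (iii) `R'` admits a contiguous proportional allocation; (iv) `R'` admits a
contiguous equitable allocation. -/
theorem satisfiable_iff_fair_allocations
    (m n : ℕ) (hm : 0 < m) (hn : 0 < n)
    (φ : Fin m → Fin 3 → Fin n × Bool) :
    (SatFormula m n φ ↔
      (∃ owner : Fin (10 * m + 5 * n + (6 * m + 4 * n + 14)) → RAgent' m n,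
        ContigAlloc owner ∧
        ∀ a b, discVal (RV' m n φ) owner a a ≥ discVal (RV' m n φ) owner a b)) ∧
    (SatFormula m n φ ↔
      (∃ owner : Fin (10 * m + 5 * n + (6 * m + 4 * n + 14)) → RAgent' m n,
        ContigAlloc owner ∧
        ∀ a, discVal (RV' m n φ) owner a a ≥
          1 / (Fintype.card (RAgent' m n) : ℝ))) ∧
    (SatFormula m n φ ↔
      (∃ owner : Fin (10 * m + 5 * n + (6 * m + 4 * n + 14)) → RAgent' m n,
        ContigAlloc owner ∧
        ∀ a b, discVal (RV' m n φ) owner a a = discVal (RV' m n φ) owner b b)) := by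
  refine ⟨⟨fun h => ?_, ?_⟩, ⟨fun h => ?_, ?_⟩, ⟨fun h => ?_, ?_⟩⟩
  · obtain ⟨owner, hc, hval⟩ := exists_contigAlloc_of_satFormula φ hm h
    refine ⟨owner, hc, fun a b => (discVal_RV'_le_iff φ owner a b a a).2 ?_⟩
    rw [(hval a).1]
    exact (hval a).2 b
  · rintro ⟨owner, hc, h⟩
    exact satFormula_of_two_le φ hc (two_le_of_envyFree φ h)
  · obtain ⟨owner, hc, hval⟩ := exists_contigAlloc_of_satFormula φ hm h
    exact ⟨owner, hc, fun a => (one_div_card_le_discVal_iff φ owner a).2 (hval a).1.ge⟩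
  · rintro ⟨owner, hc, h⟩
    exact satFormula_of_two_le φ hc fun a => (one_div_card_le_discVal_iff φ owner a).1 (h a)
  · obtain ⟨owner, hc, hval⟩ := exists_contigAlloc_of_satFormula φ hm h
    refine ⟨owner, hc, fun a b => ?_⟩
    rw [discVal_RV', discVal_RV', (hval a).1, (hval b).1]
  · rintro ⟨owner, hc, h⟩
    exact satFormula_of_two_le φ hc (two_le_of_equitable φ h)
end
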